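/- For every natural number m ≥ 2 there exists a constant C > 0 such that for every finite field F of odd order q, writing G = Sp_{2m}(F), there exists a subset A ⊆ G with |A| ≤ 2 if m is even and |A| ≤ 3 if m is odd, such that the number of y ∈ G for which some x ∈ A makes {x, y} invariably generate G is at least (1 − C/q) · |G|. -/

import Mathlib

/-- `{x, y}` invariably generates `G`: for all `g, h`, the conjugates
`g * x * g⁻¹` and `h * y * h⁻¹` generate `G`. -/
def InvGen {G : Type*} [Group G] (x y : G) : Prop :=
  ∀ g h : G, Subgroup.closure {g * x * g⁻¹, h * y * h⁻¹} = ⊤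

/-!
Call `y` generic if a fixed power `y ^ M` has a cyclic vector; by the Schwartz–Zippel lemma all
but `O(|G| / q)` elements are generic. The set `A` consists of generators `x` of maximal tori, and
the claim is that every conjugate of a generic `y` generates `G` together with a suitable `x`.

Let `H` be generated by `x` and `y`. The directions `X` in the Lie algebra `sp` for which
`((1 + s X)⁻¹ (1 - s X)) ^ 2` lies in `H` for all scalars `s` replace the tangent space of the
finite group `H`: a polynomial of degree small compared to `q` which vanishes on `H` has zero
derivative along them. Hence their span is closed under brackets, and it contains the Cartan
subalgebra belonging to `x`. Over an algebraic closure, a Lie subalgebra of `sp` which contains a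
Cartan subalgebra and generates the full matrix algebra contains all roots, so it is `sp`. Then a
polynomial of small degree in Cayley coordinates which vanishes on `H` is zero, so `H` has at
least `c * q ^ dim G` elements, thus bounded index. A subgroup of bounded index is everything for
large `q`, because its normal core contains transvections.

The generated algebra is full if `y` leaves invariant no proper nonzero ideal of the étale algebra
`R` of the torus, and no subfield `D ≠ F` of `R` leaves invariant all the subspaces that `y` does;
genericity lets one pass from `y ^ M` to `y`. With `E` a field, the tori are those of `R = E` of
degree `2 m`, which treats `y` with an invariant line or, for even `m`, an invariant hyperbolic
plane; `R = E × F × F` with `E` of degree `2 m - 2`, which treats `y` with neither; and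
`R = E × E` with `E` of degree `m`, which for odd `m` treats `y` with an invariant hyperbolic
plane and no invariant line.
-/

open Matrix

/-- Square matrices over `R` indexed by `l ⊕ l`, the ambient algebra of `symplecticGroup l R`. -/
abbrev BlockMat (l R : Type*) := Matrix (l ⊕ l) (l ⊕ l) R

/-! ### The symplectic form -/

section SymplForm

variable (l R : Type*) [Fintype l] [DecidableEq l] [CommRing R]

/-- The standard symplectic form: the bilinear form on `l ⊕ l → R` with Gram matrix `J l R`. -/
noncomputable def symplForm : LinearMap.BilinForm R (l ⊕ l → R) := toBilin' (J l R)

variable {l R}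

lemma symplForm_eq_dotProduct (u v : l ⊕ l → R) : symplForm l R u v = u ⬝ᵥ J l R *ᵥ v :=
  toBilin'_apply' _ _ _

lemma symplForm_apply (u v : l ⊕ l → R) :
    symplForm l R u v = ∑ i, (u (.inr i) * v (.inl i) - u (.inl i) * v (.inr i)) := by
  simp only [symplForm_eq_dotProduct, J, dotProduct, fromBlocks_mulVec, Fintype.sum_sum_type]
  simp [Matrix.neg_mulVec, Finset.sum_sub_distrib]
  ring

lemma symplForm_self (u : l ⊕ l → R) : symplForm l R u u = 0 := by
  rw [symplForm_apply]
  exact Finset.sum_eq_zero fun i _ => by ring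

lemma symplForm_swap (u v : l ⊕ l → R) : symplForm l R u v = -symplForm l R v u :=
  ((show (symplForm l R).IsAlt from symplForm_self).neg_eq v u).symm

lemma symplForm_ne_zero_comm {u v : l ⊕ l → R} :
    symplForm l R u v ≠ 0 ↔ symplForm l R v u ≠ 0 := by
  rw [symplForm_swap, neg_ne_zero]

lemma symplForm_single_inl (u : l ⊕ l → R) (i : l) :
    symplForm l R u (Pi.single (.inl i) 1) = u (.inr i) := by
  simp [symplForm_apply, Pi.single_apply]

lemma symplForm_single_inr (u : l ⊕ l → R) (i : l) :
    symplForm l R u (Pi.single (.inr i) 1) = -u (.inl i) := by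
  simp [symplForm_apply, Pi.single_apply]

lemma symplForm_mulVec_mulVec (A B : BlockMat l R) (u v : l ⊕ l → R) :
    symplForm l R (A *ᵥ u) (B *ᵥ v) = u ⬝ᵥ (Aᵀ * J l R * B) *ᵥ v := by
  simp only [symplForm_eq_dotProduct, ← mulVec_mulVec, Matrix.mul_assoc]
  rw [dotProduct_mulVec u, vecMul_transpose]

lemma mem_symplecticGroup_iff_symplForm {A : BlockMat l R} : A ∈ symplecticGroup l R ↔
    ∀ u v, symplForm l R (A *ᵥ u) (A *ᵥ v) = symplForm l R u v := by
  rw [SymplecticGroup.mem_iff']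
  refine ⟨fun h u v => by rw [symplForm_mulVec_mulVec, h, symplForm_eq_dotProduct], fun h => ?_⟩
  ext i j
  have hij := h (Pi.single i 1) (Pi.single j 1)
  rw [symplForm_mulVec_mulVec, symplForm_eq_dotProduct] at hij
  simpa using hij

lemma symplForm_mulVec_symplecticGroup (g : symplecticGroup l R) (u v : l ⊕ l → R) :
    symplForm l R ((g : BlockMat l R) *ᵥ u) ((g : BlockMat l R) *ᵥ v) = symplForm l R u v :=
  mem_symplecticGroup_iff_symplForm.1 g.2 u v

lemma symplecticGroup_mulVec_ext {g h : symplecticGroup l R}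
    (H : ∀ x, (g : BlockMat l R) *ᵥ x = (h : BlockMat l R) *ᵥ x) : g = h :=
  Subtype.ext <| Matrix.ext_of_mulVec_single fun _ => H _

lemma symplecticGroup_mul_mulVec (g h : symplecticGroup l R) (x : l ⊕ l → R) :
    ((g * h : symplecticGroup l R) : BlockMat l R) *ᵥ x =
      (g : BlockMat l R) *ᵥ (h : BlockMat l R) *ᵥ x := by
  rw [Submonoid.coe_mul, mulVec_mulVec]

lemma symplecticGroup_inv_mulVec_mulVec (g : symplecticGroup l R) (x : l ⊕ l → R) :
    ((g⁻¹ : symplecticGroup l R) : BlockMat l R) *ᵥ (g : BlockMat l R) *ᵥ x = x := by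
  rw [← symplecticGroup_mul_mulVec, inv_mul_cancel, Submonoid.coe_one, one_mulVec]

end SymplForm

/-! ### Transvections -/

section Transvection

variable {l R F : Type*} [Fintype l] [DecidableEq l] [CommRing R] [Field F]

/-- The matrix of the symplectic transvection `x ↦ x + s ω(v, x) v`. -/
def transvectionMat (v : l ⊕ l → R) (s : R) : BlockMat l R :=
  1 + s • vecMulVec v (v ᵥ* J l R)

lemma transvectionMat_mulVec (v : l ⊕ l → R) (s : R) (x : l ⊕ l → R) :
    transvectionMat v s *ᵥ x = x + (s * symplForm l R v x) • v := by
  simp only [transvectionMat, add_mulVec, one_mulVec, smul_mulVec]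
  rw [vecMulVec_mulVec, ← dotProduct_mulVec, symplForm_eq_dotProduct, mul_smul,
    op_smul_eq_smul]

lemma transvectionMat_mem_symplecticGroup (v : l ⊕ l → R) (s : R) :
    transvectionMat v s ∈ symplecticGroup l R := by
  rw [mem_symplecticGroup_iff_symplForm]
  intro x y
  simp only [transvectionMat_mulVec, map_add, LinearMap.add_apply, map_smul,
    LinearMap.smul_apply, smul_eq_mul, symplForm_self]
  rw [symplForm_swap x v]
  ring

/-- The symplectic transvection `x ↦ x + s ω(v, x) v`. -/
def symplTransvection (v : l ⊕ l → R) (s : R) : symplecticGroup l R :=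
  ⟨transvectionMat v s, transvectionMat_mem_symplecticGroup v s⟩

lemma symplTransvection_mulVec (v : l ⊕ l → R) (s : R) (x : l ⊕ l → R) :
    (symplTransvection v s : BlockMat l R) *ᵥ x = x + (s * symplForm l R v x) • v :=
  transvectionMat_mulVec v s x

lemma symplTransvection_zero_left (s : R) : symplTransvection (0 : l ⊕ l → R) s = 1 :=
  symplecticGroup_mulVec_ext fun x => by simp [symplTransvection_mulVec]

lemma symplTransvection_mul (v : l ⊕ l → R) (s t : R) :
    symplTransvection v s * symplTransvection v t = symplTransvection v (s + t) :=
  symplecticGroup_mulVec_ext fun x => by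
    simp only [symplecticGroup_mul_mulVec, symplTransvection_mulVec, map_add, map_smul,
      symplForm_self, smul_zero, add_zero]
    module

lemma symplTransvection_conj (g : symplecticGroup l R) (v : l ⊕ l → R) (s : R) :
    g * symplTransvection v s * g⁻¹ = symplTransvection ((g : BlockMat l R) *ᵥ v) s := by
  rw [mul_inv_eq_iff_eq_mul]
  refine symplecticGroup_mulVec_ext fun x => ?_
  simp only [symplecticGroup_mul_mulVec, symplTransvection_mulVec, mulVec_add, mulVec_smul,
    symplForm_mulVec_symplecticGroup]

lemma symplTransvection_smul (v : l ⊕ l → R) (a s : R) :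
    symplTransvection (a • v) s = symplTransvection v (a ^ 2 * s) :=
  symplecticGroup_mulVec_ext fun x => by
    simp only [symplTransvection_mulVec, map_smul, LinearMap.smul_apply, smul_eq_mul]
    module

lemma symplTransvection_sub_mulVec {a b : l ⊕ l → F} (h : symplForm l F a b ≠ 0) :
    (symplTransvection (b - a) (symplForm l F b a)⁻¹ : BlockMat l F) *ᵥ a = b := by
  rw [symplForm_ne_zero_comm] at h
  rw [symplTransvection_mulVec, map_sub, LinearMap.sub_apply, symplForm_self, sub_zero,
    inv_mul_cancel₀ h, one_smul, add_sub_cancel]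

end Transvection

/-! ### Bounded generation by transvections -/

section Generation

variable {l F : Type*} [Field F]

/-- The span of the hyperbolic pairs with index outside `s`. -/
def coordsVanish (F : Type*) [Field F] (s : Finset l) : Submodule F (l ⊕ l → F) where
  carrier := {v | ∀ i ∈ s, v (.inl i) = 0 ∧ v (.inr i) = 0}
  add_mem' hv hw i hi := by simp [hv i hi, hw i hi]
  zero_mem' := by simp
  smul_mem' c v hv i hi := by simp [hv i hi]

lemma coordsVanish_empty : coordsVanish F (∅ : Finset l) = ⊤ := by
  simp [coordsVanish, Submodule.eq_top_iff']

variable [DecidableEq l]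

lemma single_inl_mem_coordsVanish {s : Finset l} {i : l} (h : i ∉ s) :
    Pi.single (.inl i) 1 ∈ coordsVanish F s := fun j hj => by
  simp [ne_of_mem_of_not_mem hj h]

lemma single_inr_mem_coordsVanish {s : Finset l} {i : l} (h : i ∉ s) :
    Pi.single (.inr i) 1 ∈ coordsVanish F s := fun j hj => by
  simp [ne_of_mem_of_not_mem hj h]

variable [Fintype l]

lemma exists_symplForm_ne_zero_of_mem_coordsVanish {s : Finset l} {a : l ⊕ l → F}
    (ha : a ∈ coordsVanish F s) (ha0 : a ≠ 0) :
    ∃ c ∈ coordsVanish F s, symplForm l F a c ≠ 0 := by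
  obtain ⟨i | i, hi⟩ := Function.ne_iff.1 ha0
  · exact ⟨_, single_inr_mem_coordsVanish fun h => hi (ha i h).1, by
      rw [symplForm_single_inr]; simpa using hi⟩
  · exact ⟨_, single_inl_mem_coordsVanish fun h => hi (ha i h).2, by
      rw [symplForm_single_inl]; simpa using hi⟩

lemma exists_common_symplForm_ne_zero {V : Submodule F (l ⊕ l → F)} {a b c d : l ⊕ l → F}
    (hc : c ∈ V) (hd : d ∈ V) (hac : symplForm l F a c ≠ 0) (hbd : symplForm l F b d ≠ 0) :
    ∃ e ∈ V, symplForm l F a e ≠ 0 ∧ symplForm l F e b ≠ 0 := by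
  by_cases hcb : symplForm l F c b = 0
  · by_cases had : symplForm l F a d = 0
    · refine ⟨c + d, V.add_mem hc hd, ?_, ?_⟩
      · rwa [map_add, had, add_zero]
      · rwa [map_add, LinearMap.add_apply, hcb, zero_add, symplForm_ne_zero_comm]
    · exact ⟨d, hd, had, symplForm_ne_zero_comm.1 hbd⟩
  · exact ⟨c, hc, hac, hcb⟩

lemma exists_symplTransvection_mul_mulVec_eq {s : Finset l} {a b : l ⊕ l → F}
    (ha : a ∈ coordsVanish F s) (hb : b ∈ coordsVanish F s) (ha0 : a ≠ 0) (hb0 : b ≠ 0) :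
    ∃ v ∈ coordsVanish F s, ∃ w ∈ coordsVanish F s, ∃ p q : F,
      ((symplTransvection v p * symplTransvection w q : symplecticGroup l F) : BlockMat l F) *ᵥ a
        = b := by
  obtain ⟨c, hc, hac⟩ := exists_symplForm_ne_zero_of_mem_coordsVanish ha ha0
  obtain ⟨d, hd, hbd⟩ := exists_symplForm_ne_zero_of_mem_coordsVanish hb hb0
  obtain ⟨e, he, hae, heb⟩ := exists_common_symplForm_ne_zero hc hd hac hbd
  refine ⟨b - e, sub_mem hb he, e - a, sub_mem he ha, (symplForm l F b e)⁻¹,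
    (symplForm l F e a)⁻¹, ?_⟩
  rw [symplecticGroup_mul_mulVec, symplTransvection_sub_mulVec hae,
    symplTransvection_sub_mulVec heb]

lemma exists_symplecticGroup_mulVec_eq {a b : l ⊕ l → F} (ha : a ≠ 0) (hb : b ≠ 0) :
    ∃ g : symplecticGroup l F, (g : BlockMat l F) *ᵥ a = b := by
  obtain ⟨v, -, w, -, p, q, h⟩ := exists_symplTransvection_mul_mulVec_eq (s := ∅)
    (by rw [coordsVanish_empty]; trivial) (by rw [coordsVanish_empty]; trivial) ha hb
  exact ⟨_, h⟩

lemma exists_symplTransvection_mul_fixing {V : Submodule F (l ⊕ l → F)} {e f b : l ⊕ l → F}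
    (he : e ∈ V) (hf : f ∈ V) (hb : b ∈ V) (hef : symplForm l F e f ≠ 0)
    (heb : symplForm l F e b = symplForm l F e f) :
    ∃ v ∈ V, ∃ w ∈ V, ∃ p q : F,
      ((symplTransvection v p * symplTransvection w q : symplecticGroup l F) : BlockMat l F) *ᵥ e
        = e ∧
      ((symplTransvection v p * symplTransvection w q : symplecticGroup l F) : BlockMat l F) *ᵥ b
        = f := by
  have fixes {v : l ⊕ l → F} (p : F) (hv : symplForm l F e v = 0) :
      (symplTransvection v p : BlockMat l F) *ᵥ e = e := by
    rw [symplTransvection_mulVec, symplForm_swap, hv]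
    simp
  by_cases hbf : symplForm l F b f = 0
  · refine ⟨f - (e + f), sub_mem hf (add_mem he hf), e + f - b, sub_mem (add_mem he hf) hb,
      (symplForm l F f (e + f))⁻¹, (symplForm l F (e + f) b)⁻¹, ?_, ?_⟩
    · rw [symplecticGroup_mul_mulVec, fixes, fixes] <;> simp [symplForm_self, heb]
    · rw [symplecticGroup_mul_mulVec, symplTransvection_sub_mulVec, symplTransvection_sub_mulVec]
      · simpa [symplForm_self] using hef
      · rw [map_add, hbf, add_zero, symplForm_ne_zero_comm, heb]
        exact hef
  · refine ⟨0, V.zero_mem, f - b, sub_mem hf hb, 0, (symplForm l F f b)⁻¹, ?_, ?_⟩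
    · rw [symplTransvection_zero_left, one_mul, fixes _ (by rw [map_sub, heb, sub_self])]
    · rw [symplTransvection_zero_left, one_mul, symplTransvection_sub_mulVec hbf]

/-- The symplectic maps fixing the hyperbolic pairs with index in `s`. -/
def pairFixator (F : Type*) [Field F] (s : Finset l) : Subgroup (symplecticGroup l F) where
  carrier := {g | ∀ i ∈ s,
    (g : BlockMat l F) *ᵥ Pi.single (.inl i) 1 = Pi.single (.inl i) 1 ∧
    (g : BlockMat l F) *ᵥ Pi.single (.inr i) 1 = Pi.single (.inr i) 1}
  mul_mem' {g h} hg hh i hi := by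
    simp only [symplecticGroup_mul_mulVec, (hh i hi).1, (hh i hi).2]
    exact hg i hi
  one_mem' _ _ := by simp only [Submonoid.coe_one, one_mulVec, and_self]
  inv_mem' {g} hg i hi := by
    constructor
    · conv_lhs => rw [← (hg i hi).1]
      exact symplecticGroup_inv_mulVec_mulVec _ _
    · conv_lhs => rw [← (hg i hi).2]
      exact symplecticGroup_inv_mulVec_mulVec _ _

lemma symplTransvection_mem_pairFixator {s : Finset l} {v : l ⊕ l → F}
    (hv : v ∈ coordsVanish F s) (p : F) : symplTransvection v p ∈ pairFixator F s := by
  intro i hi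
  rw [symplTransvection_mulVec, symplTransvection_mulVec, symplForm_single_inl,
    symplForm_single_inr, (hv i hi).1, (hv i hi).2]
  simp

lemma mulVec_mem_coordsVanish {s : Finset l} {g : symplecticGroup l F} (hg : g ∈ pairFixator F s)
    {v : l ⊕ l → F} (hv : v ∈ coordsVanish F s) : (g : BlockMat l F) *ᵥ v ∈ coordsVanish F s := by
  intro i hi
  have hinl := symplForm_mulVec_symplecticGroup g v (Pi.single (.inl i) 1)
  have hinr := symplForm_mulVec_symplecticGroup g v (Pi.single (.inr i) 1)
  rw [(hg i hi).1, symplForm_single_inl, symplForm_single_inl] at hinl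
  rw [(hg i hi).2, symplForm_single_inr, symplForm_single_inr] at hinr
  rw [hinl, neg_injective hinr]
  exact hv i hi

lemma exists_four_symplTransvection_mul_mem_pairFixator {s : Finset l} {i : l} (hi : i ∉ s)
    {g : symplecticGroup l F} (hg : g ∈ pairFixator F s) :
    ∃ L : List ((l ⊕ l → F) × F), L.length = 4 ∧
      (L.map fun p => symplTransvection p.1 p.2).prod * g ∈ pairFixator F (insert i s) := by
  set e : l ⊕ l → F := Pi.single (.inl i) 1 with he
  set f : l ⊕ l → F := Pi.single (.inr i) 1 with hf
  have heV : e ∈ coordsVanish F s := single_inl_mem_coordsVanish hi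
  have hfV : f ∈ coordsVanish F s := single_inr_mem_coordsVanish hi
  have he0 : e ≠ 0 := by simp [he]
  have hef : symplForm l F e f ≠ 0 := by rw [hf, symplForm_single_inr]; simp [he]
  have hge0 : (g : BlockMat l F) *ᵥ e ≠ 0 := fun h => hef <| by
    rw [← symplForm_mulVec_symplecticGroup g, h, map_zero, LinearMap.zero_apply]
  obtain ⟨v, hv, w, hw, p, q, hmove⟩ :=
    exists_symplTransvection_mul_mulVec_eq (mulVec_mem_coordsVanish hg heV) heV hge0 he0
  set g₁ := symplTransvection v p * symplTransvection w q * g with hg₁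
  have hg₁s : g₁ ∈ pairFixator F s := mul_mem (mul_mem (symplTransvection_mem_pairFixator hv p)
    (symplTransvection_mem_pairFixator hw q)) hg
  have hg₁e : (g₁ : BlockMat l F) *ᵥ e = e := by rw [hg₁, symplecticGroup_mul_mulVec, hmove]
  obtain ⟨v', hv', w', hw', p', q', hfix, hmove'⟩ := exists_symplTransvection_mul_fixing heV hfV
    (mulVec_mem_coordsVanish hg₁s hfV) hef
    (by rw [← symplForm_mulVec_symplecticGroup g₁ e f, hg₁e])
  refine ⟨[(v', p'), (w', q'), (v, p), (w, q)], rfl, ?_⟩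
  have hprod : ([(v', p'), (w', q'), (v, p), (w, q)].map fun p =>
      symplTransvection p.1 p.2).prod * g =
        symplTransvection v' p' * symplTransvection w' q' * g₁ := by
    simp [hg₁, mul_assoc]
  rw [hprod]
  intro k hk
  rcases Finset.mem_insert.1 hk with rfl | hk
  · exact ⟨by rw [symplecticGroup_mul_mulVec, hg₁e, hfix],
      by rw [symplecticGroup_mul_mulVec, hmove']⟩
  · exact mul_mem (mul_mem (symplTransvection_mem_pairFixator hv' p')
      (symplTransvection_mem_pairFixator hw' q')) hg₁s k hk

lemma exists_list_symplTransvection_mul_mem_pairFixator (g : symplecticGroup l F) (s : Finset l) :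
    ∃ L : List ((l ⊕ l → F) × F), L.length = 4 * s.card ∧
      (L.map fun p => symplTransvection p.1 p.2).prod * g ∈ pairFixator F s := by
  induction s using Finset.induction_on with
  | empty => exact ⟨[], rfl, fun i hi => absurd hi (Finset.notMem_empty i)⟩
  | insert i s hi ih =>
    obtain ⟨L, hL, hLg⟩ := ih
    obtain ⟨L', hL', hLg'⟩ := exists_four_symplTransvection_mul_mem_pairFixator hi hLg
    refine ⟨L' ++ L, ?_, ?_⟩
    · rw [List.length_append, hL, hL', Finset.card_insert_of_notMem hi]
      ring
    · rwa [List.map_append, List.prod_append, mul_assoc]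

lemma pairFixator_univ : pairFixator F (Finset.univ : Finset l) = ⊥ := by
  rw [eq_bot_iff]
  refine fun g hg => Subgroup.mem_bot.2 <| Subtype.ext <| Matrix.ext_of_mulVec_single ?_
  rintro (i | i)
  · rw [(hg i (Finset.mem_univ i)).1, Submonoid.coe_one, one_mulVec]
  · rw [(hg i (Finset.mem_univ i)).2, Submonoid.coe_one, one_mulVec]

theorem exists_eq_prod_symplTransvection (g : symplecticGroup l F) :
    ∃ p : Fin (4 * Fintype.card l) → (l ⊕ l → F) × F,
      g = (List.ofFn fun k => symplTransvection (p k).1 (p k).2).prod := by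
  obtain ⟨L, hL, hLg⟩ := exists_list_symplTransvection_mul_mem_pairFixator g⁻¹ Finset.univ
  rw [Finset.card_univ] at hL
  rw [pairFixator_univ, Subgroup.mem_bot, mul_inv_eq_one] at hLg
  refine ⟨fun k => L.get (k.cast hL.symm), ?_⟩
  rw [← hLg]
  congr 1
  apply List.ext_get <;> simp [hL]

lemma eq_top_of_symplTransvection_mem {H : Subgroup (symplecticGroup l F)}
    (h : ∀ v s, symplTransvection v s ∈ H) : H = ⊤ := by
  refine eq_top_iff.2 fun g _ => ?_
  obtain ⟨p, rfl⟩ := exists_eq_prod_symplTransvection g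
  refine Subgroup.list_prod_mem _ fun x hx => ?_
  obtain ⟨k, rfl⟩ := List.mem_ofFn.1 hx
  exact h _ _

end Generation

/-! ### Subgroups of bounded index -/

section Index

lemma pow_factorial_mem_normalCore {G : Type*} [Group G] [Finite G] {H : Subgroup G} {n : ℕ}
    (hn : H.index ≤ n) (g : G) : g ^ n.factorial ∈ H.normalCore := by
  rw [Subgroup.normalCore_eq_ker, MonoidHom.mem_ker, map_pow]
  classical
  obtain ⟨c, hc⟩ : Nat.card (Equiv.Perm (G ⧸ H)) ∣ n.factorial := by
    rw [Nat.card_perm]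
    exact Nat.factorial_dvd_factorial hn
  rw [hc, pow_mul, pow_card_eq_one', one_pow]

variable {l F : Type*} [Fintype l] [DecidableEq l] [Field F]

/-- The commutator of `t` with a transvection in the direction of an eigenvector of `t` is again a
transvection in that direction. -/
lemma symplTransvection_mem_of_mulVec_eq_smul {N : Subgroup (symplecticGroup l F)} [N.Normal]
    {t : symplecticGroup l F} (ht : t ∈ N) {v : l ⊕ l → F} {a : F}
    (htv : (t : BlockMat l F) *ᵥ v = a • v) (ha : a ^ 2 ≠ 1) (s : F) :
    symplTransvection v s ∈ N := by
  set r := (a ^ 2 - 1)⁻¹ * s with hr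
  have hcomm : t * (symplTransvection v r * t⁻¹ * (symplTransvection v r)⁻¹) =
      symplTransvection v s := by
    rw [← mul_assoc, ← mul_assoc, symplTransvection_conj, htv, symplTransvection_smul,
      mul_inv_eq_iff_eq_mul, symplTransvection_mul, hr]
    congr 1
    field_simp [sub_ne_zero.2 ha]
    ring
  rw [← hcomm]
  exact mul_mem ht (Subgroup.Normal.conj_mem inferInstance _ (inv_mem ht) _)

lemma symplecticGroup_pow_mulVec_eq_smul {t : symplecticGroup l F} {v : l ⊕ l → F} {a : F}
    (h : (t : BlockMat l F) *ᵥ v = a • v) (n : ℕ) :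
    ((t ^ n : symplecticGroup l F) : BlockMat l F) *ᵥ v = a ^ n • v := by
  induction n with
  | zero => simp
  | succ n ih => rw [pow_succ, symplecticGroup_mul_mulVec, h, mulVec_smul, ih, smul_smul, pow_succ']

theorem symplecticGroup_eq_top_of_index_le [Fintype F] {H : Subgroup (symplecticGroup l F)} {n : ℕ}
    (hH : H.index ≤ n) (hF : 2 * n.factorial + 1 < Fintype.card F) : H = ⊤ := by
  obtain ⟨a, ha⟩ : ∃ a : Fˣ, a ^ (2 * n.factorial) ≠ 1 := by
    refine exists_pow_ne_one_of_isCyclic (by positivity) ?_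
    rw [Nat.card_units, Nat.card_eq_fintype_card]
    lia
  refine eq_top_of_symplTransvection_mem fun v s => H.normalCore_le ?_
  obtain rfl | hv := eq_or_ne v 0
  · rw [symplTransvection_zero_left]
    exact one_mem _
  obtain ⟨t, ht⟩ := exists_symplecticGroup_mulVec_eq hv (smul_ne_zero a.ne_zero hv)
  refine symplTransvection_mem_of_mulVec_eq_smul (pow_factorial_mem_normalCore hH t)
    (symplecticGroup_pow_mulVec_eq_smul ht _) (fun h => ha ?_) s
  rw [mul_comm, pow_mul]
  exact Units.ext (by simpa using h)

end Index

/-! ### Counting zeros of polynomials on the symplectic group -/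

section Counting

universe u

open MvPolynomial in
lemma totalDegree_aeval_le {σ τ R S : Type*} [CommSemiring R] [CommSemiring S] [Algebra R S]
    (p : MvPolynomial σ R) {f : σ → MvPolynomial τ S} (hf : ∀ i, (f i).totalDegree ≤ 1) :
    (aeval f p).totalDegree ≤ p.totalDegree := by
  rw [aeval_def, eval₂_eq]
  refine totalDegree_finsetSum_le fun d hd => (totalDegree_mul _ _).trans ?_
  rw [IsScalarTower.algebraMap_apply R S, algebraMap_eq, totalDegree_C, zero_add]
  calc _ ≤ ∑ i ∈ d.support, (f i ^ d i).totalDegree := totalDegree_finsetProd _ _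
    _ ≤ ∑ i ∈ d.support, d i := Finset.sum_le_sum fun i _ =>
      (totalDegree_pow _ _).trans (by simpa using Nat.mul_le_mul_left (d i) (hf i))
    _ ≤ p.totalDegree := le_totalDegree hd

open MvPolynomial in
lemma card_mul_card_eval_eq_zero_le {σ R : Type*} [Fintype σ] [CommRing R] [IsDomain R] [Fintype R]
    {p : MvPolynomial σ R} (hp : p ≠ 0) :
    Fintype.card R * Nat.card {t : σ → R // eval t p = 0} ≤
      p.totalDegree * Fintype.card R ^ Fintype.card σ := by
  classical
  let e := Fintype.equivFin σ
  have hp' : rename e p ≠ 0 := (rename_injective e e.injective).ne_iff' (map_zero _) |>.2 hp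
  have hcard : Nat.card {t : σ → R // eval t p = 0} =
      (Finset.univ.filter fun t : Fin (Fintype.card σ) → R => eval t (rename e p) = 0).card := by
    rw [← Fintype.card_subtype, ← Nat.card_eq_fintype_card]
    refine Nat.card_congr ((e.arrowCongr (Equiv.refl R)).subtypeEquiv fun t => ?_)
    rw [eval_rename]
    simp [Function.comp_def]
  have h := schwartz_zippel_totalDegree hp' (Finset.univ : Finset R)
  rw [Fintype.piFinset_univ, Finset.card_univ, div_le_div_iff₀
    (pow_pos (by exact_mod_cast Fintype.card_pos) _) (by exact_mod_cast Fintype.card_pos),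
    ← renameEquiv_apply, totalDegree_renameEquiv] at h
  rw [hcard, mul_comm]
  exact_mod_cast h

lemma mul_card_le_of_forall_mul_card_translate_le {G T : Type*} [Group G] [Finite G] [Finite T]
    [Nonempty T] (u : T → G) (p : G → Prop) {a b : ℕ}
    (h : ∀ y, a * Nat.card {t // p (y * u t)} ≤ b * Nat.card T) :
    a * Nat.card {g // p g} ≤ b * Nat.card G := by
  classical
  have : Fintype G := Fintype.ofFinite G
  have : Fintype T := Fintype.ofFinite T
  have hcount : Nat.card T * Nat.card {g // p g} = ∑ y : G, Nat.card {t // p (y * u t)} :=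
    calc _ = ∑ t : T, Nat.card {y // p (y * u t)} := by
          simp only [fun t => Nat.card_congr ((Equiv.mulRight (u t)).subtypeEquiv
            (p := fun y => p (y * u t)) (q := p) fun _ => Iff.rfl),
            Finset.sum_const, Finset.card_univ, Nat.card_eq_fintype_card, smul_eq_mul]
      _ = _ := by
          simpa only [Finset.bipartiteAbove, Finset.bipartiteBelow, ← Fintype.card_subtype,
            ← Nat.card_eq_fintype_card] using
            (Finset.sum_card_bipartiteAbove_eq_sum_card_bipartiteBelow (s := Finset.univ)
              (t := Finset.univ) fun y t => p (y * u t)).symm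
  refine Nat.le_of_mul_le_mul_left ?_ (Nat.card_pos (α := T))
  calc _ = ∑ y : G, a * Nat.card {t // p (y * u t)} := by
        rw [mul_left_comm, hcount, Finset.mul_sum]
    _ ≤ ∑ _y : G, b * Nat.card T := Finset.sum_le_sum fun y _ => h y
    _ = Nat.card T * (b * Nat.card G) := by
        rw [Finset.sum_const, Finset.card_univ, smul_eq_mul, ← Nat.card_eq_fintype_card]
        ring

/-- Evaluation of polynomials in `n × n` variables at the entries of a matrix. -/
noncomputable abbrev entriesAeval {n R A : Type*} [CommRing R] [CommRing A] [Algebra R A]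
    (M : Matrix n n A) : MvPolynomial (n × n) R →ₐ[R] A :=
  MvPolynomial.aeval fun p => M p.1 p.2

lemma map_entriesAeval {n R S : Type*} [CommRing R] [CommRing S] [Algebra ℤ R] [Algebra ℤ S]
    (f : R →+* S) (A : Matrix n n R) (P : MvPolynomial (n × n) ℤ) :
    f (entriesAeval A P) = entriesAeval (A.map f) P := by
  rw [MvPolynomial.map_aeval, RingHom.ext_int (f.comp (algebraMap ℤ R)) (algebraMap ℤ S)]
  rfl

variable {l R S : Type*} [Fintype l] [DecidableEq l] [CommRing R] [CommRing S]

lemma transvectionMat_map (f : R →+* S) (v : l ⊕ l → R) (s : R) :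
    (transvectionMat v s).map f = transvectionMat (fun i => f (v i)) (f s) := by
  have hJ (i j) : f (J l R i j) = J l S i j := by
    rcases i with i | i <;> rcases j with j | j <;> simp [J, one_apply]
  ext i j
  simp [transvectionMat, one_apply, vecMulVec_apply, vecMul, dotProduct, hJ]

/-- The product of `n` symplectic transvections, the `k`-th one having direction
`fun i => t (k, some i)` and scalar `t (k, none)`. -/
def transvectionProd {n : ℕ} (t : Fin n × Option (l ⊕ l) → R) : BlockMat l R :=
  (List.ofFn fun k => transvectionMat (fun i => t (k, some i)) (t (k, none))).prod

lemma transvectionProd_map {n : ℕ} (f : R →+* S) (t : Fin n × Option (l ⊕ l) → R) :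
    (transvectionProd t).map f = transvectionProd (fun i => f (t i)) := by
  rw [transvectionProd, ← RingHom.mapMatrix_apply, map_list_prod, List.map_ofFn]
  simp only [Function.comp_def, RingHom.mapMatrix_apply, transvectionMat_map]
  rfl

lemma transvectionProd_mem_symplecticGroup {n : ℕ} (t : Fin n × Option (l ⊕ l) → R) :
    transvectionProd t ∈ symplecticGroup l R :=
  Submonoid.list_prod_mem _ fun A hA => by
    obtain ⟨k, rfl⟩ := List.mem_ofFn.1 hA
    exact transvectionMat_mem_symplecticGroup _ _

lemma exists_transvectionProd_eq {F : Type*} [Field F] (g : symplecticGroup l F) :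
    ∃ t : Fin (4 * Fintype.card l) × Option (l ⊕ l) → F, transvectionProd t = g := by
  obtain ⟨p, hp⟩ := exists_eq_prod_symplTransvection g
  refine ⟨fun i => i.2.elim (p i.1).2 (p i.1).1, ?_⟩
  rw [hp, transvectionProd, ← Submonoid.subtype_apply, map_list_prod, List.map_ofFn]
  rfl

lemma exists_totalDegree_entriesAeval_mul_transvectionProd_le (l : Type*) [Fintype l]
    [DecidableEq l] (n : ℕ) (P : MvPolynomial ((l ⊕ l) × (l ⊕ l)) ℤ) :
    ∃ D, ∀ (R : Type u) [CommRing R] [Nontrivial R] (y : BlockMat l R),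
      (entriesAeval (y.map MvPolynomial.C *
        transvectionProd fun i : Fin n × Option (l ⊕ l) =>
          MvPolynomial.X i) P).totalDegree ≤ D := by
  let Y : BlockMat l (MvPolynomial (((l ⊕ l) × (l ⊕ l)) ⊕ (Fin n × Option (l ⊕ l))) ℤ) :=
    Matrix.of fun i j => MvPolynomial.X (.inl (i, j))
  let U := entriesAeval (Y * transvectionProd fun t => MvPolynomial.X (.inr t)) P
  refine ⟨U.totalDegree, fun R _ _ y => ?_⟩
  let f := (MvPolynomial.aeval (R := ℤ) (Sum.elim (fun p : (l ⊕ l) × (l ⊕ l) =>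
      MvPolynomial.C (y p.1 p.2))
    fun i : Fin n × Option (l ⊕ l) => (MvPolynomial.X i : MvPolynomial _ R))).toRingHom
  have hY : Y.map f = y.map MvPolynomial.C := by ext1 i j; simp [Y, f]
  have hU : f U = entriesAeval (y.map MvPolynomial.C *
      transvectionProd fun i : Fin n × Option (l ⊕ l) => MvPolynomial.X i) P := by
    rw [map_entriesAeval, Matrix.map_mul, hY, transvectionProd_map]
    simp [f]
  rw [← hU]
  refine totalDegree_aeval_le U ?_
  rintro (p | t)
  · simp
  · simp

/-- Every symplectic matrix is a value of the polynomial map `transvectionProd`, so the zeros on the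
group can be counted with the Schwartz–Zippel lemma on the parameter space of that map. -/
theorem exists_card_mul_card_entriesAeval_eq_zero_le (l : Type*) [Fintype l] [DecidableEq l]
    (P : MvPolynomial ((l ⊕ l) × (l ⊕ l)) ℤ) :
    ∃ D : ℕ, ∀ (F : Type u) [Field F] [Fintype F],
      (∃ g : symplecticGroup l F, entriesAeval (g : BlockMat l F) P ≠ 0) →
      Fintype.card F * Nat.card {g : symplecticGroup l F // entriesAeval (g : BlockMat l F) P = 0} ≤
        D * Nat.card (symplecticGroup l F) := by
  obtain ⟨D, hD⟩ :=
    exists_totalDegree_entriesAeval_mul_transvectionProd_le l (4 * Fintype.card l) P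
  refine ⟨D, fun F _ _ ⟨g, hg⟩ => ?_⟩
  refine mul_card_le_of_forall_mul_card_translate_le
    (fun t : Fin (4 * Fintype.card l) × Option (l ⊕ l) → F =>
      ⟨transvectionProd t, transvectionProd_mem_symplecticGroup t⟩)
    (fun g : symplecticGroup l F => entriesAeval (g : BlockMat l F) P = 0) fun y => ?_
  let Q := entriesAeval ((y : BlockMat l F).map MvPolynomial.C *
    transvectionProd fun i : Fin (4 * Fintype.card l) × Option (l ⊕ l) => MvPolynomial.X i) P
  have hQ (t) : MvPolynomial.eval t Q =
      entriesAeval ((y : BlockMat l F) * transvectionProd t) P := by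
    rw [map_entriesAeval, Matrix.map_mul, transvectionProd_map, Matrix.map_map]
    simp [Function.comp_def]
  have hQ0 : Q ≠ 0 := by
    obtain ⟨t, ht⟩ := exists_transvectionProd_eq (y⁻¹ * g)
    refine fun h => hg ?_
    rw [← mul_inv_cancel_left y g, Submonoid.coe_mul, ← ht, ← hQ, h, map_zero]
  calc _ = Fintype.card F * Nat.card {t // MvPolynomial.eval t Q = 0} := by
        simp only [hQ, Submonoid.coe_mul]
    _ ≤ Q.totalDegree * Fintype.card F ^ Fintype.card _ := card_mul_card_eval_eq_zero_le hQ0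
    _ ≤ D * Nat.card (Fin (4 * Fintype.card l) × Option (l ⊕ l) → F) := by
        rw [Nat.card_eq_fintype_card, Fintype.card_fun]
        exact Nat.mul_le_mul_right _ (hD F y)

theorem exists_card_mul_card_det_one_add_eq_zero_le (l : Type*) [Fintype l] [DecidableEq l] :
    ∃ D : ℕ, ∀ (F : Type u) [Field F] [Fintype F], (2 : F) ≠ 0 →
      Fintype.card F * Nat.card {g : symplecticGroup l F // (1 + (g : BlockMat l F)).det = 0} ≤
        D * Nat.card (symplecticGroup l F) := by
  obtain ⟨D, hD⟩ := exists_card_mul_card_entriesAeval_eq_zero_le l (1 + mvPolynomialX _ _ ℤ).det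
  have hdet {F : Type u} [Field F] (g : BlockMat l F) :
      entriesAeval g (1 + mvPolynomialX _ _ ℤ).det = (1 + g).det := by
    rw [AlgHom.map_det, map_add, map_one, mvPolynomialX_mapMatrix_aeval]
  refine ⟨D, fun F _ _ h2 => ?_⟩
  specialize hD F
  simp only [hdet] at hD
  refine hD ⟨1, ?_⟩
  rw [Submonoid.coe_one, one_add_one_eq_two, ← diagonal_ofNat, det_diagonal]
  exact Finset.prod_ne_zero_iff.2 fun _ _ => h2

end Counting

/-! ### Generic elements -/

section Generic

universe u

/-- The matrix with columns `z ^ k *ᵥ v`, for `k` smaller than its size. It is invertible if and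
only if `v` is a cyclic vector of `z`. -/
noncomputable def krylov {n R : Type*} [Fintype n] [DecidableEq n] [CommRing R] (z : Matrix n n R)
    (v : n → R) : Matrix n n R :=
  Matrix.of fun i j => (z ^ (Fintype.equivFin n j : ℕ) *ᵥ v) i

/-- A common multiple of all the integers up to `card n + 8`: these include the orders of the
permutations and of the field automorphisms by which elements normalising a torus act on it. -/
def torusExp (n : Type*) [Fintype n] : ℕ := (Fintype.card n + 8).factorial

/-- `y` is generic if its power `y ^ torusExp n` has a cyclic vector. -/
def IsGeneric {n F : Type*} [Fintype n] [DecidableEq n] [Field F] (y : Matrix n n F) : Prop :=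
  ∃ v, (krylov (y ^ torusExp n) v).det ≠ 0

section Krylov

variable {n R S : Type*} [Fintype n] [DecidableEq n] [CommRing R] [CommRing S]

lemma krylov_map (f : R →+* S) (z : Matrix n n R) (v : n → R) :
    (krylov z v).map f = krylov (z.map f) (fun i => f (v i)) := by
  ext i j
  simp only [krylov, Matrix.map_apply, Matrix.of_apply, RingHom.map_mulVec, Matrix.map_pow]
  rfl

lemma det_krylov_diagonal_ne_zero [IsDomain R] {d : n → R} (hd : Function.Injective d) :
    (krylov (diagonal d) 1).det ≠ 0 := by
  have hk : krylov (diagonal d) 1 =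
      (vandermonde (d ∘ (Fintype.equivFin n).symm)).submatrix
        (Fintype.equivFin n) (Fintype.equivFin n) := by
    ext i j
    simp [krylov, diagonal_pow, mulVec_diagonal, vandermonde]
  rw [hk, det_submatrix_equiv_self, det_vandermonde_ne_zero_iff]
  exact hd.comp (Equiv.injective _)

end Krylov

lemma eq_of_zpow_pow_eq {G : Type*} [Group G] {a : G} {i j : ℤ} {M : ℕ} (hM : 0 < M)
    (hij : |i - j| * M < orderOf a) (h : (a ^ i) ^ M = (a ^ j) ^ M) : i = j := by
  have hdvd : (orderOf a : ℤ) ∣ (i - j) * M := by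
    rw [orderOf_dvd_iff_zpow_eq_one, sub_mul, _root_.zpow_sub, mul_inv_eq_one, _root_.zpow_mul,
      _root_.zpow_mul, zpow_natCast, zpow_natCast, h]
  have h0 := Int.eq_zero_of_abs_lt_dvd hdvd (by rwa [abs_mul, Nat.abs_cast])
  have : (M : ℤ) ≠ 0 := by exact_mod_cast hM.ne'
  exact sub_eq_zero.1 ((mul_eq_zero.1 h0).resolve_right this)

variable {l : Type*} [Fintype l] [DecidableEq l]

lemma diagonal_mem_symplecticGroup {R : Type*} [CommRing R] {d : l ⊕ l → R}
    (hd : ∀ i, d (.inl i) * d (.inr i) = 1) : diagonal d ∈ symplecticGroup l R := by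
  rw [mem_symplecticGroup_iff_symplForm]
  intro u v
  rw [symplForm_apply, symplForm_apply]
  refine Finset.sum_congr rfl fun i _ => ?_
  simp only [mulVec_diagonal]
  linear_combination (u (.inr i) * v (.inl i) - u (.inl i) * v (.inr i)) * hd i

lemma exists_det_krylov_pow_ne_zero {F : Type*} [Field F] [Fintype F] {M : ℕ} (hM : 0 < M)
    (hF : 2 * Fintype.card l * M + 1 < Fintype.card F) :
    ∃ g : symplecticGroup l F, (krylov ((g : BlockMat l F) ^ M) 1).det ≠ 0 := by
  obtain ⟨a, ha⟩ := IsCyclic.exists_ofOrder_eq_natCard (α := Fˣ)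
  rw [Nat.card_units, Nat.card_eq_fintype_card] at ha
  let c : l → ℤ := fun i => Fintype.equivFin l i + 1
  let e : l ⊕ l → ℤ := Sum.elim c (-c)
  have hc (i) : 0 < c i ∧ c i ≤ Fintype.card l := by
    have := (Fintype.equivFin l i).2
    simp only [c]
    lia
  have he : Function.Injective e := by
    have hcinj : Function.Injective c := fun i j h => (Fintype.equivFin l).injective <| by
      ext
      simpa [c] using h
    refine hcinj.sumElim (neg_injective.comp hcinj) fun i j => ?_
    have := hc i
    have := hc j
    simp only [Pi.neg_apply]
    lia
  have hbound (i j) : |e i - e j| * M < orderOf a := by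
    have habs : |e i - e j| ≤ 2 * Fintype.card l := by
      rcases i with i | i <;> rcases j with j | j <;> have := hc i <;> have := hc j <;>
        simp only [e, Sum.elim_inl, Sum.elim_inr, Pi.neg_apply, abs_le] <;> lia
    calc |e i - e j| * (M : ℤ) ≤ 2 * Fintype.card l * M := by gcongr
      _ < orderOf a := by rw [ha]; exact_mod_cast (by lia)
  refine ⟨⟨diagonal fun i => ((a ^ e i : Fˣ) : F), diagonal_mem_symplecticGroup fun i => ?_⟩, ?_⟩
  · rw [← Units.val_mul, ← _root_.zpow_add]
    simp [e]
  · simp only [diagonal_pow]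
    refine det_krylov_diagonal_ne_zero fun i j hij => he (eq_of_zpow_pow_eq hM (hbound i j) ?_)
    exact Units.ext (by simpa using hij)

theorem exists_card_mul_card_not_isGeneric_le (l : Type*) [Fintype l] [DecidableEq l] :
    ∃ D q₀ : ℕ, ∀ (F : Type u) [Field F] [Fintype F], q₀ ≤ Fintype.card F →
      Fintype.card F * Nat.card {g : symplecticGroup l F // ¬ IsGeneric (g : BlockMat l F)} ≤
        D * Nat.card (symplecticGroup l F) := by
  set M := torusExp (l ⊕ l)
  obtain ⟨D, hD⟩ := exists_card_mul_card_entriesAeval_eq_zero_le l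
    (krylov (mvPolynomialX _ _ ℤ ^ M) 1).det
  have hdet {F : Type u} [Field F] (g : BlockMat l F) :
      entriesAeval g (krylov (mvPolynomialX _ _ ℤ ^ M) 1).det = (krylov (g ^ M) 1).det := by
    have h := krylov_map (entriesAeval g).toRingHom (mvPolynomialX _ _ ℤ ^ M) 1
    have hX := mvPolynomialX_mapMatrix_aeval ℤ g
    rw [AlgHom.mapMatrix_apply] at hX
    rw [AlgHom.map_det, AlgHom.mapMatrix_apply]
    refine congrArg det (h.trans ?_)
    rw [Matrix.map_pow]
    congr 1
    · exact congrArg (· ^ M) hX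
    · ext; simp
  refine ⟨D, 2 * Fintype.card l * M + 2, fun F _ _ hF => ?_⟩
  obtain ⟨g, hg⟩ := exists_det_krylov_pow_ne_zero (l := l) (F := F) (M := M) (Nat.factorial_pos _)
    (by lia)
  refine le_trans ?_ (hD F ⟨g, by rwa [hdet]⟩)
  gcongr
  refine Nat.card_le_card_of_injective (Subtype.map id fun g hg => ?_)
    (Subtype.map_injective _ Function.injective_id)
  rw [hdet]
  by_contra hne
  exact hg ⟨1, hne⟩

end Generic

/-! ### Degrees and homogenised evaluation -/

section Degree

open MvPolynomial

variable {σ n R : Type*} [Fintype n] [CommRing R]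

lemma totalDegree_mul_apply_le {A B : Matrix n n (MvPolynomial σ R)} {a b : ℕ}
    (hA : ∀ i j, (A i j).totalDegree ≤ a) (hB : ∀ i j, (B i j).totalDegree ≤ b) (i j : n) :
    ((A * B) i j).totalDegree ≤ a + b :=
  totalDegree_finsetSum_le fun k _ =>
    (totalDegree_mul _ _).trans (add_le_add (hA i k) (hB k j))

variable [DecidableEq n]

lemma totalDegree_det_le {A : Matrix n n (MvPolynomial σ R)} {d : ℕ}
    (hA : ∀ i j, (A i j).totalDegree ≤ d) : A.det.totalDegree ≤ Fintype.card n * d := by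
  rw [det_apply]
  refine totalDegree_finsetSum_le fun π _ => (totalDegree_smul_le _ _).trans ?_
  refine (totalDegree_finsetProd _ _).trans ?_
  simpa using Finset.sum_le_card_nsmul Finset.univ _ d fun i _ => hA (π i) i

lemma totalDegree_adjugate_apply_le {A : Matrix n n (MvPolynomial σ R)} {d : ℕ}
    (hA : ∀ i j, (A i j).totalDegree ≤ d) (i j : n) :
    (A.adjugate i j).totalDegree ≤ Fintype.card n * d := by
  rw [adjugate_apply]
  refine totalDegree_det_le fun k k' => ?_
  rw [updateRow_apply]
  split_ifs
  · rw [Pi.single_apply]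
    split_ifs <;> simp
  · exact hA k k'

end Degree

section HomogenizedAeval

open MvPolynomial

variable {τ R A B : Type*} [CommRing R] [CommRing A] [Algebra R A] [CommRing B] [Algebra R B]

/-- The homogenisation of `P` in degree `P.totalDegree`, evaluated at the numerators `num` and the
denominator `den`: formally `den ^ P.totalDegree * P (num / den)`. -/
noncomputable def homogenizedAeval (P : MvPolynomial τ R) (num : τ → A) (den : A) : A :=
  ∑ μ ∈ P.support,
    algebraMap R A (P.coeff μ) * (∏ i ∈ μ.support, num i ^ μ i) * den ^ (P.totalDegree - μ.degree)

lemma map_homogenizedAeval (f : A →ₐ[R] B) (P : MvPolynomial τ R) (num : τ → A) (den : A) :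
    f (homogenizedAeval P num den) = homogenizedAeval P (fun i => f (num i)) (f den) := by
  simp [homogenizedAeval, map_sum, map_prod]

lemma homogenizedAeval_mul (P : MvPolynomial τ R) (t : τ → A) (den : A) :
    homogenizedAeval P (fun i => den * t i) den = den ^ P.totalDegree * aeval t P := by
  rw [aeval_def, eval₂_eq, homogenizedAeval, Finset.mul_sum]
  refine Finset.sum_congr rfl fun μ hμ => ?_
  have hle : μ.degree ≤ P.totalDegree := le_totalDegree hμ
  have hden : den ^ P.totalDegree = den ^ μ.degree * den ^ (P.totalDegree - μ.degree) := by
    rw [← pow_add, Nat.add_sub_cancel' hle]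
  simp only [mul_pow, Finset.prod_mul_distrib, Finset.prod_pow_eq_pow_sum, hden,
    Finsupp.degree_apply]
  ring

lemma totalDegree_homogenizedAeval_le {σ : Type*} (P : MvPolynomial τ R)
    {num : τ → MvPolynomial σ R} {den : MvPolynomial σ R} {d : ℕ}
    (hnum : ∀ i, (num i).totalDegree ≤ d) (hden : den.totalDegree ≤ d) :
    (homogenizedAeval P num den).totalDegree ≤ P.totalDegree * d := by
  refine totalDegree_finsetSum_le fun μ hμ => (totalDegree_mul _ _).trans ?_
  have hle : μ.degree ≤ P.totalDegree := le_totalDegree hμ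
  have hprod : (∏ i ∈ μ.support, num i ^ μ i).totalDegree ≤ μ.degree * d := by
    rw [Finsupp.degree_apply, Finset.sum_mul]
    exact (totalDegree_finsetProd _ _).trans <| Finset.sum_le_sum fun i _ =>
      (totalDegree_pow _ _).trans (Nat.mul_le_mul_left _ (hnum i))
  calc _ ≤ μ.degree * d + (P.totalDegree - μ.degree) * d := by
        refine add_le_add ((totalDegree_mul _ _).trans ?_)
          ((totalDegree_pow _ _).trans (Nat.mul_le_mul_left _ hden))
        simpa [algebraMap_eq] using hprod
    _ = P.totalDegree * d := by
        rw [← add_mul, Nat.add_sub_cancel' hle]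

end HomogenizedAeval

lemma fst_aeval_dualNumber {τ R : Type*} [CommRing R] (P : MvPolynomial τ R)
    (t : τ → DualNumber R) :
    (MvPolynomial.aeval t P).fst = MvPolynomial.eval (fun i => (t i).fst) P := by
  rw [← MvPolynomial.coe_aeval_eq_eval, ← TrivSqZeroExt.fstHom_apply R R R]
  exact DFunLike.congr_fun (MvPolynomial.comp_aeval t (TrivSqZeroExt.fstHom R R R)) P

lemma snd_aeval_dualNumber {τ R : Type*} [Fintype τ] [CommRing R] (P : MvPolynomial τ R)
    (t : τ → DualNumber R) :
    (MvPolynomial.aeval t P).snd =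
      ∑ z, (t z).snd * MvPolynomial.eval (fun i => (t i).fst) (MvPolynomial.pderiv z P) := by
  classical
  induction P using MvPolynomial.induction_on with
  | C r => simp [TrivSqZeroExt.algebraMap_eq_inl]
  | add p q hp hq => simp only [map_add, TrivSqZeroExt.snd_add, hp, hq, mul_add,
      Finset.sum_add_distrib]
  | mul_X p i hp =>
    simp only [map_mul, MvPolynomial.aeval_X, DualNumber.snd_mul, hp, fst_aeval_dualNumber,
      Derivation.leibniz, smul_eq_mul, map_add, MvPolynomial.eval_X, mul_add,
      Finset.sum_add_distrib, Finset.sum_mul, MvPolynomial.pderiv_X]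
    congr 1
    · rw [Finset.sum_eq_single i]
      · simp [mul_comm]
      · intro j _ hj
        simp [hj.symm]
      · simp
    · exact Finset.sum_congr rfl fun z _ => by ring

lemma eq_zero_of_totalDegree_lt_card {F σ : Type*} [Field F] [Fintype F] [Finite σ]
    {p : MvPolynomial σ F} (hd : p.totalDegree < Fintype.card F)
    (h : ∀ t, MvPolynomial.eval t p = 0) : p = 0 :=
  MvPolynomial.eq_zero_of_eval_zero_at_prod_finset p (fun _ => Finset.univ)
    (fun i => (MvPolynomial.degreeOf_le_totalDegree p i).trans_lt hd) fun t _ => h t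

/-! ### The squared Cayley transform -/

section Cayley

variable {n R S : Type*} [Fintype n] [DecidableEq n] [CommRing R] [CommRing S]

/-- The numerator of the squared Cayley transform `((1 + X)⁻¹ * (1 - X)) ^ 2`, over the denominator
`cayleyDen X`. -/
def cayleyNum (X : Matrix n n R) : Matrix n n R := (adjugate (1 + X) * (1 - X)) ^ 2

/-- The denominator of the squared Cayley transform `((1 + X)⁻¹ * (1 - X)) ^ 2`. Squaring the
transform makes its range lie in every subgroup containing all squares. -/
def cayleyDen (X : Matrix n n R) : R := (1 + X).det ^ 2

lemma cayleyNum_map (f : R →+* S) (X : Matrix n n R) :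
    (cayleyNum X).map f = cayleyNum (X.map f) := by
  simp only [cayleyNum, ← RingHom.mapMatrix_apply, map_pow, map_mul, RingHom.map_adjugate, map_add,
    map_sub, map_one]

lemma map_cayleyDen (f : R →+* S) (X : Matrix n n R) : f (cayleyDen X) = cayleyDen (X.map f) := by
  simp only [cayleyDen, ← RingHom.mapMatrix_apply, map_pow, RingHom.map_det, map_add, map_one]

section SquareZero

variable {e : R} (he : e * e = 0) (X : Matrix n n R)
include he

lemma one_add_smul_mul_one_sub_smul : (1 + e • X) * (1 - e • X) = 1 := by
  rw [(Commute.one_left (e • X)).mul_self_sub_mul_self_eq.symm]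
  simp [smul_smul, he]

lemma one_sub_smul_mul_self : (1 - e • X) * (1 - e • X) = 1 - (2 * e) • X := by
  simp only [mul_sub, sub_mul, one_mul, mul_one, smul_mul_smul_comm, he, zero_smul, sub_zero,
    two_mul, add_smul]
  abel

lemma isUnit_cayleyDen_smul : IsUnit (cayleyDen (e • X)) := by
  have hdet := congrArg det (one_add_smul_mul_one_sub_smul he X)
  rw [det_mul, det_one] at hdet
  exact (IsUnit.of_mul_eq_one _ hdet).pow 2

lemma cayleyNum_smul : cayleyNum (e • X) = cayleyDen (e • X) • (1 - (4 * e) • X) := by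
  have hadj : adjugate (1 + e • X) = (1 + e • X).det • (1 - e • X) := by
    calc adjugate (1 + e • X) = adjugate (1 + e • X) * ((1 + e • X) * (1 - e • X)) := by
          rw [one_add_smul_mul_one_sub_smul he, mul_one]
      _ = _ := by rw [← mul_assoc, adjugate_mul, smul_mul_assoc, one_mul]
  have he' : 2 * e * (2 * e) = 0 := by linear_combination 4 * he
  rw [cayleyNum, cayleyDen, hadj, smul_mul_assoc, one_sub_smul_mul_self he, smul_pow,
    sq (1 - (2 * e) • X), one_sub_smul_mul_self he', ← mul_assoc]
  norm_num

end SquareZero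

end Cayley

section CayleyDegree

variable {σ n R : Type*} [DecidableEq n] [CommRing R] {X : Matrix n n (MvPolynomial σ R)}

lemma totalDegree_one_apply_le (i j : n) :
    ((1 : Matrix n n (MvPolynomial σ R)) i j).totalDegree ≤ 1 := by
  rw [one_apply]
  split_ifs <;> simp

lemma totalDegree_one_add_apply_le (hX : ∀ i j, (X i j).totalDegree ≤ 1) (i j : n) :
    ((1 + X) i j).totalDegree ≤ 1 :=
  (MvPolynomial.totalDegree_add _ _).trans (max_le (totalDegree_one_apply_le i j) (hX i j))

variable [Fintype n]

lemma totalDegree_cayleyDen_le (hX : ∀ i j, (X i j).totalDegree ≤ 1) :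
    (cayleyDen X).totalDegree ≤ 2 * Fintype.card n := by
  refine (MvPolynomial.totalDegree_pow _ _).trans (Nat.mul_le_mul_left _ ?_)
  simpa using totalDegree_det_le (totalDegree_one_add_apply_le hX)

lemma totalDegree_cayleyNum_apply_le (hX : ∀ i j, (X i j).totalDegree ≤ 1) (i j : n) :
    (cayleyNum X i j).totalDegree ≤ 2 * (Fintype.card n + 1) := by
  have hadj := totalDegree_adjugate_apply_le (totalDegree_one_add_apply_le hX)
  have hsub (i j : n) : ((1 - X) i j).totalDegree ≤ 1 :=
    (MvPolynomial.totalDegree_sub _ _).trans (max_le (totalDegree_one_apply_le i j) (hX i j))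
  have hmul := totalDegree_mul_apply_le hadj hsub
  have hsq := totalDegree_mul_apply_le hmul hmul i j
  rw [cayleyNum, sq]
  lia

end CayleyDegree

/-! ### Cayley directions of a subgroup -/

section SymplConj

variable {l R : Type*} [Fintype l] [DecidableEq l] [CommRing R]

/-- Conjugation of matrices by the elements of the symplectic group, as algebra automorphisms. -/
noncomputable def symplConj : symplecticGroup l R →* (BlockMat l R ≃ₐ[R] BlockMat l R) :=
  (MulSemiringAction.toAlgAut (ConjAct (BlockMat l R)ˣ) R (BlockMat l R)).comp <|
    ConjAct.toConjAct.toMonoidHom.comp <|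
      (Units.map (symplecticGroup l R).subtype).comp toUnits.toMonoidHom

lemma symplConj_apply (g : symplecticGroup l R) (A : BlockMat l R) :
    symplConj g A = (g : BlockMat l R) * A * (g⁻¹ : symplecticGroup l R) := rfl

lemma symplConj_coe (g h : symplecticGroup l R) :
    symplConj g (h : BlockMat l R) = (g * h * g⁻¹ : symplecticGroup l R) := rfl

lemma symplecticGroup_mul_inv_coe (g : symplecticGroup l R) :
    (g : BlockMat l R) * (g⁻¹ : symplecticGroup l R) = 1 := by
  rw [← Submonoid.coe_mul, mul_inv_cancel, Submonoid.coe_one]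

lemma symplecticGroup_inv_mul_coe (g : symplecticGroup l R) :
    ((g⁻¹ : symplecticGroup l R) : BlockMat l R) * g = 1 := by
  rw [← Submonoid.coe_mul, inv_mul_cancel, Submonoid.coe_one]

lemma det_symplConj (g : symplecticGroup l R) (A : BlockMat l R) :
    (symplConj g A).det = A.det := by
  rw [symplConj_apply, det_mul_right_comm, symplecticGroup_mul_inv_coe, one_mul]

lemma adjugate_symplConj (g : symplecticGroup l R) (A : BlockMat l R) :
    (symplConj g A).adjugate = symplConj g A.adjugate := by
  have hadj (h : symplecticGroup l R) :
      adjugate (h : BlockMat l R) = (h⁻¹ : symplecticGroup l R) := by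
    calc adjugate (h : BlockMat l R) = adjugate (h : BlockMat l R) * (h * (h⁻¹ :)) := by
          rw [symplecticGroup_mul_inv_coe, mul_one]
      _ = _ := by rw [← mul_assoc, adjugate_mul, SymplecticGroup.det_eq_one h.2, one_smul, one_mul]
  simp only [symplConj_apply, adjugate_mul_distrib, hadj, inv_inv, mul_assoc]

lemma cayleyDen_symplConj (g : symplecticGroup l R) (X : BlockMat l R) :
    cayleyDen (symplConj g X) = cayleyDen X := by
  rw [cayleyDen, cayleyDen, ← det_symplConj g (1 + X), map_add, map_one]

lemma cayleyNum_symplConj (g : symplecticGroup l R) (X : BlockMat l R) :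
    cayleyNum (symplConj g X) = symplConj g (cayleyNum X) := by
  simp only [cayleyNum, map_pow, map_mul, ← adjugate_symplConj, map_add, map_sub, map_one]

open LieAlgebra.Symplectic

lemma mem_sp_iff {X : BlockMat l R} : X ∈ sp l R ↔ Xᵀ * J l R = -(J l R * X) := by
  rw [sp, mem_skewAdjointMatricesLieSubalgebra, mem_skewAdjointMatricesSubmodule]
  simp [Matrix.IsSkewAdjoint, Matrix.IsAdjointPair]

lemma mem_sp_iff_isSymm {X : BlockMat l R} : X ∈ sp l R ↔ (J l R * X).IsSymm := by
  rw [mem_sp_iff, IsSymm, transpose_mul, J_transpose, mul_neg, neg_eq_iff_eq_neg]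

lemma J_mul_symplecticGroup (g : symplecticGroup l R) :
    J l R * (g : BlockMat l R) = ((g⁻¹ : symplecticGroup l R) : BlockMat l R)ᵀ * J l R := by
  have h : (g : BlockMat l R)ᵀ * J l R * g = J l R := SymplecticGroup.mem_iff'.1 g.2
  have hinv : ((g⁻¹ : symplecticGroup l R) : BlockMat l R)ᵀ * (g : BlockMat l R)ᵀ = 1 := by
    rw [← transpose_mul, symplecticGroup_mul_inv_coe, transpose_one]
  calc J l R * (g : BlockMat l R) = ((g⁻¹ : symplecticGroup l R) : BlockMat l R)ᵀ *
        (g : BlockMat l R)ᵀ * J l R * g := by rw [hinv, one_mul]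
    _ = _ := by rw [mul_assoc, mul_assoc, ← mul_assoc _ (J l R), h]

lemma symplConj_mem_sp (g : symplecticGroup l R) {X : BlockMat l R} (hX : X ∈ sp l R) :
    symplConj g X ∈ sp l R := by
  rw [mem_sp_iff_isSymm] at hX ⊢
  rw [symplConj_apply, ← mul_assoc, ← mul_assoc, J_mul_symplecticGroup, mul_assoc _ (J l R), IsSymm,
    transpose_mul, transpose_mul, transpose_transpose, hX.eq, ← mul_assoc]

end SymplConj

section CayleyCurve

variable {n R A B : Type*} [Fintype n] [DecidableEq n] [CommRing R] [CommRing A] [CommRing B]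
  [Algebra R A] [Algebra R B]

/-- The value of the polynomial function `f` along the curve `s ↦ h * ((1 + s X)⁻¹ (1 - s X)) ^ 2`,
cleared of denominators. The extra factor `cayleyDen` makes it vanish where the curve is not
defined. -/
noncomputable def cayleyCurveEval (f : MvPolynomial (n × n) R) (h X : Matrix n n R) (s : A) : A :=
  cayleyDen (s • X.map (algebraMap R A)) * homogenizedAeval f
    (fun p => (h.map (algebraMap R A) * cayleyNum (s • X.map (algebraMap R A))) p.1 p.2)
    (cayleyDen (s • X.map (algebraMap R A)))

variable (f : MvPolynomial (n × n) R) (h X : Matrix n n R)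

lemma map_cayleyCurveEval (φ : A →ₐ[R] B) (s : A) :
    φ (cayleyCurveEval f h X s) = cayleyCurveEval f h X (φ s) := by
  have hmap (M : Matrix n n R) : (M.map (algebraMap R A)).map φ = M.map (algebraMap R B) := by
    ext i j
    simp
  have hsmul : (s • X.map (algebraMap R A)).map (φ : A →+* B) = φ s • X.map (algebraMap R B) := by
    ext i j
    simp
  have hden := map_cayleyDen (φ : A →+* B) (s • X.map (algebraMap R A))
  have hnum := cayleyNum_map (φ : A →+* B) (s • X.map (algebraMap R A))
  rw [hsmul] at hden hnum
  rw [cayleyCurveEval, map_mul, map_homogenizedAeval, cayleyCurveEval, ← hden, ← hnum, ← hmap]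
  congr 3
  ext p
  exact congrFun₂ (Matrix.map_mul (f := (φ : A →+* B))) p.1 p.2

variable {f h X} in
lemma cayleyCurveEval_eq_of_cayleyNum_eq {s : A} {g : Matrix n n A}
    (hg : cayleyNum (s • X.map (algebraMap R A)) = cayleyDen (s • X.map (algebraMap R A)) • g) :
    cayleyCurveEval f h X s = cayleyDen (s • X.map (algebraMap R A)) ^ (f.totalDegree + 1) *
      entriesAeval (h.map (algebraMap R A) * g) f := by
  rw [cayleyCurveEval, hg, mul_smul_comm, pow_succ', mul_assoc, ← homogenizedAeval_mul]
  rfl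

lemma totalDegree_cayleyCurveEval_X_le :
    (cayleyCurveEval f h X (MvPolynomial.X () : MvPolynomial Unit R)).totalDegree ≤
      (f.totalDegree + 1) * (2 * (Fintype.card n + 1)) := by
  have hX (i j : n) : (((MvPolynomial.X () : MvPolynomial Unit R) •
      X.map (algebraMap R (MvPolynomial Unit R))) i j).totalDegree ≤ 1 := by
    rw [Matrix.smul_apply, map_apply, smul_eq_mul, mul_comm, MvPolynomial.algebraMap_eq,
      MvPolynomial.C_mul_X_eq_monomial]
    exact (MvPolynomial.totalDegree_monomial_le _ _).trans (by simp)
  have hh (i j : n) : (h.map (algebraMap R (MvPolynomial Unit R)) i j).totalDegree ≤ 0 := by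
    simp [MvPolynomial.algebraMap_eq]
  have hnum := totalDegree_mul_apply_le hh (totalDegree_cayleyNum_apply_le hX)
  have hden : _ ≤ 2 * (Fintype.card n + 1) := (totalDegree_cayleyDen_le hX).trans (by lia)
  refine (MvPolynomial.totalDegree_mul _ _).trans ?_
  rw [add_mul, one_mul, add_comm]
  refine add_le_add (totalDegree_homogenizedAeval_le f (fun p => ?_) hden) hden
  simpa using hnum p.1 p.2

end CayleyCurve

lemma entriesAeval_map_add_eps_smul_map {n R : Type*} [Fintype n] [CommRing R]
    (f : MvPolynomial (n × n) R) (M N : Matrix n n R) :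
    entriesAeval (M.map (algebraMap R (DualNumber R)) +
        (DualNumber.eps : DualNumber R) • N.map (algebraMap R (DualNumber R))) f =
      TrivSqZeroExt.inl (entriesAeval M f) +
        TrivSqZeroExt.inr (∑ p, N p.1 p.2 * entriesAeval M (MvPolynomial.pderiv p f)) := by
  ext
  · rw [fst_aeval_dualNumber]
    simp [TrivSqZeroExt.algebraMap_eq_inl]
  · rw [snd_aeval_dualNumber]
    simp [TrivSqZeroExt.algebraMap_eq_inl]

section CayleyDirections

variable {l F : Type*} [Fintype l] [DecidableEq l] [Field F]

open LieAlgebra.Symplectic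

/-- The elements of the symplectic Lie algebra whose line has image in `H` under the squared Cayley
transform. They play the role of the tangent vectors at `1` of the finite group `H`. -/
def cayleyDirections (H : Subgroup (symplecticGroup l F)) : Set (BlockMat l F) :=
  {X | X ∈ sp l F ∧ ∀ s : F, cayleyDen (s • X) ≠ 0 →
    ∃ h ∈ H, cayleyNum (s • X) = cayleyDen (s • X) • (h : BlockMat l F)}

variable {H : Subgroup (symplecticGroup l F)} {X : BlockMat l F}

lemma symplConj_mem_cayleyDirections {h : symplecticGroup l F} (hh : h ∈ H)
    (hX : X ∈ cayleyDirections H) : symplConj h X ∈ cayleyDirections H := by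
  refine ⟨symplConj_mem_sp h hX.1, fun s hs => ?_⟩
  rw [← map_smul, cayleyDen_symplConj] at hs ⊢
  obtain ⟨g, hg, hgX⟩ := hX.2 s hs
  exact ⟨h * g * h⁻¹, mul_mem (mul_mem hh hg) (inv_mem hh), by
    rw [cayleyNum_symplConj, hgX, map_smul, symplConj_coe]⟩

variable {f : MvPolynomial ((l ⊕ l) × (l ⊕ l)) F}
  (hf : ∀ g ∈ H, entriesAeval (g : BlockMat l F) f = 0)
include hf

lemma cayleyCurveEval_eq_zero {h : symplecticGroup l F} (hh : h ∈ H)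
    (hX : X ∈ cayleyDirections H) (s : F) : cayleyCurveEval f (h : BlockMat l F) X s = 0 := by
  have hmap (M : BlockMat l F) : M.map (algebraMap F F) = M := by
    ext i j
    simp
  by_cases hs : cayleyDen (s • X) = 0
  · rw [cayleyCurveEval, hmap, hs, zero_mul]
  · obtain ⟨g, hg, hgX⟩ := hX.2 s hs
    rw [cayleyCurveEval_eq_of_cayleyNum_eq (by rw [hmap, hgX]), hmap, hmap, ← Submonoid.coe_mul,
      hf _ (mul_mem hh hg), mul_zero]

variable [Fintype F]
  (hdeg : (f.totalDegree + 1) * (2 * (Fintype.card (l ⊕ l) + 1)) < Fintype.card F)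
include hdeg

lemma entriesAeval_mul_one_sub_eq_zero {h : symplecticGroup l F} (hh : h ∈ H)
    (hX : X ∈ cayleyDirections H) {A : Type*} [CommRing A] [Algebra F A] {e : A} (he : e * e = 0) :
    entriesAeval ((h : BlockMat l F).map (algebraMap F A) *
      (1 - (4 * e) • X.map (algebraMap F A))) f = 0 := by
  have hpoly : cayleyCurveEval f (h : BlockMat l F) X (MvPolynomial.X () : MvPolynomial Unit F) =
      0 := by
    refine eq_zero_of_totalDegree_lt_card
      ((totalDegree_cayleyCurveEval_X_le f _ X).trans_lt hdeg) fun t => ?_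
    rw [← MvPolynomial.coe_aeval_eq_eval, RingHom.coe_coe, map_cayleyCurveEval,
      MvPolynomial.aeval_X]
    exact cayleyCurveEval_eq_zero hf hh hX (t ())
  have hcurve : cayleyCurveEval f (h : BlockMat l F) X e = 0 := by
    rw [← MvPolynomial.aeval_X (R := F) (fun _ : Unit => e) (), ← map_cayleyCurveEval, hpoly,
      map_zero]
  rw [cayleyCurveEval_eq_of_cayleyNum_eq (cayleyNum_smul he _)] at hcurve
  exact ((isUnit_cayleyDen_smul he _).pow _).mul_right_eq_zero.1 hcurve

lemma sum_mul_entriesAeval_pderiv_eq_zero (h2 : (2 : F) ≠ 0) {h : symplecticGroup l F} (hh : h ∈ H)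
    (hX : X ∈ cayleyDirections H) :
    ∑ p : (l ⊕ l) × (l ⊕ l), ((h : BlockMat l F) * X) p.1 p.2 *
      entriesAeval (h : BlockMat l F) (MvPolynomial.pderiv p f) = 0 := by
  have h4 : (4 : F) ≠ 0 := by
    rw [show (4 : F) = 2 * 2 by norm_num]
    exact mul_ne_zero h2 h2
  have hmat : (h : BlockMat l F).map (algebraMap F (DualNumber F)) *
      (1 - (4 * DualNumber.eps : DualNumber F) • X.map (algebraMap F (DualNumber F))) =
      (h : BlockMat l F).map (algebraMap F (DualNumber F)) + (DualNumber.eps : DualNumber F) •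
        ((-4 : F) • ((h : BlockMat l F) * X)).map (algebraMap F (DualNumber F)) := by
    rw [mul_sub, mul_one, mul_smul_comm, ← Matrix.map_mul, sub_eq_add_neg, ← neg_smul,
      Matrix.map_smul' _ _ _ (map_mul _), smul_smul, mul_comm DualNumber.eps, map_neg, map_ofNat,
      neg_mul]
  have hzero := entriesAeval_mul_one_sub_eq_zero hf hdeg hh hX (DualNumber.eps_mul_eps (R := F))
  rw [hmat, entriesAeval_map_add_eps_smul_map] at hzero
  have hsnd := congrArg TrivSqZeroExt.snd hzero
  simpa [mul_assoc, ← Finset.mul_sum, h4] using hsnd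

theorem entriesAeval_mul_one_add_eps_smul_eq_zero (h2 : (2 : F) ≠ 0) {h : symplecticGroup l F}
    (hh : h ∈ H) (hX : X ∈ Submodule.span F (cayleyDirections H)) :
    entriesAeval ((h : BlockMat l F).map (algebraMap F (DualNumber F)) *
      (1 + (DualNumber.eps : DualNumber F) • X.map (algebraMap F (DualNumber F)))) f = 0 := by
  have hderiv : ∑ p : (l ⊕ l) × (l ⊕ l), ((h : BlockMat l F) * X) p.1 p.2 *
      entriesAeval (h : BlockMat l F) (MvPolynomial.pderiv p f) = 0 := by
    induction hX using Submodule.span_induction with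
    | mem X hX => exact sum_mul_entriesAeval_pderiv_eq_zero hf hdeg h2 hh hX
    | zero => simp
    | add X Y _ _ hX hY => simp only [mul_add, Matrix.add_apply, add_mul, Finset.sum_add_distrib,
        hX, hY, add_zero]
    | smul a X _ hX => simp only [mul_smul_comm, Matrix.smul_apply, smul_eq_mul, mul_assoc,
        ← Finset.mul_sum, hX, mul_zero]
  rw [mul_add, mul_one, mul_smul_comm, ← Matrix.map_mul, entriesAeval_map_add_eps_smul_map, hderiv,
    hf h hh, TrivSqZeroExt.inl_zero, TrivSqZeroExt.inr_zero, add_zero]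

end CayleyDirections

section Bracket

attribute [local instance] LieRing.ofAssociativeRing

variable {l F : Type*} [Fintype l] [DecidableEq l]

section TraceConj

variable {A : Type*} [CommRing F] [CommRing A] [Algebra F A]

/-- The polynomial function agreeing with `g ↦ trace (L * (g * Y * g⁻¹))` on the symplectic
group. -/
noncomputable def traceConjPoly (L Y : BlockMat l F) : MvPolynomial ((l ⊕ l) × (l ⊕ l)) F :=
  -trace (L.map MvPolynomial.C * (mvPolynomialX _ _ F * Y.map MvPolynomial.C *
    (J l _ * (mvPolynomialX _ _ F)ᵀ * J l _)))

omit [Fintype l] in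
lemma J_map {R S : Type*} [CommRing R] [CommRing S] (f : R →+* S) :
    (J l R).map f = J l S := by
  rw [J, fromBlocks_map, Matrix.map_neg _ (map_neg f)]
  simp [J]

lemma entriesAeval_traceConjPoly (L Y : BlockMat l F) (M : BlockMat l A) :
    entriesAeval M (traceConjPoly L Y) =
      -trace (L.map (algebraMap F A) * (M * Y.map (algebraMap F A) * (J l A * Mᵀ * J l A))) := by
  let φ : MvPolynomial ((l ⊕ l) × (l ⊕ l)) F →+* A := (entriesAeval M : _ →ₐ[F] A)
  have hX : φ.mapMatrix (mvPolynomialX _ _ F) = M := mvPolynomialX_mapMatrix_aeval F M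
  have hXT : φ.mapMatrix (mvPolynomialX _ _ F)ᵀ = Mᵀ := by
    rw [← hX, RingHom.mapMatrix_apply, RingHom.mapMatrix_apply, transpose_map]
  have hC (N : BlockMat l F) : φ.mapMatrix (N.map MvPolynomial.C) = N.map (algebraMap F A) := by
    ext i j
    simp [φ]
  have hJ : φ.mapMatrix (J l _) = J l A := J_map φ
  change φ _ = _
  rw [traceConjPoly, map_neg, AddMonoidHom.map_trace, ← RingHom.mapMatrix_apply]
  simp only [map_mul, hX, hXT, hC, hJ]

lemma totalDegree_traceConjPoly_le (L Y : BlockMat l F) : (traceConjPoly L Y).totalDegree ≤ 2 := by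
  have hX (i j : l ⊕ l) : (mvPolynomialX (l ⊕ l) (l ⊕ l) F i j).totalDegree ≤ 1 := by
    rw [mvPolynomialX_apply]
    exact (MvPolynomial.totalDegree_monomial_le _ _).trans (by simp)
  have hC (N : BlockMat l F) (i j : l ⊕ l) : (N.map MvPolynomial.C i j :
      MvPolynomial ((l ⊕ l) × (l ⊕ l)) F).totalDegree ≤ 0 := by simp
  have hJ := hC (J l F)
  rw [J_map] at hJ
  rw [traceConjPoly, MvPolynomial.totalDegree_neg]
  refine MvPolynomial.totalDegree_finsetSum_le fun i _ => ?_
  have hXT (i j : l ⊕ l) : ((mvPolynomialX (l ⊕ l) (l ⊕ l) F)ᵀ i j).totalDegree ≤ 1 := hX j i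
  exact totalDegree_mul_apply_le (hC L) (totalDegree_mul_apply_le (totalDegree_mul_apply_le
    hX (hC Y)) (totalDegree_mul_apply_le (totalDegree_mul_apply_le hJ hXT) hJ)) i i

end TraceConj

variable [Field F] {H : Subgroup (symplecticGroup l F)}

lemma span_cayleyDirections_le_sp :
    Submodule.span F (cayleyDirections H) ≤ (LieAlgebra.Symplectic.sp l F).toSubmodule :=
  Submodule.span_le.2 fun _ hX => hX.1

variable [Fintype F]

lemma trace_mul_lie_eq_zero (h2 : (2 : F) ≠ 0)
    (hq : 6 * (Fintype.card (l ⊕ l) + 1) < Fintype.card F) {L X Y : BlockMat l F}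
    (hL : ∀ Z ∈ cayleyDirections H, trace (L * Z) = 0)
    (hX : X ∈ Submodule.span F (cayleyDirections H)) (hY : Y ∈ cayleyDirections H) :
    trace (L * ⁅X, Y⁆) = 0 := by
  let ι := algebraMap F (DualNumber F)
  let ε : DualNumber F := DualNumber.eps
  have hvanish (g) (hg : g ∈ H) : entriesAeval (g : BlockMat l F) (traceConjPoly L Y) = 0 := by
    have hmem := hL _ (symplConj_mem_cayleyDirections hg hY)
    rw [symplConj_apply, SymplecticGroup.coe_inv] at hmem
    rw [entriesAeval_traceConjPoly, ← trace_neg, ← hmem]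
    simp [mul_assoc]
  have hdeg : ((traceConjPoly L Y).totalDegree + 1) * (2 * (Fintype.card (l ⊕ l) + 1)) <
      Fintype.card F := by
    have := Nat.mul_le_mul_right (2 * (Fintype.card (l ⊕ l) + 1))
      (Nat.succ_le_succ (totalDegree_traceConjPoly_le L Y))
    lia
  have htangent := entriesAeval_mul_one_add_eps_smul_eq_zero hvanish hdeg h2 (one_mem H) hX
  have hinv : J l _ * (1 + ε • X.map ι)ᵀ * J l _ = -(1 - ε • X.map ι) := by
    have hJX : J l F * Xᵀ * J l F = X := by
      rw [mul_assoc, mem_sp_iff.1 (span_cayleyDirections_le_sp hX), mul_neg, ← mul_assoc, J_squared,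
        neg_one_mul, neg_neg]
    have hJX' := congrArg ι.mapMatrix hJX
    simp only [map_mul, RingHom.mapMatrix_apply, J_map, transpose_map] at hJX'
    rw [transpose_add, transpose_one, transpose_smul, mul_add, mul_one, add_mul, J_squared,
      mul_smul_comm, smul_mul_assoc, hJX', neg_sub, neg_add_eq_sub]
  have hlie : (1 + ε • X.map ι) * Y.map ι * (1 - ε • X.map ι) = Y.map ι + ε • ⁅X, Y⁆.map ι := by
    have hmap := congrArg ι.mapMatrix (Ring.lie_def X Y)
    simp only [map_sub, map_mul, RingHom.mapMatrix_apply] at hmap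
    have hε : ε * ε = 0 := DualNumber.eps_mul_eps
    simp only [hmap, mul_sub, add_mul, one_mul, mul_one, smul_mul_assoc, mul_smul_comm, smul_smul,
      smul_add,
      hε, zero_smul, smul_sub, add_zero]
    abel
  rw [OneMemClass.coe_one, Matrix.map_one _ (map_zero _) (map_one _), one_mul,
    entriesAeval_traceConjPoly, hinv, mul_neg, mul_neg, trace_neg, neg_neg, hlie, mul_add,
    mul_smul_comm, ← Matrix.map_mul, ← Matrix.map_mul, trace_add, trace_smul,
    ← AddMonoidHom.map_trace, ← AddMonoidHom.map_trace, hL Y hY] at htangent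
  simpa [ε, ι, TrivSqZeroExt.algebraMap_eq_inl] using congrArg TrivSqZeroExt.snd htangent

lemma lie_mem_span_cayleyDirections (h2 : (2 : F) ≠ 0)
    (hq : 6 * (Fintype.card (l ⊕ l) + 1) < Fintype.card F) {X Y : BlockMat l F}
    (hX : X ∈ Submodule.span F (cayleyDirections H))
    (hY : Y ∈ Submodule.span F (cayleyDirections H)) :
    ⁅X, Y⁆ ∈ Submodule.span F (cayleyDirections H) := by
  induction hY using Submodule.span_induction with
  | mem Y hY =>
    by_contra hnot
    obtain ⟨φ, hφ, hker⟩ := Submodule.exists_le_ker_of_notMem hnot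
    let L : BlockMat l F := of fun i j => φ (single j i 1)
    have hL (Z : BlockMat l F) : trace (L * Z) = φ Z := by
      suffices hφ : (traceLinearMap _ F F).comp (LinearMap.mulLeft F L) = φ from
        LinearMap.congr_fun hφ Z
      refine Matrix.ext_linearMap _ fun i j => LinearMap.ext_ring ?_
      simp [L, trace_mul_single]
    rw [← hL] at hφ
    exact hφ <| trace_mul_lie_eq_zero h2 hq
      (fun Z hZ => (hL Z).trans (hker (Submodule.subset_span hZ))) hX hY
  | zero => simp
  | add Y Z _ _ hY hZ => exact lie_add X Y Z ▸ add_mem hY hZ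
  | smul a Y _ hY => exact lie_smul a X Y ▸ Submodule.smul_mem _ a hY

end Bracket

/-! ### Polynomials all of whose partial derivatives vanish -/

section PartialDerivatives

variable {σ R F : Type*} [CommRing R] [Field F]

lemma totalDegree_pderiv_lt {P : MvPolynomial σ R} (h : 0 < P.totalDegree) (z : σ) :
    (MvPolynomial.pderiv z P).totalDegree < P.totalDegree := by
  rw [MvPolynomial.totalDegree, Finset.sup_lt_iff (by simpa using h)]
  intro μ hμ
  rw [MvPolynomial.mem_support_iff, MvPolynomial.coeff_pderiv] at hμ
  have hle := MvPolynomial.le_totalDegree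
    (MvPolynomial.mem_support_iff.2 (left_ne_zero_of_mul hμ))
  rw [Finsupp.sum_add_index' (fun _ => rfl) fun _ _ _ => rfl, Finsupp.sum_single_index rfl] at hle
  lia

lemma totalDegree_pow_of_isDomain [IsDomain R] (P : MvPolynomial σ R) (n : ℕ) :
    (P ^ n).totalDegree = n * P.totalDegree := by
  rcases eq_or_ne P 0 with rfl | hP
  · rcases n.eq_zero_or_pos with rfl | hn
    · simp
    · simp [hn.ne']
  · induction n with
    | zero => simp
    | succ n ih =>
      rw [pow_succ, MvPolynomial.totalDegree_mul_of_isDomain (pow_ne_zero n hP) hP, ih, add_one_mul]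

lemma exists_expand_eq_of_forall_dvd {P : MvPolynomial σ R} {p : ℕ}
    (hP : ∀ μ ∈ P.support, ∀ z, p ∣ μ z) : ∃ Q, MvPolynomial.expand p Q = P := by
  refine ⟨∑ μ ∈ P.support,
    MvPolynomial.monomial (μ.mapRange (· / p) (Nat.zero_div p)) (P.coeff μ), ?_⟩
  rw [map_sum]
  conv_rhs => rw [P.as_sum]
  refine Finset.sum_congr rfl fun μ hμ => ?_
  rw [MvPolynomial.expand_monomial]
  exact congrArg (MvPolynomial.monomial · _) (Finsupp.ext fun z => Nat.mul_div_cancel' (hP μ hμ z))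

variable {P : MvPolynomial σ F} (hP : ∀ z, MvPolynomial.pderiv z P = 0)

include hP in
lemma dvd_of_pderiv_eq_zero (p : ℕ) [CharP F p] {μ : σ →₀ ℕ} (hμ : μ ∈ P.support) (z : σ) :
    p ∣ μ z := by
  by_cases h0 : μ z = 0
  · exact h0 ▸ dvd_zero p
  have hcancel : μ - Finsupp.single z 1 + Finsupp.single z 1 = μ :=
    tsub_add_cancel_of_le (Finsupp.single_le_iff.2 (Nat.one_le_iff_ne_zero.2 h0))
  have hcoeff := congrArg (MvPolynomial.coeff (μ - Finsupp.single z 1)) (hP z)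
  rw [MvPolynomial.coeff_pderiv, hcancel, MvPolynomial.coeff_zero] at hcoeff
  have hcast := (mul_eq_zero.1 hcoeff).resolve_left (MvPolynomial.mem_support_iff.1 hμ)
  rw [← CharP.cast_eq_zero_iff F p, ← hcast, Finsupp.tsub_apply, Finsupp.single_eq_same,
    Nat.cast_sub (Nat.one_le_iff_ne_zero.2 h0), Nat.cast_one, sub_add_cancel]

include hP in
lemma exists_pow_eq_of_pderiv_eq_zero (p : ℕ) [Fact p.Prime] [CharP F p] [PerfectRing F p] :
    ∃ Q, Q ^ p = P := by
  obtain ⟨Q, hQ⟩ := exists_expand_eq_of_forall_dvd fun μ hμ => dvd_of_pderiv_eq_zero hP p hμ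
  have hid : (frobenius F p).comp ((frobeniusEquiv F p).symm : F →+* F) = RingHom.id F :=
    RingHom.ext fun x => frobenius_apply_frobeniusEquiv_symm F p x
  refine ⟨MvPolynomial.map (frobeniusEquiv F p).symm Q, ?_⟩
  rw [← MvPolynomial.map_frobenius_expand, MvPolynomial.map_expand, MvPolynomial.map_map, hid,
    MvPolynomial.map_id, hQ]

end PartialDerivatives

/-! ### A chart of the symplectic group -/

section Chart

variable {n A B : Type*} [CommRing A] [CommRing B]

/-- The entries of `M + Mᵀ`, indexed by unordered pairs. -/
def symEntries (M : Matrix n n A) : Sym2 n → A :=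
  Sym2.lift ⟨fun i j => M i j + M j i, fun _ _ => add_comm _ _⟩

@[simp]
lemma symEntries_mk (M : Matrix n n A) (i j : n) : symEntries M s(i, j) = M i j + M j i := rfl

lemma symEntries_map (f : A →+* B) (M : Matrix n n A) (z : Sym2 n) :
    symEntries (M.map f) z = f (symEntries M z) := by
  induction z with
  | _ i j => simp

lemma symEntries_smul (a : A) (M : Matrix n n A) :
    symEntries (a • M) = fun z => a * symEntries M z := by
  ext z
  induction z with
  | _ i j => simp [mul_add]

variable {l R F : Type*} [Fintype l] [DecidableEq l] [CommRing R] [Field F] [Algebra R A]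

/-- The Cayley chart of the symplectic group: `J (1 + g)⁻¹` differs from a symmetric matrix by a
constant, so the entries of its symmetrization are coordinates of `g`, defined where `1 + g` is
invertible. -/
noncomputable def cayleyChart (g : BlockMat l R) : Sym2 (l ⊕ l) → R :=
  symEntries (J l R * (1 + g)⁻¹)

lemma J_mul_inv_one_add_sub_transpose (g : symplecticGroup l R)
    (hg : IsUnit (1 + (g : BlockMat l R)).det) :
    J l R * (1 + (g : BlockMat l R))⁻¹ - (J l R * (1 + (g : BlockMat l R))⁻¹)ᵀ = J l R := by
  have hgJ : (g : BlockMat l R)ᵀ * J l R * g = J l R := SymplecticGroup.mem_iff'.1 g.2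
  have hsum : (1 + (g : BlockMat l R))ᵀ * J l R + J l R * (1 + (g : BlockMat l R)) =
      (1 + (g : BlockMat l R))ᵀ * J l R * (1 + (g : BlockMat l R)) := by
    calc _ = J l R + (g : BlockMat l R)ᵀ * J l R + J l R * g + J l R := by
          rw [transpose_add, transpose_one]
          noncomm_ring
      _ = _ := by
          nth_rw 4 [← hgJ]
          rw [transpose_add, transpose_one]
          noncomm_ring
  set M := 1 + (g : BlockMat l R)
  have hM : M * M⁻¹ = 1 := mul_nonsing_inv M hg
  have hMT : M⁻¹ᵀ * Mᵀ = 1 := by rw [← transpose_mul, hM, transpose_one]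
  calc J l R * M⁻¹ - (J l R * M⁻¹)ᵀ = M⁻¹ᵀ * Mᵀ * J l R * M⁻¹ + M⁻¹ᵀ * J l R * (M * M⁻¹) := by
        rw [hMT, hM, transpose_mul, J_transpose, mul_neg, sub_neg_eq_add, one_mul, mul_one]
    _ = M⁻¹ᵀ * (Mᵀ * J l R + J l R * M) * M⁻¹ := by noncomm_ring
    _ = M⁻¹ᵀ * Mᵀ * J l R * (M * M⁻¹) := by rw [hsum]; noncomm_ring
    _ = J l R := by rw [hMT, hM, one_mul, mul_one]

lemma cayleyChart_injOn (h2 : (2 : F) ≠ 0) :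
    Set.InjOn (fun g : symplecticGroup l F => cayleyChart (g : BlockMat l F))
      {g | (1 + (g : BlockMat l F)).det ≠ 0} := by
  intro g hg g' hg' heq
  have hunit := isUnit_iff_ne_zero.2 hg
  have hunit' := isUnit_iff_ne_zero.2 hg'
  have hJ : J l F * (1 + (g : BlockMat l F))⁻¹ = J l F * (1 + (g' : BlockMat l F))⁻¹ := by
    ext i j
    have hdiff := congrFun₂ ((J_mul_inv_one_add_sub_transpose g hunit).trans
      (J_mul_inv_one_add_sub_transpose g' hunit').symm) i j
    have hsum := congrFun heq s(i, j)
    simp only [cayleyChart, symEntries_mk, Matrix.sub_apply, transpose_apply] at hdiff hsum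
    exact mul_left_cancel₀ h2 (by linear_combination hdiff + hsum)
  have hinv := congrArg (J l F * ·) hJ
  simp only [← mul_assoc, J_squared, neg_mul, one_mul, neg_inj] at hinv
  have hadd := congrArg (·⁻¹) hinv
  simp only [nonsing_inv_nonsing_inv _ hunit, nonsing_inv_nonsing_inv _ hunit'] at hadd
  exact Subtype.ext (add_left_cancel hadd)

/-- The polynomial `P` in the coordinates of the Cayley chart, as a polynomial in the matrix
entries after clearing denominators. The extra factor `det (1 + g)` makes it vanish outside the
domain of the chart. -/
noncomputable def chartPoly (P : MvPolynomial (Sym2 (l ⊕ l)) R) :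
    MvPolynomial ((l ⊕ l) × (l ⊕ l)) R :=
  (1 + mvPolynomialX (l ⊕ l) (l ⊕ l) R).det * homogenizedAeval P
    (symEntries (J l _ * adjugate (1 + mvPolynomialX (l ⊕ l) (l ⊕ l) R)))
    (1 + mvPolynomialX (l ⊕ l) (l ⊕ l) R).det

lemma entriesAeval_chartPoly_eq_det_mul (P : MvPolynomial (Sym2 (l ⊕ l)) R) (M : BlockMat l A) :
    entriesAeval M (chartPoly P) = (1 + M).det *
      homogenizedAeval P (symEntries (J l A * adjugate (1 + M))) (1 + M).det := by
  have hX : (1 + mvPolynomialX (l ⊕ l) (l ⊕ l) R).map (entriesAeval (R := R) M) = 1 + M := by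
    rw [← AlgHom.mapMatrix_apply, map_add, map_one, mvPolynomialX_mapMatrix_aeval R M]
  have hdet : entriesAeval M (1 + mvPolynomialX (l ⊕ l) (l ⊕ l) R).det = (1 + M).det := by
    rw [AlgHom.map_det, AlgHom.mapMatrix_apply, hX]
  have hadj : (J l _ * adjugate (1 + mvPolynomialX (l ⊕ l) (l ⊕ l) R)).map
      (entriesAeval (R := R) M : _ →+* A) = J l A * adjugate (1 + M) := by
    rw [Matrix.map_mul, J_map, ← hX]
    exact congrArg _ (AlgHom.map_adjugate (entriesAeval (R := R) M) _)
  rw [chartPoly, map_mul, map_homogenizedAeval, hdet, ← hadj]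
  congr 2
  ext z
  exact (symEntries_map (entriesAeval (R := R) M).toRingHom _ z).symm

lemma entriesAeval_chartPoly (P : MvPolynomial (Sym2 (l ⊕ l)) R) {M N : BlockMat l A}
    (hN : (1 + M) * N = 1) :
    entriesAeval M (chartPoly P) =
      (1 + M).det ^ (P.totalDegree + 1) * MvPolynomial.aeval (symEntries (J l A * N)) P := by
  have hadj : adjugate (1 + M) = (1 + M).det • N := by
    calc adjugate (1 + M) = adjugate (1 + M) * ((1 + M) * N) := by rw [hN, mul_one]
      _ = (1 + M).det • N := by rw [← mul_assoc, adjugate_mul, smul_mul_assoc, one_mul]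
  rw [entriesAeval_chartPoly_eq_det_mul, hadj, mul_smul_comm, symEntries_smul,
    homogenizedAeval_mul, pow_succ', mul_assoc]

lemma totalDegree_chartPoly_le (P : MvPolynomial (Sym2 (l ⊕ l)) R) :
    (chartPoly P).totalDegree ≤ (P.totalDegree + 1) * Fintype.card (l ⊕ l) := by
  have hX : ∀ i j, ((1 + mvPolynomialX (l ⊕ l) (l ⊕ l) R) i j).totalDegree ≤ 1 :=
    totalDegree_one_add_apply_le fun i j => by
      rw [mvPolynomialX_apply]
      exact (MvPolynomial.totalDegree_monomial_le _ _).trans (by simp)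
  have hdet := totalDegree_det_le hX
  have hJ (i j : l ⊕ l) : (J l (MvPolynomial ((l ⊕ l) × (l ⊕ l)) R) i j).totalDegree ≤ 0 := by
    rw [← J_map MvPolynomial.C]
    simp
  have hadj := totalDegree_mul_apply_le hJ (totalDegree_adjugate_apply_le hX)
  rw [zero_add, mul_one] at hadj
  rw [mul_one] at hdet
  refine (MvPolynomial.totalDegree_mul _ _).trans ?_
  rw [add_mul, one_mul, add_comm]
  refine add_le_add (totalDegree_homogenizedAeval_le P (fun z => ?_) hdet) hdet
  induction z with
  | _ i j => exact (MvPolynomial.totalDegree_add _ _).trans (max_le (hadj i j) (hadj j i))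

end Chart

section ChartTangent

variable {l F : Type*} [Fintype l] [DecidableEq l] [Field F] {h : symplecticGroup l F}

/-- The element `X` of the symplectic Lie algebra for which `h * (1 + ε X)` has Cayley chart
`cayleyChart h + ε * symEntries E`, for a symmetric matrix `E`. -/
noncomputable def chartTangent (h : symplecticGroup l F) (E : BlockMat l F) : BlockMat l F :=
  (h⁻¹ : symplecticGroup l F) * (1 + (h : BlockMat l F)) * (J l F * E * (1 + (h : BlockMat l F)))

open LieAlgebra.Symplectic in
lemma chartTangent_mem_sp {E : BlockMat l F} (hE : E.IsSymm) : chartTangent h E ∈ sp l F := by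
  have hJ : J l F * (h⁻¹ : symplecticGroup l F) = (h : BlockMat l F)ᵀ * J l F := by
    rw [J_mul_symplecticGroup, inv_inv]
  have hprod : J l F * chartTangent h E =
      -((1 + (h : BlockMat l F))ᵀ * E * (1 + (h : BlockMat l F))) := by
    calc J l F * chartTangent h E = J l F * ((h⁻¹ : symplecticGroup l F) * (1 + h)) * J l F * E *
          (1 + (h : BlockMat l F)) := by rw [chartTangent]; noncomm_ring
      _ = (1 + (h : BlockMat l F)ᵀ) * (J l F * J l F) * E * (1 + (h : BlockMat l F)) := by
        rw [mul_add (h⁻¹ : symplecticGroup l F).1, mul_one, symplecticGroup_inv_mul_coe,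
          mul_add (J l F), hJ]
        noncomm_ring
      _ = _ := by
        rw [J_squared, transpose_add, transpose_one]
        noncomm_ring
  rw [mem_sp_iff_isSymm, hprod, IsSymm, transpose_neg, transpose_mul, transpose_mul, hE.eq,
    transpose_transpose, mul_assoc]

lemma one_add_mul_chartTangent_mul (hh : (1 + (h : BlockMat l F)).det ≠ 0) (E : BlockMat l F) :
    (1 + (h : BlockMat l F).map (algebraMap F (DualNumber F)) * (1 + (DualNumber.eps : DualNumber F)
      • (chartTangent h E).map (algebraMap F (DualNumber F)))) *
    ((1 + (h : BlockMat l F))⁻¹.map (algebraMap F (DualNumber F)) - (DualNumber.eps : DualNumber F)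
      • (J l F * E).map (algebraMap F (DualNumber F))) = 1 := by
  set φ := (algebraMap F (DualNumber F)).mapMatrix (m := l ⊕ l)
  set M := 1 + (h : BlockMat l F) with hM
  have hinv : M * M⁻¹ = 1 := mul_nonsing_inv _ (isUnit_iff_ne_zero.2 hh)
  have htangent : (h : BlockMat l F) * chartTangent h E = M * (J l F * E * M) := by
    rw [chartTangent, ← hM, mul_assoc, ← mul_assoc, symplecticGroup_mul_inv_coe, one_mul]
  have hfactor : 1 + φ h * (1 + (DualNumber.eps : DualNumber F) • φ (chartTangent h E)) =
      φ M + (DualNumber.eps : DualNumber F) • φ (M * (J l F * E * M)) := by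
    rw [mul_add, mul_one, mul_smul_comm, ← map_mul, htangent, hM, map_add φ 1, map_one, add_assoc]
  have hcancel : M * (J l F * E * M) * M⁻¹ = M * (J l F * E) := by
    rw [mul_assoc, mul_assoc (J l F * E), hinv, mul_one]
  change (1 + φ h * (1 + DualNumber.eps • φ (chartTangent h E))) *
    (φ M⁻¹ - DualNumber.eps • φ (J l F * E)) = 1
  rw [hfactor, mul_sub, add_mul (φ M), add_mul (φ M), smul_mul_assoc, mul_smul_comm,
    smul_mul_smul_comm, DualNumber.eps_mul_eps, zero_smul, add_zero, ← map_mul, ← map_mul,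
    ← map_mul, hinv, hcancel, map_one, add_sub_cancel_right]

variable (h) in
lemma symEntries_J_mul_sub_eps_smul (E : BlockMat l F) :
    symEntries (J l (DualNumber F) * ((1 + (h : BlockMat l F))⁻¹.map (algebraMap F (DualNumber F)) -
      (DualNumber.eps : DualNumber F) • (J l F * E).map (algebraMap F (DualNumber F)))) =
    fun z => TrivSqZeroExt.inl (cayleyChart (h : BlockMat l F) z) +
      TrivSqZeroExt.inr (symEntries E z) := by
  have hJ : J l (DualNumber F) * ((1 + (h : BlockMat l F))⁻¹.map (algebraMap F (DualNumber F)) -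
      (DualNumber.eps : DualNumber F) • (J l F * E).map (algebraMap F (DualNumber F))) =
      (J l F * (1 + (h : BlockMat l F))⁻¹).map (algebraMap F (DualNumber F)) +
        (DualNumber.eps : DualNumber F) • E.map (algebraMap F (DualNumber F)) := by
    have hJE : J l F * (J l F * E) = -E := by rw [← mul_assoc, J_squared, neg_one_mul]
    rw [← J_map (algebraMap F (DualNumber F)), mul_sub, mul_smul_comm, ← Matrix.map_mul,
      ← Matrix.map_mul, hJE, Matrix.map_neg _ (map_neg _), smul_neg, sub_neg_eq_add]
  rw [hJ]
  ext z
  · induction z with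
    | _ i j => simp [cayleyChart, TrivSqZeroExt.algebraMap_eq_inl, -Matrix.map_mul]
  · induction z with
    | _ i j => simp [TrivSqZeroExt.algebraMap_eq_inl, -Matrix.map_mul]

omit [Fintype l] in
lemma symEntries_of_ite_eq (z : Sym2 l) :
    symEntries (of fun i j => if s(i, j) = z then (1 : F) else 0) =
      fun w => if w = z then 2 else 0 := by
  ext w
  induction w with
  | _ i j =>
    rw [symEntries_mk, of_apply, of_apply, Sym2.eq_swap (a := j)]
    split_ifs <;> norm_num

end ChartTangent

section VanishingOnSubgroup

variable {l F : Type*} [Fintype l] [DecidableEq l] [Field F]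
  {H : Subgroup (symplecticGroup l F)} {P : MvPolynomial (Sym2 (l ⊕ l)) F}

lemma entriesAeval_chartPoly_eq_zero (hP : ∀ g ∈ H, (1 + (g : BlockMat l F)).det ≠ 0 →
      MvPolynomial.eval (cayleyChart (g : BlockMat l F)) P = 0)
    {g : symplecticGroup l F} (hg : g ∈ H) :
    entriesAeval (g : BlockMat l F) (chartPoly P) = 0 := by
  by_cases hdet : (1 + (g : BlockMat l F)).det = 0
  · rw [entriesAeval_chartPoly_eq_det_mul, hdet, zero_mul]
  · rw [entriesAeval_chartPoly P (mul_nonsing_inv _ (isUnit_iff_ne_zero.2 hdet))]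
    exact mul_eq_zero_of_right _ (hP g hg hdet)

variable [Fintype F] (h2 : (2 : F) ≠ 0)
  (hspan : ∀ X ∈ LieAlgebra.Symplectic.sp l F, X ∈ Submodule.span F (cayleyDirections H))

include h2 hspan

lemma eval_pderiv_cayleyChart_eq_zero
    (hP : ∀ g ∈ H, (1 + (g : BlockMat l F)).det ≠ 0 →
      MvPolynomial.eval (cayleyChart (g : BlockMat l F)) P = 0)
    (hdeg : ((P.totalDegree + 1) * Fintype.card (l ⊕ l) + 1) *
      (2 * (Fintype.card (l ⊕ l) + 1)) < Fintype.card F)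
    (z : Sym2 (l ⊕ l)) {h : symplecticGroup l F} (hh : h ∈ H)
    (hdet : (1 + (h : BlockMat l F)).det ≠ 0) :
    MvPolynomial.eval (cayleyChart (h : BlockMat l F)) (MvPolynomial.pderiv z P) = 0 := by
  have hE : (of fun i j => if s(i, j) = z then (1 : F) else 0 : BlockMat l F).IsSymm := by
    ext i j
    rw [transpose_apply, of_apply, of_apply, Sym2.eq_swap]
  have hdeg' := (Nat.mul_le_mul_right (2 * (Fintype.card (l ⊕ l) + 1))
    (Nat.succ_le_succ (totalDegree_chartPoly_le P))).trans_lt hdeg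
  have hzero := entriesAeval_mul_one_add_eps_smul_eq_zero
    (fun g hg => entriesAeval_chartPoly_eq_zero hP hg) hdeg' h2 hh
    (hspan _ (chartTangent_mem_sp (h := h) hE))
  have hinv := one_add_mul_chartTangent_mul hdet
    (of fun i j => if s(i, j) = z then (1 : F) else 0)
  have hdetinv := congrArg det hinv
  rw [det_mul, det_one] at hdetinv
  rw [entriesAeval_chartPoly P hinv, symEntries_J_mul_sub_eps_smul, symEntries_of_ite_eq] at hzero
  have hsnd := congrArg TrivSqZeroExt.snd 
    (((IsUnit.of_mul_eq_one _ hdetinv).pow _).mul_right_eq_zero.1 hzero)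
  rw [snd_aeval_dualNumber] at hsnd
  simpa only [TrivSqZeroExt.snd_add, TrivSqZeroExt.snd_inl, TrivSqZeroExt.snd_inr, zero_add,
    TrivSqZeroExt.fst_add, TrivSqZeroExt.fst_inl, TrivSqZeroExt.fst_inr, add_zero, ite_mul,
    zero_mul, Finset.sum_ite_eq', Finset.mem_univ, if_true, TrivSqZeroExt.snd_zero, mul_eq_zero, h2,
    false_or] using hsnd

/-- By induction on the degree, the partial derivatives of `P` vanish; then `P = Q ^ p` for the
characteristic `p`, and `Q` vanishes on `H` and has smaller degree. -/
lemma eq_zero_of_forall_eval_cayleyChart_eq_zero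
    (hP : ∀ g ∈ H, (1 + (g : BlockMat l F)).det ≠ 0 →
      MvPolynomial.eval (cayleyChart (g : BlockMat l F)) P = 0)
    (hdeg : ((P.totalDegree + 1) * Fintype.card (l ⊕ l) + 1) *
      (2 * (Fintype.card (l ⊕ l) + 1)) < Fintype.card F) :
    P = 0 := by
  induction hd : P.totalDegree using Nat.strong_induction_on generalizing P with
  | _ d ih =>
  have ih' {Q : MvPolynomial (Sym2 (l ⊕ l)) F} (hlt : Q.totalDegree < P.totalDegree)
      (hQ : ∀ g ∈ H, (1 + (g : BlockMat l F)).det ≠ 0 →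
        MvPolynomial.eval (cayleyChart (g : BlockMat l F)) Q = 0) : Q = 0 := by
    refine ih _ (hd ▸ hlt) hQ (lt_of_le_of_lt ?_ hdeg) rfl
    gcongr
  rcases Nat.eq_zero_or_pos P.totalDegree with h0 | h0
  · have hdet : (1 + ((1 : symplecticGroup l F) : BlockMat l F)).det ≠ 0 := by
      rw [Submonoid.coe_one, ← two_smul F, det_smul, det_one, mul_one]
      exact pow_ne_zero _ h2
    have hone := hP 1 (one_mem _) hdet
    rw [MvPolynomial.totalDegree_eq_zero_iff_eq_C.1 h0, MvPolynomial.eval_C] at hone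
    rw [MvPolynomial.totalDegree_eq_zero_iff_eq_C.1 h0, hone, map_zero]
  · obtain ⟨p, _⟩ := CharP.exists F
    have hp : Fact p.Prime := ⟨CharP.char_is_prime F p⟩
    have hpderiv (z) : MvPolynomial.pderiv z P = 0 := ih' (totalDegree_pderiv_lt h0 z) fun g hg =>
      eval_pderiv_cayleyChart_eq_zero h2 hspan hP hdeg z hg
    obtain ⟨Q, rfl⟩ := exists_pow_eq_of_pderiv_eq_zero hpderiv p
    have hQ : Q = 0 := by
      refine ih' ?_ fun g hg hdet => ?_
      · rw [totalDegree_pow_of_isDomain] at h0 ⊢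
        exact lt_mul_of_one_lt_left (Nat.pos_of_ne_zero (right_ne_zero_of_mul h0.ne')) hp.out.one_lt
      · have hpow := hP g hg hdet
        rw [map_pow] at hpow
        exact eq_zero_of_pow_eq_zero hpow
    rw [hQ, zero_pow hp.out.ne_zero]

end VanishingOnSubgroup

/-! ### Bounding the index -/

section Counting

variable {ι σ F : Type*} [Fintype ι] [Fintype σ] [Field F]

/-- The monomials with exponents less than `k` are linearly independent as functions on the
points `t i`. -/
lemma pow_card_le_card_of_forall_eval_eq_zero (t : ι → σ → F) {k : ℕ}
    (ht : ∀ P : MvPolynomial σ F, P.totalDegree ≤ Fintype.card σ * k →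
      (∀ i, MvPolynomial.eval (t i) P = 0) → P = 0) :
    k ^ Fintype.card σ ≤ Fintype.card ι := by
  classical
  let μ (a : σ → Fin k) : σ →₀ ℕ := Finsupp.equivFunOnFinite.symm fun i => a i
  have hμ : Function.Injective μ := fun a b hab => by
    ext i
    exact DFunLike.congr_fun hab i
  have hdeg {P}
      (hP : P ∈ Submodule.span F (Set.range fun a => MvPolynomial.monomial (μ a) (1 : F))) :
      P.totalDegree ≤ Fintype.card σ * k := by
    rw [← MvPolynomial.mem_restrictTotalDegree]
    refine Submodule.span_le.2 ?_ hP
    rintro _ ⟨a, rfl⟩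
    rw [SetLike.mem_coe, MvPolynomial.mem_restrictTotalDegree]
    refine (MvPolynomial.totalDegree_monomial_le _ _).trans ?_
    rw [Finsupp.sum_fintype _ _ fun _ => rfl]
    exact (Finset.sum_le_card_nsmul _ _ k fun i _ => (a i).2.le).trans_eq (by simp)
  let evals : MvPolynomial σ F →ₗ[F] ι → F :=
    LinearMap.pi fun i => (MvPolynomial.aeval (t i)).toLinearMap
  have hind : LinearIndependent F fun a => MvPolynomial.monomial (μ a) (1 : F) := by
    have hcomp := (MvPolynomial.basisMonomials σ F).linearIndependent.comp μ hμ
    rwa [MvPolynomial.coe_basisMonomials] at hcomp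
  have hevals := hind.map (f := evals) (Submodule.disjoint_def.2 fun P hP hker =>
    ht P (hdeg hP) fun i => congrFun (LinearMap.mem_ker.1 hker) i)
  simpa using hevals.fintype_card_le_finrank

end Counting

section IndexBound

universe u

lemma card_det_one_add_ne_zero_le {l F : Type*} [Fintype l] [DecidableEq l] [Field F] [Fintype F]
    (h2 : (2 : F) ≠ 0) :
    Nat.card {g : symplecticGroup l F // (1 + (g : BlockMat l F)).det ≠ 0} ≤
      Fintype.card F ^ Fintype.card (Sym2 (l ⊕ l)) := by
  have hcard := Nat.card_le_card_of_injective
    (fun g : {g : symplecticGroup l F // (1 + (g : BlockMat l F)).det ≠ 0} =>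
      cayleyChart (g : BlockMat l F)) fun g g' h => Subtype.ext (cayleyChart_injOn h2 g.2 g'.2 h)
  simpa using hcard

lemma exists_card_symplecticGroup_le (l : Type*) [Fintype l] [DecidableEq l] :
    ∃ q₀ : ℕ, ∀ (F : Type u) [Field F] [Fintype F], (2 : F) ≠ 0 → q₀ ≤ Fintype.card F →
      Nat.card (symplecticGroup l F) ≤ 2 * Fintype.card F ^ Fintype.card (Sym2 (l ⊕ l)) := by
  obtain ⟨D, hD⟩ := exists_card_mul_card_det_one_add_eq_zero_le l
  refine ⟨2 * D + 1, fun F _ _ h2 hq => ?_⟩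
  have hsum : Nat.card {g : symplecticGroup l F // (1 + (g : BlockMat l F)).det = 0} +
      Nat.card {g : symplecticGroup l F // (1 + (g : BlockMat l F)).det ≠ 0} =
      Nat.card (symplecticGroup l F) := by
    classical
    rw [← Nat.card_sum]
    exact Nat.card_congr (Equiv.sumCompl _)
  have hgood := card_det_one_add_ne_zero_le (l := l) h2
  have hbad := (Nat.mul_le_mul_right _ hq).trans (hD F h2)
  by_contra! hlt
  nlinarith

lemma pow_le_card_of_sp_le_span_cayleyDirections {l F : Type*} [Fintype l] [DecidableEq l] [Field F]
    [Fintype F] (h2 : (2 : F) ≠ 0) {H : Subgroup (symplecticGroup l F)}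
    (hspan : ∀ X ∈ LieAlgebra.Symplectic.sp l F, X ∈ Submodule.span F (cayleyDirections H)) {k : ℕ}
    (hk : ((Fintype.card (Sym2 (l ⊕ l)) * k + 1) * Fintype.card (l ⊕ l) + 1) *
      (2 * (Fintype.card (l ⊕ l) + 1)) < Fintype.card F) :
    k ^ Fintype.card (Sym2 (l ⊕ l)) ≤ Nat.card H := by
  have := Fintype.ofFinite {g : H // (1 + ((g : symplecticGroup l F) : BlockMat l F)).det ≠ 0}
  refine (pow_card_le_card_of_forall_eval_eq_zero
    (fun g : {g : H // (1 + ((g : symplecticGroup l F) : BlockMat l F)).det ≠ 0} =>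
      cayleyChart (g : BlockMat l F)) fun P hdeg hP => ?_).trans ?_
  · refine eq_zero_of_forall_eval_cayleyChart_eq_zero h2 hspan
      (fun g hg hdet => hP ⟨⟨g, hg⟩, hdet⟩) (lt_of_le_of_lt ?_ hk)
    gcongr
  · rw [← Nat.card_eq_fintype_card]
    exact Nat.card_le_card_of_injective _ Subtype.val_injective

/-- A polynomial of degree less than `q / c` in the Cayley chart which vanishes on `H` is zero;
hence `|H|` is at least a constant multiple of `q ^ dim`, and the index of `H` is bounded. -/
theorem exists_eq_top_of_sp_le_span_cayleyDirections (l : Type*) [Fintype l] [DecidableEq l] :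
    ∃ q₀ : ℕ, ∀ (F : Type u) [Field F] [Fintype F], (2 : F) ≠ 0 → q₀ ≤ Fintype.card F →
      ∀ H : Subgroup (symplecticGroup l F),
        (∀ X ∈ LieAlgebra.Symplectic.sp l F, X ∈ Submodule.span F (cayleyDirections H)) →
        H = ⊤ := by
  obtain ⟨q₁, hcard⟩ := exists_card_symplecticGroup_le l
  set N := Fintype.card (Sym2 (l ⊕ l))
  set n := Fintype.card (l ⊕ l)
  set c := ((N + 1) * n + 1) * (2 * (n + 1)) + 1 with hc
  set i := 2 * (2 * c) ^ N
  refine ⟨q₁ + c + (2 * i.factorial + 2), fun F _ _ h2 hq H hspan => ?_⟩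
  refine symplecticGroup_eq_top_of_index_le (n := i) ?_ (by lia)
  set q := Fintype.card F
  set k := q / c
  have hkc : k * c ≤ q := Nat.div_mul_le_self _ _
  have hk_pos : 1 ≤ k := (Nat.le_div_iff_mul_le (by lia)).2 (by lia)
  have hqk : q ≤ 2 * c * k := by
    have hlt : q < c * (k + 1) := Nat.lt_mul_div_succ q (by lia)
    nlinarith
  have hdeg : ((N * k + 1) * n + 1) * (2 * (n + 1)) < q := by
    have hle : (N * k + 1) * n + 1 ≤ ((N + 1) * n + 1) * k := by nlinarith [Nat.zero_le n]
    calc _ ≤ ((N + 1) * n + 1) * k * (2 * (n + 1)) := Nat.mul_le_mul_right _ hle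
      _ < k * c := by
        rw [hc]
        linarith
      _ ≤ q := hkc
  have hlow := pow_le_card_of_sp_le_span_cayleyDirections h2 hspan hdeg
  refine Nat.le_of_mul_le_mul_left (c := Nat.card H) ?_ Nat.card_pos
  calc Nat.card H * H.index = Nat.card (symplecticGroup l F) := H.card_mul_index
    _ ≤ 2 * q ^ N := hcard F h2 (by lia)
    _ ≤ 2 * (2 * c * k) ^ N := by gcongr
    _ = k ^ N * i := by rw [mul_pow]; ring
    _ ≤ Nat.card H * i := Nat.mul_le_mul_right _ hlow

end IndexBound

section SupportSubalgebra

variable {ι : Type*} [Fintype ι] [DecidableEq ι]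

/-- The subalgebra of the matrices supported on the pairs in a preorder relation `r`. -/
def supportSubalgebra (K : Type*) [CommSemiring K] (r : ι → ι → Prop) (hrefl : ∀ a, r a a)
    (htrans : ∀ a b c, r a b → r b c → r a c) : Subalgebra K (Matrix ι ι K) where
  carrier := {M | ∀ a b, M a b ≠ 0 → r a b}
  mul_mem' {M N} hM hN a b hab := by
    obtain ⟨k, -, hk⟩ := Finset.exists_ne_zero_of_sum_ne_zero (mul_apply (M := M) ▸ hab)
    exact htrans _ _ _ (hM _ _ (left_ne_zero_of_mul hk)) (hN _ _ (right_ne_zero_of_mul hk))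
  add_mem' {M N} hM hN a b hab := by
    by_cases h : M a b = 0
    · exact hN _ _ (by simpa [h] using hab)
    · exact hM _ _ h
  algebraMap_mem' r a b hab := by
    rw [algebraMap_matrix_apply, ne_eq, ite_eq_right_iff, not_forall] at hab
    exact hab.1 ▸ hrefl a

end SupportSubalgebra

/-! ### Lie algebras of matrices containing the Cartan subalgebra of the symplectic algebra -/

section RootElements

variable {ι K : Type*} [Field K]

/-- The functions `w` such that Hadamard multiplication by `w` maps the space of matrices `W` to
itself. -/
def hadamardStabilizer (W : Submodule K (Matrix ι ι K)) : Subalgebra K (ι → ι → K) where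
  carrier := {w | ∀ Y ∈ W, of w ⊙ Y ∈ W}
  mul_mem' {v w} hv hw Y hY := by
    convert hv _ (hw Y hY) using 1
    ext k l
    simp [mul_assoc]
  add_mem' {v w} hv hw Y hY := by
    convert W.add_mem (hv Y hY) (hw Y hY) using 1
    ext k l
    simp [add_mul]
  algebraMap_mem' r Y hY := by
    exact W.smul_mem r hY

lemma sub_mem_hadamardStabilizer [Fintype ι] [DecidableEq ι] {W : Submodule K (Matrix ι ι K)}
    {d : ι → K} (hd : ∀ Y ∈ W, diagonal d * Y - Y * diagonal d ∈ W) :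
    (fun k l => d k - d l) ∈ hadamardStabilizer W := by
  intro Y hY
  convert hd Y hY using 1
  ext k l
  simp only [hadamard_apply, of_apply, sub_mul, Matrix.sub_apply, diagonal_mul, mul_diagonal,
    mul_comm (Y k l)]

/-- The matrices which are skew for the bilinear form whose Gram matrix has entry `c a` in position
`(a, bar a)`, and zeros elsewhere; here `bar` is an involution and `c (bar a) = - c a`. -/
def skewMatrices (bar : ι → ι) (c : ι → K) : Submodule K (Matrix ι ι K) where
  carrier := {X | ∀ a b, c (bar a) * X a b = c b * X (bar b) (bar a)}
  add_mem' {X Y} hX hY a b := by simp only [Matrix.add_apply, mul_add, hX a b, hY a b]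
  zero_mem' a b := by simp
  smul_mem' r X hX a b := by
    simp only [Matrix.smul_apply, smul_eq_mul, mul_left_comm _ r, hX a b]

variable [DecidableEq ι]

/-- The diagonal of the coroot of index `a` of the symplectic algebra, when `bar` pairs the
vectors of a Darboux basis. -/
def coroot (K : Type*) [Field K] (bar : ι → ι) (a : ι) : ι → K :=
  Pi.single a 1 - Pi.single (bar a) 1

/-- The weight by which the coroot of index `a` acts on the matrix units. -/
def corootWeight (K : Type*) [Field K] (bar : ι → ι) (a k l : ι) : K :=
  coroot K bar a k - coroot K bar a l

/-- The element of root type `(a, b)` of the Lie algebra `skewMatrices bar c`. -/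
def rootMatrix (bar : ι → ι) (c : ι → K) (a b : ι) : Matrix ι ι K :=
  single a b 1 + single (bar b) (bar a) (c (bar a) / c b)

lemma single_mul_single_apply [Fintype ι] (a b a' b' x z : ι) (r s : K) :
    (single a b r * single a' b' s) x z = if b = a' ∧ a = x ∧ b' = z then r * s else 0 := by
  by_cases h : b = a'
  · subst h
    simp [single_apply]
  · simp [single_mul_single_of_ne _ _ _ _ h, h]

variable {bar : ι → ι} (hbb : Function.Involutive bar) (hb : ∀ a, bar a ≠ a)

lemma coroot_eq_zero {a i : ι} (hi : i ≠ a) (hi' : i ≠ bar a) : coroot K bar a i = 0 := by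
  simp [coroot, hi, hi']

include hbb in
lemma coroot_bar (a i : ι) : coroot K bar a (bar i) = -coroot K bar a i := by
  simp only [coroot, Pi.sub_apply, Pi.single_apply, hbb.eq_iff, hbb a]
  ring

include hbb

lemma prod_one_sub_corootWeight_sq_eq_one [Fintype ι] {a k l : ι} (hk : k = a ∨ k = bar a)
    (hl : l = a ∨ l = bar a) :
    ∏ e ∈ {e | e ≠ a ∧ e ≠ bar a}, (1 - corootWeight K bar e k l ^ 2) = 1 := by
  have coroot_eq {e i : ι} (he : e ≠ a ∧ e ≠ bar a) (hi : i = a ∨ i = bar a) :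
      coroot K bar e i = 0 := by
    rcases hi with rfl | rfl
    · exact coroot_eq_zero he.1.symm fun h => he.2 (by rw [h, hbb])
    · exact coroot_eq_zero he.2.symm (hbb.injective.ne he.1.symm)
  refine Finset.prod_eq_one fun e he => ?_
  have he := (Finset.mem_filter.1 he).2
  rw [corootWeight, coroot_eq he hk, coroot_eq he hl]
  simp

lemma rootMatrix_mul_rootMatrix_apply [Fintype ι] {c : ι → K} (hc : ∀ i, c i ≠ 0) {x y z : ι}
    (hxz : x ≠ z) :
    (rootMatrix bar c x y * rootMatrix bar c y z) x z =
      1 + (if y = bar z then 1 else 0) + (if y = bar x then 1 else 0) := by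
  simp only [rootMatrix, mul_add, add_mul, Matrix.add_apply, single_mul_single_apply,
    hbb.injective.eq_iff, hxz, hbb.eq_iff, false_and, if_false, and_self, if_true, mul_one,
    one_mul, true_and, and_true]
  have hcoeff_left : (if y = bar z then c (bar y) / c z else 0) = if y = bar z then 1 else 0 :=
    if_ctx_congr Iff.rfl (fun h => by rw [h, hbb, div_self (hc z)]) fun _ => rfl
  have hcoeff_right : (if x = bar y ∧ y = bar x then c (bar x) / c y else 0) =
      if y = bar x then 1 else 0 :=
    if_ctx_congr ⟨And.right, fun h => ⟨by rw [h, hbb], h⟩⟩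
      (fun h => by rw [h, div_self (hc _)]) fun _ => rfl
  rw [hcoeff_left, hcoeff_right, add_zero, add_right_comm]

lemma rootMatrix_mul_rootMatrix_apply_swap [Fintype ι] {c : ι → K} (hc : ∀ i, c i ≠ 0)
    (hcbar : ∀ i, c (bar i) = -c i) {x y z : ι} (hxy : x ≠ y) (hyz : y ≠ z) :
    (rootMatrix bar c y z * rootMatrix bar c x y) x z = if z = bar x then -1 else 0 := by
  simp only [rootMatrix, mul_add, add_mul, Matrix.add_apply, single_mul_single_apply,
    hxy.symm, hyz, false_and, and_false, if_false, zero_add, add_zero]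
  refine if_ctx_congr ⟨fun h => h.2.2.symm, fun h => ⟨trivial, by rw [h, hbb], h.symm⟩⟩
    (fun h => ?_) fun _ => rfl
  have hy := hc y
  have hx := hc (bar x)
  rw [hcbar y, h]
  field_simp

lemma lie_rootMatrix_apply_ne_zero [Fintype ι] (h2 : (2 : K) ≠ 0) {c : ι → K} (hc : ∀ i, c i ≠ 0)
    (hcbar : ∀ i, c (bar i) = -c i) {x y z : ι} (hxy : x ≠ y) (hyz : y ≠ z) (hxz : x ≠ z) :
    (rootMatrix bar c x y * rootMatrix bar c y z - rootMatrix bar c y z * rootMatrix bar c x y)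
      x z ≠ 0 := by
  rw [Matrix.sub_apply, rootMatrix_mul_rootMatrix_apply hbb hc hxz,
    rootMatrix_mul_rootMatrix_apply_swap hbb hc hcbar hxy hyz]
  have hone : (1 : K) + 1 ≠ 0 := by rwa [one_add_one_eq_two]
  by_cases hz : z = bar x
  · have hyz' : y ≠ bar z := by rw [hz, hbb]; exact hxy.symm
    have hyx : y ≠ bar x := hz ▸ hyz
    rw [if_neg hyz', if_neg hyx, if_pos hz, add_zero, add_zero, sub_neg_eq_add]
    exact hone
  · rw [if_neg hz, sub_zero]
    by_cases hyz' : y = bar z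
    · have hyx : y ≠ bar x := hyz' ▸ hbb.injective.ne hxz.symm
      rwa [if_pos hyz', if_neg hyx, add_zero]
    · rw [if_neg hyz', add_zero]
      by_cases hyx : y = bar x
      · rwa [if_pos hyx]
      · rw [if_neg hyx, add_zero]
        exact one_ne_zero

include hb

/-- Only for the root `(a, b)` and its mirror image are the weights of the coroots of `a` and `b`
equal to `1` and `-1`. -/
lemma corootWeight_mul_eq_of_bar_ne {a b : ι} (hab : a ≠ b) (hab' : bar a ≠ b) (k l : ι) :
    corootWeight K bar a k l * corootWeight K bar b k l *
      ((corootWeight K bar a k l + 1) * (corootWeight K bar b k l - 1)) =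
    4 * (single a b (1 : K) k l + single (bar b) (bar a) (1 : K) k l) := by
  have hab'' : a ≠ bar b := fun h => hab' (by rw [h, hbb])
  have hbab : bar a ≠ bar b := hbb.injective.ne hab
  have ha := hb a
  have hb := hb b
  have cases_index (k : ι) : k = a ∨ k = bar a ∨ k = b ∨ k = bar b ∨
      (k ≠ a ∧ k ≠ bar a ∧ k ≠ b ∧ k ≠ bar b) := by tauto
  simp only [corootWeight, coroot, Pi.sub_apply, Pi.single_apply, single_apply, @eq_comm _ _ k,
    @eq_comm _ _ l]
  rcases cases_index k with rfl | rfl | rfl | rfl | ⟨k1, k2, k3, k4⟩ <;>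
    rcases cases_index l with rfl | rfl | rfl | rfl | ⟨l1, l2, l3, l4⟩ <;>
    simp [*, hab.symm, hab'.symm, hab''.symm, hbab.symm, ha.symm, hb.symm] <;> norm_num

variable [Fintype ι]

lemma prod_one_sub_corootWeight_sq_eq_zero {a k l : ι} (hk : k ≠ a) (hk' : k ≠ bar a)
    (hl : l = a ∨ l = bar a) :
    ∏ e ∈ {e | e ≠ a ∧ e ≠ bar a}, (1 - corootWeight K bar e k l ^ 2) = 0 := by
  have hcoroot : coroot K bar k l = 0 := by
    rcases hl with rfl | rfl
    · exact coroot_eq_zero hk.symm fun h => hk' (by rw [h, hbb])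
    · exact coroot_eq_zero hk'.symm (hbb.injective.ne hk.symm)
  refine Finset.prod_eq_zero (i := k) (by simp [hk, hk']) ?_
  rw [corootWeight, hcoroot]
  simp [coroot, (hb k).symm]

lemma prod_one_sub_corootWeight_sq_mul_eq (a k l : ι) :
    (∏ e ∈ {e | e ≠ a ∧ e ≠ bar a}, (1 - corootWeight K bar e k l ^ 2)) *
      (corootWeight K bar a k l * (corootWeight K bar a k l + 2)) =
    4 * (single a (bar a) (1 : K) k l + single (bar (bar a)) (bar a) (1 : K) k l) := by
  have ha := hb a
  rw [hbb a]
  by_cases hk : k = a ∨ k = bar a <;> by_cases hl : l = a ∨ l = bar a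
  · rw [prod_one_sub_corootWeight_sq_eq_one hbb hk hl, one_mul]
    rcases hk with rfl | rfl <;> rcases hl with rfl | rfl <;>
      simp [corootWeight, coroot, ha, ha.symm] <;> norm_num
  · push Not at hl
    have hsymm (e : ι) : corootWeight K bar e k l ^ 2 = corootWeight K bar e l k ^ 2 := by
      simp only [corootWeight]; ring
    simp only [hsymm]
    rw [prod_one_sub_corootWeight_sq_eq_zero hbb hb hl.1 hl.2 hk]
    simp [hl.2.symm]
  · push Not at hk
    rw [prod_one_sub_corootWeight_sq_eq_zero hbb hb hk.1 hk.2 hl]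
    simp [hk.1.symm]
  · push Not at hk hl
    simp [corootWeight, coroot_eq_zero hk.1 hk.2, coroot_eq_zero hl.1 hl.2, hk.1.symm]

variable {W : Submodule K (Matrix ι ι K)}
  (hdiag : ∀ d : ι → K, (∀ i, d (bar i) = -d i) → diagonal d ∈ W)
  (hbr : ∀ X ∈ W, ∀ Y ∈ W, X * Y - Y * X ∈ W)

include hdiag hbr

lemma four_smul_single_add_single_mem_hadamardStabilizer {a b : ι} (hab : a ≠ b) :
    (4 : K) • (fun k l => single a b (1 : K) k l + single (bar b) (bar a) (1 : K) k l) ∈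
      hadamardStabilizer W := by
  have hweight (e : ι) : corootWeight K bar e ∈ hadamardStabilizer W :=
    sub_mem_hadamardStabilizer fun Y hY => hbr _ (hdiag _ (coroot_bar hbb e)) Y hY
  have hconst (r : K) : (fun _ _ => r) ∈ hadamardStabilizer W :=
    (hadamardStabilizer W).algebraMap_mem r
  by_cases hab' : bar a = b
  · subst hab'
    convert mul_mem (prod_mem fun e (_ : e ∈ ({e | e ≠ a ∧ e ≠ bar a} : Finset ι)) =>
        sub_mem (one_mem _) (pow_mem (hweight e) 2))
      (mul_mem (hweight a) (add_mem (hweight a) (hconst 2))) using 1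
    ext k l
    simpa using (prod_one_sub_corootWeight_sq_mul_eq hbb hb a k l).symm
  · convert mul_mem (mul_mem (hweight a) (hweight b))
      (mul_mem (add_mem (hweight a) (hconst 1)) (sub_mem (hweight b) (hconst 1))) using 1
    ext k l
    exact (corootWeight_mul_eq_of_bar_ne hbb hb hab hab' k l).symm

lemma rootMatrix_mem_of_apply_ne_zero (h2 : (2 : K) ≠ 0) {c : ι → K} (hc : ∀ i, c i ≠ 0)
    (hW : W ≤ skewMatrices bar c) {Y : Matrix ι ι K} (hY : Y ∈ W) {a b : ι} (hab : a ≠ b)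
    (hYab : Y a b ≠ 0) : rootMatrix bar c a b ∈ W := by
  have h4 : (4 : K) ≠ 0 := by
    rw [show (4 : K) = 2 ^ 2 by norm_num]
    exact pow_ne_zero 2 h2
  have hprojection :=
    four_smul_single_add_single_mem_hadamardStabilizer hbb hb hdiag hbr hab Y hY
  convert W.smul_mem (4 * Y a b)⁻¹ hprojection using 1
  have hmirror : Y (bar b) (bar a) = c (bar a) / c b * Y a b := by
    rw [div_mul_eq_mul_div, hW hY a b, mul_div_cancel_left₀ _ (hc b)]
  ext k l
  simp only [rootMatrix, single_apply, Matrix.add_apply, Matrix.smul_apply, hadamard_apply,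
    of_apply, Pi.smul_apply, smul_eq_mul, add_mul, mul_add, ite_mul, mul_ite, mul_zero, zero_mul]
  congr 1 <;> refine if_ctx_congr Iff.rfl (fun h => ?_) fun _ => rfl
  · rw [← h.1, ← h.2]
    field_simp
  · rw [← h.1, ← h.2, hmirror]
    field_simp

/-- The pairs `(a, b)` supporting an element of `W` form a preorder, because the root matrices in
`W` can be bracketed; the associative algebra generated by `W` is therefore only full if every root
matrix lies in `W`. -/
lemma rootMatrix_mem_of_adjoin_eq_top (h2 : (2 : K) ≠ 0) {c : ι → K} (hc : ∀ i, c i ≠ 0)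
    (hcbar : ∀ i, c (bar i) = -c i) (hW : W ≤ skewMatrices bar c)
    (hadjoin : Algebra.adjoin K (W : Set (Matrix ι ι K)) = ⊤) {a b : ι} (hab : a ≠ b) :
    rootMatrix bar c a b ∈ W := by
  have hroot {Y : Matrix ι ι K} (hY : Y ∈ W) {a b : ι} (hab : a ≠ b) (hYab : Y a b ≠ 0) :=
    rootMatrix_mem_of_apply_ne_zero hbb hb hdiag hbr h2 hc hW hY hab hYab
  let linked (a b : ι) : Prop := a = b ∨ ∃ Y ∈ W, Y a b ≠ 0
  have linked_trans (x y z : ι) (hxy : linked x y) (hyz : linked y z) : linked x z := by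
    rcases eq_or_ne x y with rfl | hne
    · exact hyz
    rcases eq_or_ne y z with rfl | hne'
    · exact hxy
    rcases eq_or_ne x z with rfl | hne''
    · exact Or.inl rfl
    obtain ⟨Y, hY, hYxy⟩ := hxy.resolve_left hne
    obtain ⟨Z, hZ, hZyz⟩ := hyz.resolve_left hne'
    exact Or.inr ⟨_, hbr _ (hroot hY hne hYxy) _ (hroot hZ hne' hZyz),
      lie_rootMatrix_apply_ne_zero hbb h2 hc hcbar hne hne' hne''⟩
  have hle : Algebra.adjoin K (W : Set (Matrix ι ι K)) ≤
      supportSubalgebra K linked (fun a => Or.inl rfl) linked_trans :=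
    Algebra.adjoin_le fun Y hY a b hYab => Or.inr ⟨Y, hY, hYab⟩
  obtain ⟨Y, hY, hYab⟩ := (hle (hadjoin ▸ Algebra.mem_top : single a b (1 : K) ∈ _) a b
    (by simp)).resolve_left hab
  exact hroot hY hab hYab

theorem skewMatrices_le_of_adjoin_eq_top (h2 : (2 : K) ≠ 0) {c : ι → K} (hc : ∀ i, c i ≠ 0)
    (hcbar : ∀ i, c (bar i) = -c i) (hW : W ≤ skewMatrices bar c)
    (hadjoin : Algebra.adjoin K (W : Set (Matrix ι ι K)) = ⊤) : skewMatrices bar c ≤ W := by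
  intro X hX
  have hmem (a b : ι) : rootMatrix bar c a b ∈ W := by
    rcases eq_or_ne a b with rfl | hab
    · convert hdiag _ (coroot_bar hbb a) using 1
      rw [rootMatrix, hcbar, neg_div, div_self (hc a), ← diagonal_single, ← diagonal_single,
        diagonal_add]
      simp [coroot, sub_eq_add_neg, Pi.single_neg]
    · exact rootMatrix_mem_of_adjoin_eq_top hbb hb hdiag hbr h2 hc hcbar hW hadjoin hab
  have hsum : X = ∑ a, ∑ b, (X a b / 2) • rootMatrix bar c a b := by
    have hmirror (a b : ι) : X a b * (c (bar a) / c b) = X (bar b) (bar a) := by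
      rw [mul_div_assoc', mul_comm, hX a b, mul_div_cancel_left₀ _ (hc b)]
    have hreindex : ∑ a, ∑ b, single (bar b) (bar a) (X (bar b) (bar a)) = X := by
      conv_rhs => rw [matrix_eq_sum_single X, Finset.sum_comm]
      exact (Finset.sum_congr rfl fun a _ => Equiv.sum_comp hbb.toPerm fun b =>
        single b (bar a) (X b (bar a))).trans
        (Equiv.sum_comp hbb.toPerm fun a => ∑ b, single b a (X b a))
    calc X = (2 : K)⁻¹ • (X + X) := by rw [← two_smul K X, smul_smul, inv_mul_cancel₀ h2, one_smul]
      _ = (2 : K)⁻¹ • (∑ a, ∑ b, single a b (X a b) +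
          ∑ a, ∑ b, single (bar b) (bar a) (X (bar b) (bar a))) := by
        rw [hreindex, ← matrix_eq_sum_single X]
      _ = ∑ a, ∑ b, (X a b / 2) • rootMatrix bar c a b := by
        simp only [rootMatrix, ← Finset.sum_add_distrib, Finset.smul_sum, smul_add, smul_single,
          smul_eq_mul, mul_one, ← hmirror, mul_assoc, div_eq_inv_mul (X _ _)]
  rw [hsum]
  exact sum_mem fun a _ => sum_mem fun b _ => W.smul_mem _ (hmem a b)

end RootElements

/-! ### Commutative algebras with a symplectic involution -/

lemma leftMulMatrix_mulVec_equivFun {ι F R : Type*} [Fintype ι] [DecidableEq ι] [Field F]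
    [CommRing R] [Algebra F R] (b : Module.Basis ι F R) (r u : R) :
    Algebra.leftMulMatrix b r *ᵥ b.equivFun u = b.equivFun (r * u) :=
  Algebra.leftMulMatrix_mulVec_repr b r u

/-- An involution `bar` of the commutative `F`-algebra `R`, a functional `form` for which
`(u, v) ↦ form (u * bar v)` is a nondegenerate alternating form on `R`, and a unit which `bar` maps
to its negative. Elements `u` with `u * bar u = 1` then act on `R` as isometries, so that their
group is a torus of the symplectic group. -/
structure SymplecticInvolution (F R : Type*) [Field F] [CommRing R] [Algebra F R] where
  bar : R →ₐ[F] R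
  bar_bar (r : R) : bar (bar r) = r
  form : R →ₗ[F] F
  form_mul_bar_self (u : R) : form (u * bar u) = 0
  eq_zero_of_form (r : R) : (∀ u, form (r * u) = 0) → r = 0
  skewUnit : Rˣ
  bar_skewUnit : bar skewUnit = -skewUnit

namespace SymplecticInvolution

variable {l F R : Type*} [Field F] [CommRing R] [Algebra F R] (T : SymplecticInvolution F R)

/-- The `F`-subspace of elements fixed by the involution. -/
def fixedPart : Submodule F R := LinearMap.eqLocus T.bar.toLinearMap LinearMap.id

/-- The `F`-subspace of elements which the involution maps to their negatives. -/
def skewPart : Submodule F R := LinearMap.eqLocus T.bar.toLinearMap (-LinearMap.id)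

/-- The projection of `R` to `fixedPart` along `skewPart`. -/
noncomputable def evenPart : R →ₗ[F] R := (2⁻¹ : F) • (LinearMap.id + T.bar.toLinearMap)

/-- The projection of `R` to `skewPart` along `fixedPart`. -/
noncomputable def oddPart : R →ₗ[F] R := (2⁻¹ : F) • (LinearMap.id - T.bar.toLinearMap)

variable {T}

lemma mem_fixedPart {r : R} : r ∈ T.fixedPart ↔ T.bar r = r := Iff.rfl

lemma mem_skewPart {r : R} : r ∈ T.skewPart ↔ T.bar r = -r := Iff.rfl

variable (T)

lemma evenPart_mem_fixedPart (u : R) : T.evenPart u ∈ T.fixedPart := by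
  simp [mem_fixedPart, evenPart, T.bar_bar, add_comm]

lemma oddPart_mem_skewPart (u : R) : T.oddPart u ∈ T.skewPart := by
  simp only [mem_skewPart, oddPart, LinearMap.smul_apply, LinearMap.sub_apply, LinearMap.id_apply,
    AlgHom.toLinearMap_apply, map_smul, map_sub, T.bar_bar]
  rw [← smul_neg, neg_sub]

lemma evenPart_add_oddPart (h2 : (2 : F) ≠ 0) (u : R) : T.evenPart u + T.oddPart u = u := by
  simp only [evenPart, oddPart, LinearMap.smul_apply, LinearMap.sub_apply, LinearMap.add_apply,
    LinearMap.id_apply, ← smul_add]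
  rw [add_add_sub_cancel, ← two_smul F u, inv_smul_smul₀ h2]

lemma form_mul_bar_swap (u v : R) : T.form (u * T.bar v) = -T.form (v * T.bar u) := by
  have h := T.form_mul_bar_self (u + v)
  rw [map_add, mul_add, add_mul, add_mul] at h
  simp only [map_add, T.form_mul_bar_self] at h
  linear_combination h

variable {T}

lemma form_mul_of_mem_fixedPart (h2 : (2 : F) ≠ 0) {u v : R} (hu : u ∈ T.fixedPart)
    (hv : v ∈ T.fixedPart) : T.form (u * v) = 0 := by
  have h := T.form_mul_bar_swap u v
  rw [mem_fixedPart.1 hu, mem_fixedPart.1 hv, mul_comm v u] at h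
  exact (mul_eq_zero.1 (by linear_combination h : 2 * T.form (u * v) = 0)).resolve_left h2

lemma form_mul_of_mem_skewPart (h2 : (2 : F) ≠ 0) {u v : R} (hu : u ∈ T.skewPart)
    (hv : v ∈ T.skewPart) : T.form (u * v) = 0 := by
  have h := T.form_mul_bar_swap u v
  rw [mem_skewPart.1 hu, mem_skewPart.1 hv, mul_comm v (-u), neg_mul, mul_neg, map_neg] at h
  exact (mul_eq_zero.1 (by linear_combination -h : 2 * T.form (u * v) = 0)).resolve_left h2

variable (T)

lemma isCompl_fixedPart_skewPart (h2 : (2 : F) ≠ 0) : IsCompl T.fixedPart T.skewPart := by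
  constructor
  · rw [Submodule.disjoint_def]
    intro x hfixed hskew
    have h : x = -x := (mem_fixedPart.1 hfixed).symm.trans (mem_skewPart.1 hskew)
    exact (smul_eq_zero.1 (show (2 : F) • x = 0 by
      rw [two_smul]; nth_rewrite 1 [h]; exact neg_add_cancel x)).resolve_left h2
  · rw [codisjoint_iff, eq_top_iff]
    intro x _
    rw [← T.evenPart_add_oddPart h2 x]
    exact Submodule.add_mem_sup (T.evenPart_mem_fixedPart x) (T.oddPart_mem_skewPart x)

lemma bar_inv_skewUnit : T.bar ↑T.skewUnit⁻¹ = -↑T.skewUnit⁻¹ := by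
  have h := congrArg T.bar T.skewUnit.inv_mul
  rw [map_mul, T.bar_skewUnit, map_one, mul_neg, ← neg_mul] at h
  exact neg_eq_iff_eq_neg.1 (Units.eq_inv_of_mul_eq_one_right h)

lemma map_mulLeft_skewUnit_fixedPart :
    T.fixedPart.map (T.skewUnit.mulLeftLinearEquiv F R : R →ₗ[F] R) = T.skewPart := by
  ext r
  rw [Submodule.mem_map_equiv, Units.symm_mulLeftLinearEquiv_apply, mem_fixedPart, mem_skewPart,
    map_mul, T.bar_inv_skewUnit, neg_mul, ← mul_neg, Units.mul_right_inj, neg_eq_iff_eq_neg]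

lemma finrank_fixedPart [Fintype l] [Module.Finite F R] (h2 : (2 : F) ≠ 0)
    (hdim : Module.finrank F R = Fintype.card (l ⊕ l)) :
    Module.finrank F T.fixedPart = Fintype.card l := by
  have hsum := Submodule.finrank_add_eq_of_isCompl (T.isCompl_fixedPart_skewPart h2)
  rw [← T.map_mulLeft_skewUnit_fixedPart, LinearEquiv.finrank_map_eq, hdim,
    Fintype.card_sum] at hsum
  omega

/-- A basis of `R` indexed by `l ⊕ l` whose coordinates carry the form `(u, v) ↦ form (u * bar v)`
to the standard symplectic form. -/
def IsSymplecticBasis [Fintype l] [DecidableEq l] (b : Module.Basis (l ⊕ l) F R) : Prop :=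
  ∀ u v, symplForm l F (b.equivFun u) (b.equivFun v) = T.form (u * T.bar v)

section SymplecticCoordinates

variable (b : Module.Basis l F T.fixedPart)

/-- The coordinates of the even part of `u`, together with the values of the form on the products
of the basis vectors with the odd part of `u`. -/
noncomputable def symplecticCoordinates : R →ₗ[F] (l ⊕ l → F) :=
  LinearMap.pi <| Sum.elim
    (fun i => b.coord i ∘ₗ T.evenPart.codRestrict T.fixedPart T.evenPart_mem_fixedPart)
    (fun i => T.form ∘ₗ LinearMap.mulLeft F (b i : R) ∘ₗ T.oddPart)

variable {T b}

lemma sum_symplecticCoordinates_inl_mul [Fintype l] (u w : R) :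
    ∑ i, T.symplecticCoordinates b u (.inl i) * T.form (b i * w) = T.form (T.evenPart u * w) := by
  have hrepr := congrArg (Submodule.subtype T.fixedPart)
    (b.sum_repr (T.evenPart.codRestrict T.fixedPart T.evenPart_mem_fixedPart u))
  simp only [map_sum, map_smul, Submodule.subtype_apply, LinearMap.codRestrict_apply] at hrepr
  rw [← hrepr, Finset.sum_mul, map_sum]
  simp [symplecticCoordinates]

lemma symplForm_symplecticCoordinates [Fintype l] [DecidableEq l] (h2 : (2 : F) ≠ 0) (u v : R) :
    symplForm l F (T.symplecticCoordinates b u) (T.symplecticCoordinates b v) =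
      T.form (u * T.bar v) := by
  have hexpand : u * T.bar v = T.evenPart u * T.evenPart v - T.oddPart u * T.oddPart v +
      (T.evenPart v * T.oddPart u - T.evenPart u * T.oddPart v) := by
    conv_lhs => rw [← T.evenPart_add_oddPart h2 u, ← T.evenPart_add_oddPart h2 v, map_add,
      mem_fixedPart.1 (T.evenPart_mem_fixedPart v), mem_skewPart.1 (T.oddPart_mem_skewPart v)]
    ring
  have hinr (i : l) (w : R) :
      T.symplecticCoordinates b w (.inr i) = T.form (b i * T.oddPart w) := rfl
  simp only [symplForm_apply, hinr, Finset.sum_sub_distrib]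
  simp only [mul_comm (T.form _), sum_symplecticCoordinates_inl_mul]
  simp only [hexpand, map_sub, map_add, sub_zero, zero_add,
    form_mul_of_mem_fixedPart h2 (T.evenPart_mem_fixedPart u) (T.evenPart_mem_fixedPart v),
    form_mul_of_mem_skewPart h2 (T.oddPart_mem_skewPart u) (T.oddPart_mem_skewPart v)]

lemma symplecticCoordinates_injective [Finite l] (h2 : (2 : F) ≠ 0) :
    Function.Injective (T.symplecticCoordinates b) := by
  classical
  have := Fintype.ofFinite l
  rw [injective_iff_map_eq_zero]
  intro u hu
  refine T.eq_zero_of_form u fun v => ?_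
  rw [← T.bar_bar v, ← symplForm_symplecticCoordinates (b := b) h2, hu, map_zero,
    LinearMap.zero_apply]

end SymplecticCoordinates

theorem exists_isSymplecticBasis [Fintype l] [DecidableEq l] [Module.Finite F R]
    (h2 : (2 : F) ≠ 0) (hdim : Module.finrank F R = Fintype.card (l ⊕ l)) :
    ∃ b : Module.Basis (l ⊕ l) F R, T.IsSymplecticBasis b := by
  let c : Module.Basis l F T.fixedPart :=
    (Module.finBasisOfFinrankEq F T.fixedPart (T.finrank_fixedPart h2 hdim)).reindex
      (Fintype.equivFin l).symm
  have hcard : Module.finrank F R = Module.finrank F (l ⊕ l → F) := by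
    rw [hdim, Module.finrank_fintype_fun_eq_card]
  refine ⟨.ofEquivFun (.ofInjectiveOfFinrankEq (T.symplecticCoordinates c)
    (symplecticCoordinates_injective h2) hcard), fun u v => ?_⟩
  rw [Module.Basis.equivFun_ofEquivFun]
  exact symplForm_symplecticCoordinates h2 u v

/-! ### The torus of a symplectic involution -/

variable {T}

section LeftMulMatrix

variable [Fintype l] [DecidableEq l] {b : Module.Basis (l ⊕ l) F R}

variable (hb : T.IsSymplecticBasis b)
include hb

lemma IsSymplecticBasis.symplForm_leftMulMatrix_mulVec (r : R) (x y : l ⊕ l → F) :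
    symplForm l F (Algebra.leftMulMatrix b r *ᵥ x) y =
      symplForm l F x (Algebra.leftMulMatrix b (T.bar r) *ᵥ y) := by
  obtain ⟨u, rfl⟩ := b.equivFun.surjective x
  obtain ⟨v, rfl⟩ := b.equivFun.surjective y
  rw [leftMulMatrix_mulVec_equivFun, leftMulMatrix_mulVec_equivFun, hb, hb, map_mul T.bar,
    T.bar_bar]
  congr 1
  ring

lemma IsSymplecticBasis.transpose_leftMulMatrix_mul_J (r : R) :
    (Algebra.leftMulMatrix b r)ᵀ * J l F = J l F * Algebra.leftMulMatrix b (T.bar r) := by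
  refine ext_of_mulVec_single fun i => dotProduct_eq _ _ fun x => ?_
  have h := hb.symplForm_leftMulMatrix_mulVec r x (Pi.single i 1)
  rw [symplForm_eq_dotProduct, symplForm_eq_dotProduct, mulVec_mulVec, ← vecMul_transpose,
    ← dotProduct_mulVec, mulVec_mulVec] at h
  rw [dotProduct_comm, h, dotProduct_comm]

lemma IsSymplecticBasis.leftMulMatrix_mem_symplecticGroup {u : R} (hu : u * T.bar u = 1) :
    Algebra.leftMulMatrix b u ∈ symplecticGroup l F := by
  rw [mem_symplecticGroup_iff_symplForm]
  intro x y
  rw [hb.symplForm_leftMulMatrix_mulVec, mulVec_mulVec, ← map_mul, mul_comm, hu, map_one,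
    one_mulVec]

open LieAlgebra.Symplectic in
lemma IsSymplecticBasis.leftMulMatrix_mem_sp {r : R} (hr : r ∈ T.skewPart) :
    Algebra.leftMulMatrix b r ∈ sp l F := by
  rw [mem_sp_iff, hb.transpose_leftMulMatrix_mul_J, mem_skewPart.1 hr, map_neg, mul_neg]

end LeftMulMatrix

variable {a : R} (ha : a ∈ T.skewPart)
include ha

lemma mul_bar_eq_one_of_mem_skewPart {w : R} (hw : (1 + a) * w = 1) :
    w * (1 - a) * T.bar (w * (1 - a)) = 1 := by
  have hbar := congrArg T.bar hw
  rw [map_mul, map_add, map_one, mem_skewPart.1 ha] at hbar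
  rw [map_mul, map_sub, map_one, mem_skewPart.1 ha]
  linear_combination hbar + (1 + -a) * T.bar w * hw

end SymplecticInvolution

section LeftMulMatrix

variable {ι F R : Type*} [Fintype ι] [DecidableEq ι] [Field F] [CommRing R] [Algebra F R]
  (b : Module.Basis ι F R)

lemma isUnit_of_det_leftMulMatrix_ne_zero {r : R} (hr : (Algebra.leftMulMatrix b r).det ≠ 0) :
    IsUnit r := by
  have := Module.Finite.of_basis b
  have := Module.Free.of_basis b
  rw [← Algebra.norm_eq_matrix_det, Algebra.norm_apply] at hr
  exact Algebra.lmul_isUnit_iff.1 (LinearMap.isUnit_iff_isUnit_det _ |>.2 hr.isUnit)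

lemma adjugate_leftMulMatrix {r w : R} (hw : r * w = 1) :
    adjugate (Algebra.leftMulMatrix b r) =
      (Algebra.leftMulMatrix b r).det • Algebra.leftMulMatrix b w := by
  rw [← mul_one (adjugate _), ← map_one (Algebra.leftMulMatrix b), ← hw, map_mul, ← mul_assoc,
    adjugate_mul, smul_mul_assoc, one_mul]

lemma cayleyNum_leftMulMatrix {a w : R} (hw : (1 + a) * w = 1) :
    cayleyNum (Algebra.leftMulMatrix b a) =
      cayleyDen (Algebra.leftMulMatrix b a) • Algebra.leftMulMatrix b (w * (1 - a)) ^ 2 := by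
  rw [cayleyNum, cayleyDen, ← map_one (Algebra.leftMulMatrix b), ← map_add, ← map_sub,
    adjugate_leftMulMatrix b hw, smul_mul_assoc, ← map_mul, smul_pow]

end LeftMulMatrix

/-- A symplectic involution with as many homomorphisms to an algebraic closure as its dimension
allows, so that `R` is étale, and an element of norm one whose powers include the squares of all
elements of norm one: the torus of elements of norm one is cyclic up to squares. -/
structure SymplecticTorus (F R : Type*) [Field F] [CommRing R] [Algebra F R] extends
    SymplecticInvolution F R where
  finrank_le_card_algHom : Module.finrank F R ≤ Nat.card (R →ₐ[F] AlgebraicClosure F)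
  generator : R
  generator_mul_bar : generator * bar generator = 1
  exists_generator_pow_eq_sq (u : R) : u * bar u = 1 → ∃ k : ℕ, generator ^ k = u ^ 2

namespace SymplecticTorus

variable {l F R : Type*} [Fintype l] [DecidableEq l] [Field F] [CommRing R] [Algebra F R]
  {T : SymplecticTorus F R} {b : Module.Basis (l ⊕ l) F R} (hb : T.IsSymplecticBasis b)

/-- The generator of the torus as a symplectic matrix, in the coordinates of a symplectic basis. -/
noncomputable def torusElement (hb : T.IsSymplecticBasis b) : symplecticGroup l F :=
  ⟨Algebra.leftMulMatrix b T.generator,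
    hb.leftMulMatrix_mem_symplecticGroup T.generator_mul_bar⟩

/- The Cayley transform of a skew element has norm one, so its square is a power of the
generator. -/
lemma leftMulMatrix_mem_cayleyDirections {H : Subgroup (symplecticGroup l F)}
    (hH : T.torusElement hb ∈ H) {r : R} (hr : r ∈ T.skewPart) :
    Algebra.leftMulMatrix b r ∈ cayleyDirections H := by
  refine ⟨hb.leftMulMatrix_mem_sp hr, fun s hs => ?_⟩
  rw [← map_smul] at hs ⊢
  have hdet : (Algebra.leftMulMatrix b (1 + s • r)).det ≠ 0 := fun h => hs <| by
    rw [cayleyDen, ← map_one (Algebra.leftMulMatrix b), ← map_add, h, zero_pow two_ne_zero]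
  obtain ⟨w, hw⟩ := (isUnit_of_det_leftMulMatrix_ne_zero b hdet).exists_right_inv
  obtain ⟨k, hk⟩ := T.exists_generator_pow_eq_sq _
    (SymplecticInvolution.mul_bar_eq_one_of_mem_skewPart (T.skewPart.smul_mem s hr) hw)
  refine ⟨T.torusElement hb ^ k, pow_mem hH k, ?_⟩
  rw [cayleyNum_leftMulMatrix b hw, ← map_pow, ← hk, map_pow]
  rfl

end SymplecticTorus

/-! ### Base change and diagonalization of the torus -/

lemma commutator_mem_span {K B : Type*} [CommRing K] [Ring B] [Algebra K B] {S : Set B}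
    (hS : ∀ X ∈ S, ∀ Y ∈ S, X * Y - Y * X ∈ Submodule.span K S) :
    ∀ X ∈ Submodule.span K S, ∀ Y ∈ Submodule.span K S, X * Y - Y * X ∈ Submodule.span K S := by
  intro X hX Y hY
  have hle : Submodule.map₂ (LinearMap.mul K B - (LinearMap.mul K B).flip) (Submodule.span K S)
      (Submodule.span K S) ≤ Submodule.span K S := by
    rw [Submodule.map₂_span_span, Submodule.span_le]
    exact Set.image2_subset_iff.2 hS
  exact hle (Submodule.apply_mem_map₂ _ hX hY)

lemma adjoin_image_eq_top {F K A B : Type*} [CommSemiring F] [CommSemiring K] [Algebra F K]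
    [Semiring A] [Algebra F A] [Semiring B] [Algebra F B] [Algebra K B] [IsScalarTower F K B]
    {ψ : A →ₐ[F] B} (hψ : Submodule.span K (Set.range ψ) = ⊤) {W : Set A}
    (hW : Algebra.adjoin F W = ⊤) : Algebra.adjoin K (ψ '' W) = ⊤ := by
  have hle : Algebra.adjoin F W ≤ ((Algebra.adjoin K (ψ '' W)).restrictScalars F).comap ψ :=
    Algebra.adjoin_le fun X hX => Algebra.subset_adjoin (Set.mem_image_of_mem ψ hX)
  have hspan : Submodule.span K (Set.range ψ) ≤ (Algebra.adjoin K (ψ '' W)).toSubmodule := by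
    rw [Submodule.span_le]
    rintro _ ⟨X, rfl⟩
    exact hle (hW ▸ Algebra.mem_top)
  exact eq_top_iff.2 fun Z _ => hspan (hψ ▸ Submodule.mem_top)

section BaseChange

variable {ι F K : Type*} [Field F] [Field K] [Algebra F K]

lemma mem_of_map_mem_span_map {W : Submodule F (Matrix ι ι F)} {X : Matrix ι ι F}
    (hX : X.map (algebraMap F K) ∈
      Submodule.span K ((fun Y : Matrix ι ι F => Y.map (algebraMap F K)) '' W)) : X ∈ W := by
  obtain ⟨π, hπ⟩ := LinearMap.exists_leftInverse_of_injective (Algebra.linearMap F K)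
    (LinearMap.ker_eq_bot.2 (algebraMap F K).injective)
  have hπ_smul (a : K) (x : F) : π (a * algebraMap F K x) = π a * x := by
    rw [mul_comm, ← Algebra.smul_def, map_smul, smul_eq_mul, mul_comm]
  have hspan : ∀ Z ∈ Submodule.span K ((fun Y : Matrix ι ι F => Y.map (algebraMap F K)) '' W),
      ∀ a : K, (a • Z).map π ∈ W := by
    intro Z hZ
    induction hZ using Submodule.span_induction with
    | mem Z hZ =>
      obtain ⟨Y, hY, rfl⟩ := hZ
      intro a
      convert W.smul_mem (π a) hY using 1
      ext i j
      exact hπ_smul a (Y i j)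
    | zero => simp
    | add Y Z _ _ hY hZ =>
      intro a
      rw [smul_add, Matrix.map_add _ (map_add π)]
      exact W.add_mem (hY a) (hZ a)
    | smul c Z _ hZ => exact fun a => smul_smul a c Z ▸ hZ (a * c)
  convert hspan _ hX 1 using 1
  ext i j
  simpa using (LinearMap.congr_fun hπ (X i j)).symm

variable [Fintype ι] [DecidableEq ι]

/-- Extension of scalars of matrices from `F` to `K`, followed by conjugation by `P`. -/
noncomputable def conjBaseChange (P : (Matrix ι ι K)ˣ) : Matrix ι ι F →ₐ[F] Matrix ι ι K :=
  ((MulSemiringAction.toAlgEquiv F (Matrix ι ι K) (ConjAct.toConjAct P)) : _ →ₐ[F] _).comp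
    (Algebra.ofId F K).mapMatrix

variable {P : (Matrix ι ι K)ˣ}

lemma conjBaseChange_apply (X : Matrix ι ι F) :
    conjBaseChange P X = P * X.map (algebraMap F K) * (P⁻¹ : (Matrix ι ι K)ˣ) := rfl

lemma inv_mul_conjBaseChange_mul (X : Matrix ι ι F) :
    (P⁻¹ : (Matrix ι ι K)ˣ) * conjBaseChange P X * P = X.map (algebraMap F K) := by
  rw [conjBaseChange_apply, mul_assoc, Units.inv_mul_cancel_right, Units.inv_mul_cancel_left]

lemma span_range_conjBaseChange :
    Submodule.span K (Set.range (conjBaseChange (F := F) P)) = ⊤ := by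
  refine eq_top_iff.2 fun Z _ => ?_
  set Y : Matrix ι ι K := (P⁻¹ : (Matrix ι ι K)ˣ) * Z * P with hY
  have hZ : Z = ∑ i, ∑ j, Y i j • conjBaseChange P (single i j (1 : F)) := by
    calc Z = P * Y * (P⁻¹ : (Matrix ι ι K)ˣ) := by
          rw [hY, mul_assoc, Units.mul_inv_cancel_right, Units.mul_inv_cancel_left]
      _ = _ := by
          have hsum : Y = ∑ i, ∑ j, Y i j • single i j 1 := by
            simpa only [smul_single, smul_eq_mul, mul_one] using matrix_eq_sum_single Y
          nth_rewrite 1 [hsum]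
          simp only [Finset.mul_sum, Finset.sum_mul, conjBaseChange_apply, map_single, map_one,
            smul_mul_assoc, mul_smul_comm]
  rw [hZ]
  exact Submodule.sum_mem _ fun i _ => Submodule.sum_mem _ fun j _ =>
    Submodule.smul_mem _ _ (Submodule.subset_span (Set.mem_range_self _))

lemma mem_of_conjBaseChange_mem_span {W : Submodule F (Matrix ι ι F)} {X : Matrix ι ι F}
    (hX : conjBaseChange P X ∈ Submodule.span K (conjBaseChange P '' (W : Set (Matrix ι ι F)))) :
    X ∈ W := by
  refine mem_of_map_mem_span_map (K := K) ?_
  have h := Submodule.mem_map_of_mem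
    (f := LinearMap.mulLeftRight K (((P⁻¹ : (Matrix ι ι K)ˣ) : Matrix ι ι K), (P : Matrix ι ι K)))
    hX
  rw [Submodule.map_span, Set.image_image] at h
  simpa only [LinearMap.mulLeftRight_apply, inv_mul_conjBaseChange_mul] using h

end BaseChange

section Diagonalization

variable {ι F K R : Type*} [Field F] [Field K] [Algebra F K] [CommRing R] [Algebra F R]
  (b : Module.Basis ι F R)

variable (K) in
include b in
lemma nonempty_equiv_algHom [Finite ι] (hcard : Module.finrank F R ≤ Nat.card (R →ₐ[F] K)) :
    Nonempty (ι ≃ (R →ₐ[F] K)) := by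
  have := Module.Finite.of_basis b
  have hι : Nat.card ι = Nat.card (R →ₐ[F] K) := by
    rw [← Module.finrank_eq_nat_card_basis b]
    exact hcard.antisymm (card_algHom_le_finrank F R K)
  have : Finite (R →ₐ[F] K) := inferInstance
  exact Finite.card_eq.1 hι

variable [Fintype ι] [DecidableEq ι]

variable (e : ι ≃ (R →ₐ[F] K))

lemma isUnit_embeddingsMatrixReindex_transpose :
    IsUnit (Algebra.embeddingsMatrixReindex F K b e)ᵀ := by
  rw [← linearIndependent_rows_iff_isUnit]
  exact ((linearIndependent_algHom_toLinearMap F R K).comp e e.injective).map'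
    (b.constr K).symm.toLinearMap (b.constr K).symm.ker

/-- The matrix with entries `e i (b k)`; it diagonalizes the multiplication matrices of `R`. -/
noncomputable def embeddingsUnit : (Matrix ι ι K)ˣ :=
  (isUnit_embeddingsMatrixReindex_transpose b e).unit

lemma embeddingsUnit_apply (i k : ι) : (embeddingsUnit b e : Matrix ι ι K) i k = e i (b k) := rfl

lemma embeddingsUnit_mul_map_leftMulMatrix (r : R) :
    (embeddingsUnit b e : Matrix ι ι K) * (Algebra.leftMulMatrix b r).map (algebraMap F K) =
      diagonal (fun i => e i r) * embeddingsUnit b e := by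
  ext i k
  rw [diagonal_mul, embeddingsUnit_apply, ← map_mul, ← b.sum_repr (r * b k), map_sum, mul_apply]
  refine Finset.sum_congr rfl fun j _ => ?_
  rw [map_smul, Algebra.smul_def, mul_comm, map_apply, Algebra.leftMulMatrix_eq_repr_mul]
  rfl

lemma conjBaseChange_leftMulMatrix (r : R) :
    conjBaseChange (embeddingsUnit b e) (Algebra.leftMulMatrix b r) = diagonal fun i => e i r := by
  rw [conjBaseChange_apply, embeddingsUnit_mul_map_leftMulMatrix, Units.mul_inv_cancel_right]

end Diagonalization

namespace SymplecticInvolution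

section EmbeddingConj

variable {ι F K R : Type*} [Field F] [Field K] [Algebra F K] [CommRing R] [Algebra F R]
  (T : SymplecticInvolution F R) (e : ι ≃ (R →ₐ[F] K))

/-- The permutation of the homomorphisms from `R` to `K` induced by the involution, on indices. -/
def conjIndex (i : ι) : ι := e.symm ((e i).comp T.bar)

lemma apply_conjIndex (i : ι) (r : R) : e (T.conjIndex e i) r = e i (T.bar r) := by
  simp [conjIndex]

lemma conjIndex_involutive : Function.Involutive (T.conjIndex e) := fun i =>
  e.injective <| AlgHom.ext fun r => by rw [apply_conjIndex, apply_conjIndex, T.bar_bar]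

lemma conjIndex_ne (h2 : (2 : K) ≠ 0) (i : ι) : T.conjIndex e i ≠ i := by
  intro h
  have hneg := T.apply_conjIndex e i T.skewUnit
  rw [h, T.bar_skewUnit, map_neg] at hneg
  exact (T.skewUnit.isUnit.map (e i)).ne_zero
    ((mul_eq_zero.1 (by linear_combination hneg)).resolve_left h2)

variable [Fintype ι] [DecidableEq ι] (b : Module.Basis ι F R)

lemma diagonal_mem_span_conjBaseChange (h2 : (2 : K) ≠ 0) {d : ι → K}
    (hd : ∀ i, d (T.conjIndex e i) = -d i) :
    diagonal d ∈ Submodule.span K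
      (conjBaseChange (embeddingsUnit b e) '' (Algebra.leftMulMatrix b '' T.skewPart)) := by
  obtain ⟨x, rfl⟩ := (mulVec_surjective_iff_isUnit.2 (embeddingsUnit b e).isUnit) d
  have hodd (i k : ι) : e i (T.oddPart (b k)) =
      2⁻¹ * ((embeddingsUnit b e : Matrix ι ι K) i k -
        (embeddingsUnit b e : Matrix ι ι K) (T.conjIndex e i) k) := by
    simp only [embeddingsUnit_apply, apply_conjIndex, oddPart, LinearMap.smul_apply,
      LinearMap.sub_apply, LinearMap.id_apply, AlgHom.toLinearMap_apply, map_smul, map_sub]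
    rw [Algebra.smul_def, map_inv₀, map_ofNat]
  have hsum : diagonal ((embeddingsUnit b e : Matrix ι ι K) *ᵥ x) = ∑ k, x k •
      conjBaseChange (embeddingsUnit b e) (Algebra.leftMulMatrix b (T.oddPart (b k))) := by
    ext i j
    obtain rfl | hij := eq_or_ne i j
    · have hhalf (a : K) : a = 2⁻¹ * (a - -a) := by
        rw [sub_neg_eq_add, ← two_mul, inv_mul_cancel_left₀ h2]
      rw [diagonal_apply_eq, hhalf (((embeddingsUnit b e : Matrix ι ι K) *ᵥ x) i), ← hd]
      simp only [conjBaseChange_leftMulMatrix, Matrix.sum_apply, Matrix.smul_apply,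
        diagonal_apply_eq, smul_eq_mul, hodd, mulVec, dotProduct, ← Finset.sum_sub_distrib,
        Finset.mul_sum]
      exact Finset.sum_congr rfl fun k _ => by ring
    · simp [conjBaseChange_leftMulMatrix, Matrix.sum_apply, hij]
  rw [hsum]
  exact Submodule.sum_mem _ fun k _ => Submodule.smul_mem _ _ <| Submodule.subset_span <|
    Set.mem_image_of_mem _ <| Set.mem_image_of_mem _ <| T.oddPart_mem_skewPart _

end EmbeddingConj

section DiagonalizedForm

attribute [local instance] LieRing.ofAssociativeRing

variable {l F K R : Type*} [Fintype l] [DecidableEq l] [Field F] [Field K] [Algebra F K]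
  [CommRing R] [Algebra F R] (b : Module.Basis (l ⊕ l) F R) (e : l ⊕ l ≃ (R →ₐ[F] K))

/-- The Gram matrix of the dual symplectic form in the basis diagonalizing `R`. -/
noncomputable def diagonalizedJ : BlockMat l K :=
  embeddingsUnit b e * J l K * (embeddingsUnit b e : BlockMat l K)ᵀ

lemma diagonalizedJ_swap (i j : l ⊕ l) : diagonalizedJ b e i j = -diagonalizedJ b e j i := by
  have h : (diagonalizedJ b e)ᵀ = -diagonalizedJ b e := by
    simp only [diagonalizedJ, transpose_mul, transpose_transpose, J_transpose, mul_neg, neg_mul,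
      mul_assoc]
  exact congrFun (congrFun h j) i

lemma isUnit_diagonalizedJ : IsUnit (diagonalizedJ b e) :=
  ((embeddingsUnit b e).isUnit.mul ((isUnit_iff_isUnit_det _).2 (isUnit_det_J l K))).mul
    ((isUnit_iff_isUnit_det _).2 (by
      rw [det_transpose]
      exact (isUnit_iff_isUnit_det _).1 (embeddingsUnit b e).isUnit))

lemma mul_J_eq_of_transpose_mul_J {A B : BlockMat l F} (h : Aᵀ * J l F = J l F * B) :
    B * J l F = J l F * Aᵀ := by
  calc B * J l F = -(J l F * (J l F * B) * J l F) := by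
        rw [← mul_assoc, J_squared, neg_one_mul, neg_mul, neg_neg]
    _ = J l F * Aᵀ := by rw [← h, mul_assoc, mul_assoc, J_squared, mul_neg_one, mul_neg, neg_neg]

lemma conjBaseChange_mul_diagonalizedJ {A B : BlockMat l F} (h : Aᵀ * J l F = J l F * B) :
    conjBaseChange (embeddingsUnit b e) B * diagonalizedJ b e =
      diagonalizedJ b e * (conjBaseChange (embeddingsUnit b e) A)ᵀ := by
  set P := embeddingsUnit b e
  have hmap : B.map (algebraMap F K) * J l K = J l K * (A.map (algebraMap F K))ᵀ := by
    rw [← J_map (algebraMap F K), ← transpose_map, ← Matrix.map_mul, ← Matrix.map_mul,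
      mul_J_eq_of_transpose_mul_J h]
  have hP : (P : BlockMat l K)ᵀ * ((P⁻¹ : (BlockMat l K)ˣ) : BlockMat l K)ᵀ = 1 := by
    rw [← transpose_mul, Units.inv_mul, transpose_one]
  calc conjBaseChange P B * diagonalizedJ b e
      = P * (B.map (algebraMap F K) * J l K) * (P : BlockMat l K)ᵀ := by
        simp only [conjBaseChange_apply, diagonalizedJ, mul_assoc, Units.inv_mul_cancel_left, P]
    _ = P * J l K * ((P : BlockMat l K)ᵀ * ((P⁻¹ : (BlockMat l K)ˣ) : BlockMat l K)ᵀ) *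
          (A.map (algebraMap F K))ᵀ * (P : BlockMat l K)ᵀ := by
        rw [hmap, hP, mul_one, ← mul_assoc]
    _ = diagonalizedJ b e * (conjBaseChange P A)ᵀ := by
        simp only [conjBaseChange_apply, diagonalizedJ, transpose_mul, mul_assoc, P]

variable {T : SymplecticInvolution F R} {b} (hb : T.IsSymplecticBasis b)
include hb

lemma IsSymplecticBasis.diagonal_mul_diagonalizedJ (r : R) :
    diagonal (fun i => e i r) * diagonalizedJ b e =
      diagonalizedJ b e * diagonal (fun i => e i (T.bar r)) := by
  have h := conjBaseChange_mul_diagonalizedJ b e (hb.transpose_leftMulMatrix_mul_J (T.bar r))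
  rwa [T.bar_bar, conjBaseChange_leftMulMatrix, conjBaseChange_leftMulMatrix,
    diagonal_transpose] at h

variable {e}

lemma IsSymplecticBasis.diagonalizedJ_apply_of_ne {i j : l ⊕ l} (hij : j ≠ T.conjIndex e i) :
    diagonalizedJ b e i j = 0 := by
  by_contra h0
  refine hij ((T.conjIndex_involutive e).eq_iff.1 (e.injective (AlgHom.ext fun r => ?_)))
  have h := congrFun (congrFun (hb.diagonal_mul_diagonalizedJ e r) i) j
  rw [diagonal_mul, mul_diagonal, mul_comm] at h
  rw [apply_conjIndex, ← mul_left_cancel₀ h0 h]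

variable (e) in
lemma IsSymplecticBasis.diagonalizedJ_apply_conjIndex_ne_zero (i : l ⊕ l) :
    diagonalizedJ b e i (T.conjIndex e i) ≠ 0 := by
  intro h0
  obtain ⟨N, hN⟩ := (isUnit_diagonalizedJ b e).exists_right_inv
  have h := congrFun (congrFun hN i) i
  rw [mul_apply, one_apply_eq, Finset.sum_eq_zero] at h
  · exact zero_ne_one h
  · intro j _
    obtain rfl | hij := eq_or_ne j (T.conjIndex e i)
    · rw [h0, zero_mul]
    · rw [hb.diagonalizedJ_apply_of_ne hij, zero_mul]

open LieAlgebra.Symplectic in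
lemma IsSymplecticBasis.conjBaseChange_mem_skewMatrices {X : BlockMat l F} (hX : X ∈ sp l F) :
    conjBaseChange (embeddingsUnit b e) X ∈ skewMatrices (T.conjIndex e)
      (fun i => (diagonalizedJ b e i (T.conjIndex e i))⁻¹) := by
  intro i j
  set Z := conjBaseChange (embeddingsUnit b e) X
  have hprod := congrFun (congrFun (conjBaseChange_mul_diagonalizedJ b e (A := X) (B := -X)
    (by rw [mem_sp_iff.1 hX, mul_neg])) i) (T.conjIndex e j)
  have hleft : (Z * diagonalizedJ b e) i (T.conjIndex e j) =
      Z i j * diagonalizedJ b e j (T.conjIndex e j) := by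
    rw [mul_apply, Finset.sum_eq_single j _ (by simp)]
    intro k _ hk
    rw [hb.diagonalizedJ_apply_of_ne ((T.conjIndex_involutive e).injective.ne hk.symm), mul_zero]
  have hright : (diagonalizedJ b e * Zᵀ) i (T.conjIndex e j) =
      diagonalizedJ b e i (T.conjIndex e i) * Z (T.conjIndex e j) (T.conjIndex e i) := by
    rw [mul_apply, Finset.sum_eq_single (T.conjIndex e i) _ (by simp), transpose_apply]
    intro k _ hk
    rw [hb.diagonalizedJ_apply_of_ne hk, zero_mul]
  rw [map_neg, neg_mul, Matrix.neg_apply, hleft, hright] at hprod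
  have hi := hb.diagonalizedJ_apply_conjIndex_ne_zero e i
  have hj := hb.diagonalizedJ_apply_conjIndex_ne_zero e j
  beta_reduce
  rw [T.conjIndex_involutive e, diagonalizedJ_swap]
  field_simp
  linear_combination hprod

open LieAlgebra.Symplectic in
theorem IsSymplecticBasis.sp_le_of_adjoin_eq_top (h2 : (2 : F) ≠ 0)
    (hcard : Module.finrank F R ≤ Nat.card (R →ₐ[F] K)) {W : Submodule F (BlockMat l F)}
    (hW : W ≤ (sp l F).toSubmodule) (hbr : ∀ X ∈ W, ∀ Y ∈ W, X * Y - Y * X ∈ W)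
    (hskew : ∀ r ∈ T.skewPart, Algebra.leftMulMatrix b r ∈ W)
    (hadjoin : Algebra.adjoin F (W : Set (BlockMat l F)) = ⊤) : (sp l F).toSubmodule ≤ W := by
  obtain ⟨e⟩ := nonempty_equiv_algHom K b hcard
  have h2K : (2 : K) ≠ 0 := by
    simpa only [map_ofNat] using (map_ne_zero (algebraMap F K)).2 h2
  let ψ := conjBaseChange (F := F) (embeddingsUnit b e)
  intro X hX
  refine mem_of_conjBaseChange_mem_span (P := embeddingsUnit b e) <|
    skewMatrices_le_of_adjoin_eq_top (T.conjIndex_involutive e) (T.conjIndex_ne e h2K) ?_ ?_ h2K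
      (fun i => inv_ne_zero (hb.diagonalizedJ_apply_conjIndex_ne_zero e i)) ?_ ?_ ?_
      (hb.conjBaseChange_mem_skewMatrices hX)
  · intro d hd
    refine Submodule.span_mono (Set.image_mono ?_) (T.diagonal_mem_span_conjBaseChange e b h2K hd)
    exact Set.image_subset_iff.2 hskew
  · refine commutator_mem_span ?_
    rintro _ ⟨Y, hY, rfl⟩ _ ⟨Z, hZ, rfl⟩
    rw [← map_mul, ← map_mul, ← map_sub]
    exact Submodule.subset_span (Set.mem_image_of_mem ψ (hbr Y hY Z hZ))
  · intro i
    rw [T.conjIndex_involutive e, diagonalizedJ_swap, inv_neg]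
  · rw [Submodule.span_le]
    rintro _ ⟨Y, hY, rfl⟩
    exact hb.conjBaseChange_mem_skewMatrices (hW hY)
  · rw [Algebra.adjoin_span]
    exact adjoin_image_eq_top span_range_conjBaseChange hadjoin

end DiagonalizedForm

end SymplecticInvolution

/-! ### Irreducible subalgebras and elements with a cyclic vector -/

lemma subalgebra_end_eq_top {F V : Type*} [Field F] [AddCommGroup V] [Module F V]
    [FiniteDimensional F V] [Nontrivial V] (A : Subalgebra F (Module.End F V))
    (hirr : ∀ U : Submodule F V, (∀ X ∈ A, ∀ u ∈ U, X u ∈ U) → U = ⊥ ∨ U = ⊤)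
    (hcomm : ∀ C : Module.End F V, (∀ X ∈ A, C * X = X * C) → ∃ c : F, C = algebraMap F _ c) :
    A = ⊤ := by
  have hscalar (g : Module.End A V) : ∃ c : F, ∀ v, g v = c • v := by
    obtain ⟨c, hc⟩ := hcomm (g.restrictScalars F)
      fun X hX => LinearMap.ext fun v => g.map_smul (⟨X, hX⟩ : A) v
    exact ⟨c, fun v => LinearMap.congr_fun hc v⟩
  have : IsSimpleModule A V := by
    refine (isSimpleModule_iff A V).2 ⟨fun N => ?_⟩
    rw [← Submodule.restrictScalars_eq_bot_iff F, ← Submodule.restrictScalars_eq_top_iff F]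
    exact hirr _ fun X hX u hu => N.smul_mem (⟨X, hX⟩ : A) hu
  refine eq_top_iff.2 fun f _ => ?_
  let f' : Module.End (Module.End A V) V :=
    { f with
      map_smul' := fun g v => by
        obtain ⟨c, hc⟩ := hscalar g
        simp [hc] }
  have : Module.Finite (Module.End A V) V := Module.Finite.of_restrictScalars_finite F _ _
  obtain ⟨r, hr⟩ := Module.Finite.toModuleEnd_moduleEnd_surjective f'
  have hfr : f = r := LinearMap.ext fun v => (LinearMap.congr_fun hr v).symm
  exact hfr ▸ r.2

lemma dvd_torusExp {n : Type*} [Fintype n] {d : ℕ} (hd : 0 < d)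
    (hle : d ≤ Fintype.card n + 8) : d ∣ torusExp n :=
  Nat.dvd_factorial hd hle

section Matrices

variable {n F : Type*} [Fintype n] [DecidableEq n] [Field F]

/-- The algebra of all matrices which map the subspace `U` of column vectors into itself. -/
def stabilizerSubalgebra (U : Submodule F (n → F)) : Subalgebra F (Matrix n n F) where
  carrier := {X | ∀ u ∈ U, X *ᵥ u ∈ U}
  mul_mem' hX hY u hu := by
    rw [← mulVec_mulVec]
    exact hX _ (hY u hu)
  add_mem' hX hY u hu := by
    rw [add_mulVec]
    exact U.add_mem (hX u hu) (hY u hu)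
  algebraMap_mem' c u hu := by
    rw [Algebra.algebraMap_eq_smul_one, smul_mulVec, one_mulVec]
    exact U.smul_mem c hu

lemma mem_stabilizerSubalgebra {U : Submodule F (n → F)} {X : Matrix n n F} :
    X ∈ stabilizerSubalgebra U ↔ ∀ u ∈ U, X *ᵥ u ∈ U := Iff.rfl

lemma ker_mem_stabilizerSubalgebra {C X : Matrix n n F} (hCX : C * X = X * C) :
    X ∈ stabilizerSubalgebra (LinearMap.ker C.mulVecLin) := by
  intro u hu
  rw [LinearMap.mem_ker, mulVecLin_apply] at hu ⊢
  rw [mulVec_mulVec, hCX, ← mulVec_mulVec, hu, mulVec_zero]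

lemma subalgebra_matrix_eq_top [Nonempty n] (A : Subalgebra F (Matrix n n F))
    (hirr : ∀ U : Submodule F (n → F), A ≤ stabilizerSubalgebra U → U = ⊥ ∨ U = ⊤)
    (hcomm : ∀ C : Matrix n n F, (∀ X ∈ A, C * X = X * C) → ∃ c : F, C = algebraMap F _ c) :
    A = ⊤ := by
  let e : Matrix n n F ≃ₐ[F] _ := Matrix.toLinAlgEquiv'
  have hmap : A.map e.toAlgHom = ⊤ := by
    refine subalgebra_end_eq_top _ (fun U hU => ?_) fun C hC => ?_
    · exact hirr U fun X hX u hu => hU (e X) ⟨X, hX, rfl⟩ u hu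
    · obtain ⟨D, rfl⟩ := e.surjective C
      obtain ⟨c, rfl⟩ := hcomm D fun X hX => e.injective <| by
        rw [map_mul, map_mul]
        exact hC (e X) ⟨X, hX, rfl⟩
      exact ⟨c, e.commutes c⟩
  refine eq_top_iff.2 fun X _ => ?_
  obtain ⟨Y, hY, hYX⟩ : e X ∈ A.map e.toAlgHom := hmap ▸ Algebra.mem_top
  exact e.injective hYX ▸ hY

lemma mem_adjoin_of_det_krylov_ne_zero {z C : Matrix n n F} {v : n → F}
    (hv : (krylov z v).det ≠ 0) (hC : Commute C z) : C ∈ Algebra.adjoin F {z} := by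
  have hunit : IsUnit (krylov z v).det := hv.isUnit
  have hcol (A : Matrix n n F) (hA : Commute A z) (j : n) :
      (A * krylov z v) *ᵥ Pi.single j 1 = z ^ (Fintype.equivFin n j : ℕ) *ᵥ A *ᵥ v := by
    have hj : krylov z v *ᵥ Pi.single j 1 = z ^ (Fintype.equivFin n j : ℕ) *ᵥ v := by
      rw [mulVec_single_one]
      rfl
    rw [← mulVec_mulVec, hj, mulVec_mulVec, mulVec_mulVec, (hA.pow_right _).eq]
  -- `C` agrees with a polynomial in `z` at the cyclic vector, hence everywhere
  let c := (krylov z v)⁻¹ *ᵥ C *ᵥ v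
  let D := ∑ j, c j • z ^ (Fintype.equivFin n j : ℕ)
  have hDz : Commute D z := Commute.sum_left _ _ _ fun j _ =>
    ((Commute.refl z).pow_left _).smul_left _
  have hDv : D *ᵥ v = C *ᵥ v := by
    have hc : krylov z v *ᵥ c = C *ᵥ v := by
      rw [mulVec_mulVec, mul_nonsing_inv _ hunit, one_mulVec]
    rw [← hc, sum_mulVec]
    ext i
    simp only [Finset.sum_apply, smul_mulVec, Pi.smul_apply, smul_eq_mul, mul_comm (c _)]
    rfl
  have hCD : C = D := by
    refine (isUnit_iff_isUnit_det _).2 hunit |>.mul_right_cancel (ext_of_mulVec_single fun j => ?_)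
    rw [hcol C hC, hcol D hDz, hDv]
  rw [hCD]
  exact Subalgebra.sum_mem _ fun j _ => Subalgebra.smul_mem _
    (pow_mem (Algebra.self_mem_adjoin_singleton F z) _) _

lemma IsGeneric.mem_stabilizerSubalgebra {y C : Matrix n n F} (hy : IsGeneric y)
    (hC : Commute C (y ^ torusExp n)) {U : Submodule F (n → F)}
    (hU : y ^ torusExp n ∈ stabilizerSubalgebra U) : C ∈ stabilizerSubalgebra U := by
  obtain ⟨v, hv⟩ := hy
  exact Algebra.adjoin_le (Set.singleton_subset_iff.2 hU)
    (mem_adjoin_of_det_krylov_ne_zero hv hC)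

end Matrices

lemma IsGeneric.conj {l F : Type*} [Fintype l] [DecidableEq l] [Field F]
    {y : symplecticGroup l F} (hy : IsGeneric (y : BlockMat l F)) (h : symplecticGroup l F) :
    IsGeneric ((h * y * h⁻¹ : symplecticGroup l F) : BlockMat l F) := by
  obtain ⟨v, hv⟩ := hy
  refine ⟨(h : BlockMat l F) *ᵥ v, ?_⟩
  have hkrylov : krylov (((h * y * h⁻¹ : symplecticGroup l F) : BlockMat l F) ^ torusExp (l ⊕ l))
      ((h : BlockMat l F) *ᵥ v) = h * krylov ((y : BlockMat l F) ^ torusExp (l ⊕ l)) v := by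
    refine ext_of_mulVec_single fun j => ?_
    rw [← mulVec_mulVec, mulVec_single_one, mulVec_single_one]
    change _ ^ (_ : ℕ) *ᵥ _ = _ *ᵥ _ ^ (_ : ℕ) *ᵥ v
    rw [← symplConj_coe, ← map_pow, ← map_pow, symplConj_apply, mulVec_mulVec, mul_assoc,
      symplecticGroup_inv_mul_coe, mul_one, mulVec_mulVec]
  rw [hkrylov, det_mul, SymplecticGroup.det_eq_one h.2, one_mul]
  exact hv

/-! ### The commutant of a subalgebra containing a regular representation -/

lemma orderOf_algEquiv_le_finrank {F D : Type*} [Field F] [CommRing D] [IsDomain D] [Algebra F D]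
    [Module.Finite F D] (τ : D ≃ₐ[F] D) :
    0 < orderOf τ ∧ orderOf τ ≤ Module.finrank F D := by
  have hinj : Function.Injective fun t : D ≃ₐ[F] D => (t : D →ₐ[F] D) :=
    AlgEquiv.coe_toAlgHom_injective
  have : Finite (D ≃ₐ[F] D) := Finite.of_injective _ hinj
  exact ⟨orderOf_pos τ, orderOf_le_card.trans <|
    (Nat.card_le_card_of_injective _ hinj).trans (card_algHom_le_finrank F D D)⟩

section Commutant

variable {n F R : Type*} [Fintype n] [DecidableEq n] [Field F] [CommRing R] [Algebra F R]
  (b : Module.Basis n F R) {A : Subalgebra F (Matrix n n F)}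

lemma exists_leftMulMatrix_eq_of_commute {C : Matrix n n F}
    (hC : ∀ r, Commute C (Algebra.leftMulMatrix b r)) : ∃ r, Algebra.leftMulMatrix b r = C := by
  refine ⟨b.equivFun.symm (C *ᵥ b.equivFun 1), toLin'.injective <| LinearMap.ext fun v => ?_⟩
  obtain ⟨u, rfl⟩ := b.equivFun.surjective v
  have hCu := congrArg (· *ᵥ b.equivFun 1) (hC u).eq
  simp only [← mulVec_mulVec] at hCu
  rw [leftMulMatrix_mulVec_equivFun, mul_one, ← b.equivFun.apply_symm_apply (C *ᵥ b.equivFun 1),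
    leftMulMatrix_mulVec_equivFun, mul_comm] at hCu
  rw [toLin'_apply, toLin'_apply, leftMulMatrix_mulVec_equivFun, hCu]

variable (A) in
/-- The elements of `R` whose left multiplication, written in the basis `b`, commutes with the
matrix algebra `A`. -/
noncomputable def commutant : Subalgebra F R :=
  (Subalgebra.centralizer F (A : Set (Matrix n n F))).comap (Algebra.leftMulMatrix b)

variable {b}

lemma map_commutant (hA : (Algebra.leftMulMatrix b).range ≤ A) :
    (commutant b A).map (Algebra.leftMulMatrix b) =
      Subalgebra.centralizer F (A : Set (Matrix n n F)) := by
  refine le_antisymm (Subalgebra.map_le.2 le_rfl) fun C hC => ?_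
  obtain ⟨r, rfl⟩ := exists_leftMulMatrix_eq_of_commute b fun r => (hC _ (hA ⟨r, rfl⟩)).symm
  exact ⟨r, hC, rfl⟩

lemma isField_commutant [Nontrivial R]
    (hirr : ∀ U : Submodule F (n → F), A ≤ stabilizerSubalgebra U → U = ⊥ ∨ U = ⊤) :
    IsField (commutant b A) := by
  have hregular {d u : R} (hd : d ∈ commutant b A) (hd0 : d ≠ 0) (hdu : d * u = 0) : u = 0 := by
    have hker (v : R) : b.equivFun v ∈ LinearMap.ker (Algebra.leftMulMatrix b d).mulVecLin ↔
        d * v = 0 := by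
      rw [LinearMap.mem_ker, mulVecLin_apply, leftMulMatrix_mulVec_equivFun,
        LinearEquiv.map_eq_zero_iff]
    rcases hirr (LinearMap.ker (Algebra.leftMulMatrix b d).mulVecLin)
      fun X hX => ker_mem_stabilizerSubalgebra (hd X hX).symm with hbot | htop
    · rwa [← hker, hbot, Submodule.mem_bot, LinearEquiv.map_eq_zero_iff] at hdu
    · exact absurd (mul_one d ▸ (hker 1).1 (htop ▸ Submodule.mem_top)) hd0
  have : NoZeroDivisors (commutant b A) := ⟨fun {c d} hcd => or_iff_not_imp_left.2 fun hc =>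
    Subtype.ext <| hregular c.2 (fun h => hc (Subtype.ext h)) (congrArg Subtype.val hcd)⟩
  have : IsDomain (commutant b A) := NoZeroDivisors.to_isDomain _
  have : Module.Finite F R := Module.Finite.of_basis b
  exact isField_of_isIntegral_of_isField' (Field.toIsField F)

lemma apply_mem_centralizer {B : Type*} [Ring B] [Algebra F B] {A : Subalgebra F B} (φ : B ≃ₐ[F] B)
    (hφ : ∀ X ∈ A, φ.symm X ∈ A) {C : B} (hC : C ∈ Subalgebra.centralizer F (A : Set B)) :
    φ C ∈ Subalgebra.centralizer F (A : Set B) := by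
  intro X hX
  rw [← φ.apply_symm_apply X, ← map_mul, ← map_mul, hC _ (hφ X hX)]

lemma exists_algEquiv_commutant (hA : (Algebra.leftMulMatrix b).range ≤ A)
    (φ : Matrix n n F ≃ₐ[F] Matrix n n F) (hφ : ∀ X ∈ A, φ X ∈ A) (hφ' : ∀ X ∈ A, φ.symm X ∈ A) :
    ∃ τ : commutant b A ≃ₐ[F] commutant b A, ∀ r : commutant b A,
      Algebra.leftMulMatrix b (τ r : R) = φ (Algebra.leftMulMatrix b (r : R)) := by
  let e := (commutant b A).equivMapOfInjective _ (Algebra.leftMulMatrix_injective b)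
  have hmap : ((commutant b A).map (Algebra.leftMulMatrix b)).map (φ : _ →ₐ[F] _) =
      (commutant b A).map (Algebra.leftMulMatrix b) := by
    rw [map_commutant hA]
    refine le_antisymm (Subalgebra.map_le.2 fun C hC => apply_mem_centralizer φ hφ' hC)
      fun C hC => ?_
    exact ⟨φ.symm C, apply_mem_centralizer φ.symm hφ hC, φ.apply_symm_apply C⟩
  refine ⟨e.trans <| (φ.subalgebraMap _).trans <| (Subalgebra.equivOfEq _ _ hmap).trans e.symm,
    fun r => ?_⟩
  exact congrArg Subtype.val (e.apply_symm_apply _)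

lemma pow_torusExp_apply_leftMulMatrix {l : Type*} [Fintype l] [DecidableEq l]
    {b : Module.Basis l F R} {A : Subalgebra F (Matrix l l F)} (hfield : IsField (commutant b A))
    (hA : (Algebra.leftMulMatrix b).range ≤ A)
    (φ : Matrix l l F ≃ₐ[F] Matrix l l F) (hφ : ∀ X ∈ A, φ X ∈ A) (hφ' : ∀ X ∈ A, φ.symm X ∈ A)
    {r : R} (hr : r ∈ commutant b A) :
    (φ ^ torusExp l) (Algebra.leftMulMatrix b r) = Algebra.leftMulMatrix b r := by
  obtain ⟨τ, hτ⟩ := exists_algEquiv_commutant hA φ hφ hφ'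
  have hpow (k : ℕ) (s : commutant b A) :
      Algebra.leftMulMatrix b ((τ ^ k) s : R) = (φ ^ k) (Algebra.leftMulMatrix b (s : R)) := by
    induction k with
    | zero => rfl
    | succ k ih => rw [pow_succ', pow_succ', AlgEquiv.mul_apply, AlgEquiv.mul_apply, hτ, ih]
  have : Module.Finite F R := Module.Finite.of_basis b
  have : IsDomain (commutant b A) := hfield.isDomain
  obtain ⟨hpos, hle⟩ := orderOf_algEquiv_le_finrank τ
  have hcard : Module.finrank F (commutant b A) ≤ Fintype.card l :=
    (Submodule.finrank_le (Subalgebra.toSubmodule (commutant b A))).trans_eq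
      (Module.finrank_eq_card_basis b)
  have hτ1 : τ ^ torusExp l = 1 :=
    orderOf_dvd_iff_pow_eq_one.1 (dvd_torusExp hpos (by omega))
  rw [← hpow _ ⟨r, hr⟩, hτ1]
  rfl

end Commutant

/-! ### Generation by a torus element and a generic element -/

lemma symplConj_mem_adjoin_cayleyDirections {l F : Type*} [Fintype l] [DecidableEq l] [Field F]
    {H : Subgroup (symplecticGroup l F)} {h : symplecticGroup l F} (hh : h ∈ H) {X : BlockMat l F}
    (hX : X ∈ Algebra.adjoin F (cayleyDirections H)) :
    symplConj h X ∈ Algebra.adjoin F (cayleyDirections H) := by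
  have hle : Algebra.adjoin F (cayleyDirections H) ≤
      (Algebra.adjoin F (cayleyDirections H)).comap (symplConj h : _ →ₐ[F] BlockMat l F) :=
    Algebra.adjoin_le fun Y hY => Algebra.subset_adjoin (symplConj_mem_cayleyDirections hh hY)
  exact hle hX

lemma SymplecticInvolution.adjoin_skewPart {F R : Type*} [Field F] [CommRing R] [Algebra F R]
    (T : SymplecticInvolution F R) (h2 : (2 : F) ≠ 0) :
    Algebra.adjoin F (T.skewPart : Set R) = ⊤ := by
  refine eq_top_iff.2 fun r _ => ?_
  have hskew : (T.skewUnit * T.evenPart r : R) ∈ T.skewPart := by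
    rw [mem_skewPart, map_mul, T.bar_skewUnit, mem_fixedPart.1 (T.evenPart_mem_fixedPart r),
      neg_mul]
  rw [← T.evenPart_add_oddPart h2 r, ← Units.inv_mul_cancel_left T.skewUnit (T.evenPart r)]
  exact add_mem (mul_mem (Algebra.subset_adjoin (mem_skewPart.2 T.bar_inv_skewUnit))
    (Algebra.subset_adjoin hskew)) (Algebra.subset_adjoin (T.oddPart_mem_skewPart r))

section TorusGeneration

attribute [local instance] LieRing.ofAssociativeRing

universe u v

theorem exists_eq_top_of_torusElement_mem (l : Type*) [Fintype l] [DecidableEq l] [Nonempty l] :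
    ∃ q₀ : ℕ, ∀ (F : Type u) [Field F] [Fintype F] (R : Type v) [CommRing R] [Algebra F R],
      (2 : F) ≠ 0 → q₀ ≤ Fintype.card F →
      ∀ (T : SymplecticTorus F R) {b : Module.Basis (l ⊕ l) F R} (hb : T.IsSymplecticBasis b)
        (H : Subgroup (symplecticGroup l F)), T.torusElement hb ∈ H →
      (∀ A : Subalgebra F (BlockMat l F), (Algebra.leftMulMatrix b).range ≤ A →
        (∀ h ∈ H, ∀ X ∈ A, symplConj h X ∈ A) → A = ⊤) → H = ⊤ := by
  obtain ⟨q₁, hq₁⟩ := exists_eq_top_of_sp_le_span_cayleyDirections.{u} l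
  refine ⟨max q₁ (6 * (Fintype.card (l ⊕ l) + 1) + 1),
    fun F _ _ R _ _ h2 hq T b hb H hH htop => ?_⟩
  have hskew (r : R) (hr : r ∈ T.skewPart) : Algebra.leftMulMatrix b r ∈ cayleyDirections H :=
    T.leftMulMatrix_mem_cayleyDirections hb hH hr
  have hadjoin : Algebra.adjoin F (cayleyDirections H) = ⊤ := by
    refine htop _ ?_ fun h hh X hX => symplConj_mem_adjoin_cayleyDirections hh hX
    rw [← Algebra.map_top, ← T.adjoin_skewPart h2, AlgHom.map_adjoin]
    refine Algebra.adjoin_mono ?_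
    rintro _ ⟨r, hr, rfl⟩
    exact hskew r hr
  refine hq₁ F h2 ((le_max_left _ _).trans hq) H <| hb.sp_le_of_adjoin_eq_top h2
    T.finrank_le_card_algHom span_cayleyDirections_le_sp
    (fun X hX Y hY => lie_mem_span_cayleyDirections h2 ((le_max_right _ _).trans hq) hX hY)
    (fun r hr => Submodule.subset_span (hskew r hr)) ?_
  rw [Algebra.adjoin_span, hadjoin]

end TorusGeneration

section IsTransverse

variable {n F R : Type*} [Fintype n] [DecidableEq n] [Field F] [CommRing R] [Algebra F R]

/-- The subspace of coordinate vectors, in the basis `b`, of the elements of the ideal `I`. -/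
noncomputable def idealColumns (b : Module.Basis n F R) (I : Ideal R) : Submodule F (n → F) :=
  (I.restrictScalars F).map (b.equivFun : R →ₗ[F] n → F)

variable {b : Module.Basis n F R}

omit [DecidableEq n] in
lemma equivFun_mem_idealColumns {I : Ideal R} {r : R} :
    b.equivFun r ∈ idealColumns b I ↔ r ∈ I :=
  b.equivFun.injective.mem_set_image (s := (I : Set R))

/-- The matrix `y` is in general position with respect to the regular representation of `R` on
`n → F`: no proper nonzero ideal is invariant under `y`, and no subfield of `R` other than `F`
leaves invariant all the subspaces that are invariant under `y`. -/
structure IsTransverse (b : Module.Basis n F R) (y : Matrix n n F) : Prop where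
  eq_bot_or_eq_top (I : Ideal R) : y ∈ stabilizerSubalgebra (idealColumns b I) → I = ⊥ ∨ I = ⊤
  eq_bot (D : Subalgebra F R) : IsField D → (∀ U, y ∈ stabilizerSubalgebra U →
    ∀ r ∈ D, Algebra.leftMulMatrix b r ∈ stabilizerSubalgebra U) → D = ⊥

end IsTransverse

section Criterion

variable {l F R : Type*} [Fintype l] [DecidableEq l] [Field F] [CommRing R] [Algebra F R]
  {b : Module.Basis (l ⊕ l) F R} {U : Submodule F (l ⊕ l → F)}

lemma exists_ideal_mem_iff_mulVec_equivFun_mem (g : symplecticGroup l F)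
    (hU : ∀ r, symplConj g (Algebra.leftMulMatrix b r) ∈ stabilizerSubalgebra U) :
    ∃ I : Ideal R, ∀ r, r ∈ I ↔ (g : BlockMat l F) *ᵥ b.equivFun r ∈ U := by
  refine ⟨{ U.comap ((g : BlockMat l F).mulVecLin ∘ₗ b.equivFun) with
    smul_mem' := fun c r hr => ?_ }, fun r => Iff.rfl⟩
  have hcr := mem_stabilizerSubalgebra.1 (hU c) _ hr
  rw [LinearMap.comp_apply, mulVecLin_apply, mulVec_mulVec, symplConj_apply, mul_assoc,
    symplecticGroup_inv_mul_coe, mul_one, ← mulVec_mulVec, LinearEquiv.coe_coe,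
    leftMulMatrix_mulVec_equivFun] at hcr
  exact hcr

lemma exists_pow_mem_stabilizerSubalgebra [Finite (Ideal R)] (y : symplecticGroup l F)
    (hU : ∀ (k : ℕ) r, symplConj (y ^ k) (Algebra.leftMulMatrix b r) ∈ stabilizerSubalgebra U) :
    ∃ d, 0 < d ∧ d ≤ Nat.card (Ideal R) ∧ (y : BlockMat l F) ^ d ∈ stabilizerSubalgebra U := by
  choose I hI using fun k : ℕ => exists_ideal_mem_iff_mulVec_equivFun_mem (y ^ k) (hU k)
  obtain ⟨i, j, hij, hIij⟩ : ∃ i j : Fin (Nat.card (Ideal R) + 1), i < j ∧ I i = I j := by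
    have := Fintype.ofFinite (Ideal R)
    obtain ⟨i, j, hne, heq⟩ := Fintype.exists_ne_map_eq_of_card_lt
      (fun k : Fin (Nat.card (Ideal R) + 1) => I k) (by simp [Nat.card_eq_fintype_card])
    rcases hne.lt_or_gt with h | h
    exacts [⟨i, j, h, heq⟩, ⟨j, i, h, heq.symm⟩]
  have hij' : (i : ℕ) < j := hij
  refine ⟨j - i, by omega, by omega, mem_stabilizerSubalgebra.2 fun u hu => ?_⟩
  obtain ⟨r, hr⟩ := b.equivFun.surjective
    ((((y ^ (i : ℕ))⁻¹ : symplecticGroup l F) : BlockMat l F) *ᵥ u)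
  have hri : r ∈ I i := by
    rwa [hI, hr, mulVec_mulVec, symplecticGroup_mul_inv_coe, one_mulVec]
  rw [hIij, hI, hr, ← symplecticGroup_mul_mulVec, ← pow_sub y hij'.le] at hri
  exact hri

variable {y : symplecticGroup l F} (hy : IsGeneric (y : BlockMat l F))
  (htrans : IsTransverse b (y : BlockMat l F))
include hy htrans

lemma eq_bot_or_eq_top_of_symplConj_pow_mem_stabilizerSubalgebra [Finite (Ideal R)]
    (hcard : Nat.card (Ideal R) ≤ 8)
    (hU : ∀ (k : ℕ) r, symplConj (y ^ k) (Algebra.leftMulMatrix b r) ∈ stabilizerSubalgebra U) :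
    U = ⊥ ∨ U = ⊤ := by
  obtain ⟨d, hd0, hd, hyd⟩ := exists_pow_mem_stabilizerSubalgebra y hU
  obtain ⟨c, hc⟩ := dvd_torusExp (n := l ⊕ l) hd0 (by omega)
  have hyU : (y : BlockMat l F) ∈ stabilizerSubalgebra U :=
    hy.mem_stabilizerSubalgebra ((Commute.refl _).pow_right _)
      (by rw [hc, pow_mul]; exact pow_mem hyd c)
  obtain ⟨I, hI⟩ := exists_ideal_mem_iff_mulVec_equivFun_mem 1 fun r => pow_zero y ▸ hU 0 r
  have hUI : U = idealColumns b I := by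
    ext u
    obtain ⟨r, rfl⟩ := b.equivFun.surjective u
    rw [equivFun_mem_idealColumns, hI, OneMemClass.coe_one, one_mulVec]
  rcases htrans.eq_bot_or_eq_top I (hUI ▸ hyU) with rfl | rfl
  · left; simpa [idealColumns] using hUI
  · right; simpa [idealColumns] using hUI

lemma exists_eq_algebraMap_of_commute {A : Subalgebra F (BlockMat l F)}
    (hA : (Algebra.leftMulMatrix b).range ≤ A) (hconj : ∀ X ∈ A, symplConj y X ∈ A)
    (hconj' : ∀ X ∈ A, symplConj y⁻¹ X ∈ A) (hfield : IsField (commutant b A)) {C : BlockMat l F}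
    (hC : ∀ X ∈ A, C * X = X * C) : ∃ c : F, C = algebraMap F _ c := by
  have hD : commutant b A = ⊥ := by
    refine htrans.eq_bot _ hfield fun U hU r hr => hy.mem_stabilizerSubalgebra ?_ (pow_mem hU _)
    have hfix := pow_torusExp_apply_leftMulMatrix hfield hA (symplConj y) hconj
      (fun X hX => (congrArg (· X ∈ A) (map_inv symplConj y)).mp (hconj' X hX)) hr
    rw [← map_pow, symplConj_apply] at hfix
    have hcomm := congrArg (· * ((y ^ torusExp (l ⊕ l) : symplecticGroup l F) : BlockMat l F)) hfix
    rw [mul_assoc, symplecticGroup_inv_mul_coe, mul_one] at hcomm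
    exact hcomm.symm
  have hCmem : C ∈ (commutant b A).map (Algebra.leftMulMatrix b) := by
    rw [map_commutant hA]; exact fun X hX => (hC X hX).symm
  obtain ⟨c, rfl⟩ := Algebra.mem_bot.1 (by simpa [hD, Algebra.map_bot] using hCmem)
  exact ⟨c, rfl⟩

end Criterion

section TorusElementClosure

universe u v

theorem exists_closure_torusElement_eq_top (l : Type*) [Fintype l] [DecidableEq l] [Nonempty l] :
    ∃ q₀ : ℕ, ∀ (F : Type u) [Field F] [Fintype F] (R : Type v) [CommRing R] [Algebra F R]
      [Finite (Ideal R)], (2 : F) ≠ 0 → q₀ ≤ Fintype.card F → Nat.card (Ideal R) ≤ 8 →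
      ∀ (T : SymplecticTorus F R) {b : Module.Basis (l ⊕ l) F R} (hb : T.IsSymplecticBasis b)
        (y : symplecticGroup l F), IsGeneric (y : BlockMat l F) →
      IsTransverse b (y : BlockMat l F) → Subgroup.closure {T.torusElement hb, y} = ⊤ := by
  obtain ⟨q₀, hq₀⟩ := exists_eq_top_of_torusElement_mem.{u, v} l
  refine ⟨q₀, fun F _ _ R _ _ _ h2 hq hcard T b hb y hy htrans => ?_⟩
  set H := Subgroup.closure {T.torusElement hb, y}
  have hyH : y ∈ H := Subgroup.subset_closure (by simp)
  refine hq₀ F R h2 hq T hb H (Subgroup.subset_closure (by simp)) fun A hA hconj => ?_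
  have hirr (U : Submodule F (l ⊕ l → F)) (hU : A ≤ stabilizerSubalgebra U) : U = ⊥ ∨ U = ⊤ :=
    eq_bot_or_eq_top_of_symplConj_pow_mem_stabilizerSubalgebra hy htrans hcard
      fun k r => hU (hconj _ (pow_mem hyH k) _ (hA ⟨r, rfl⟩))
  have : Nontrivial R := b.repr.toEquiv.nontrivial
  exact subalgebra_matrix_eq_top A hirr fun C hC => exists_eq_algebraMap_of_commute hy htrans hA
    (hconj y hyH) (hconj _ (inv_mem hyH)) (isField_commutant hirr) hC

end TorusElementClosure

/-! ### Tori over finite fields -/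

section Involutions

variable {F R S E : Type*} [Field F] [CommRing R] [Algebra F R] [CommRing S] [Algebra F S]
  [Field E] [Algebra F E]

/-- The orthogonal sum of two algebras with symplectic involution. -/
def SymplecticInvolution.prod (T : SymplecticInvolution F R) (T' : SymplecticInvolution F S) :
    SymplecticInvolution F (R × S) where
  bar := T.bar.prodMap T'.bar
  bar_bar r := Prod.ext (T.bar_bar _) (T'.bar_bar _)
  form := T.form.coprod T'.form
  form_mul_bar_self u := (congrArg₂ (· + ·) (T.form_mul_bar_self u.1)
    (T'.form_mul_bar_self u.2)).trans (add_zero 0)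
  eq_zero_of_form r h := by
    refine Prod.ext (T.eq_zero_of_form _ fun u => ?_) (T'.eq_zero_of_form _ fun u => ?_)
    · simpa using h (u, 0)
    · simpa using h (0, u)
  skewUnit := MulEquiv.prodUnits.symm (T.skewUnit, T'.skewUnit)
  bar_skewUnit := Prod.ext T.bar_skewUnit T'.bar_skewUnit

variable (F E) in
lemma exists_symplecticInvolution_bar_eq_swap :
    ∃ T : SymplecticInvolution F (E × E), ∀ r, T.bar r = r.swap := by
  obtain ⟨f, hf⟩ := Module.Projective.exists_dual_ne_zero F (one_ne_zero (α := E))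
  refine ⟨{ bar := (AlgHom.snd F E E).prod (AlgHom.fst F E E)
            bar_bar := fun r => rfl
            form := f.comp (LinearMap.fst F E E) - f.comp (LinearMap.snd F E E)
            form_mul_bar_self := fun u => by simp [mul_comm]
            eq_zero_of_form := fun r h => ?_
            skewUnit := MulEquiv.prodUnits.symm (1, -1)
            bar_skewUnit := Prod.ext rfl (neg_neg (1 : E)).symm }, fun r => rfl⟩
  refine Prod.ext (by_contra fun h0 => hf ?_) (by_contra fun h0 => hf ?_)
  · simpa [mul_inv_cancel₀ h0] using h (r.1⁻¹, 0)
  · simpa [mul_inv_cancel₀ h0] using h (0, r.2⁻¹)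

lemma exists_symplecticInvolution_bar_eq (σ : E →ₐ[F] E) (hσ : ∀ r, σ (σ r) = r)
    (hne : σ ≠ AlgHom.id F E) : ∃ T : SymplecticInvolution F E, T.bar = σ := by
  obtain ⟨x, hx⟩ := DFunLike.ne_iff.1 hne
  have hx0 : x - σ x ≠ 0 := sub_ne_zero.2 (Ne.symm hx)
  obtain ⟨f, hf⟩ := Module.Projective.exists_dual_ne_zero F hx0
  refine ⟨{ bar := σ
            bar_bar := hσ
            form := f.comp (LinearMap.id - σ.toLinearMap)
            form_mul_bar_self := fun u => by simp [hσ, mul_comm]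
            eq_zero_of_form := fun r h => by_contra fun h0 => hf ?_
            skewUnit := Units.mk0 _ hx0
            bar_skewUnit := by simp [hσ] }, rfl⟩
  simpa [mul_inv_cancel_left₀ h0] using h (r⁻¹ * x)

end Involutions

section Cyclic

variable {E : Type*} [Field E] [Finite E]

lemma exists_pow_eq_of_mul_map_eq_one (σ : E →+* E) :
    ∃ ξ : E, ξ * σ ξ = 1 ∧ ∀ u, u * σ u = 1 → ∃ k : ℕ, ξ ^ k = u := by
  let norm : Eˣ →* Eˣ := MonoidHom.id _ * Units.map (σ : E →* E)
  have hker (x : Eˣ) : x ∈ norm.ker ↔ (x : E) * σ x = 1 := by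
    rw [MonoidHom.mem_ker, Units.ext_iff]; rfl
  obtain ⟨ξ, hξ⟩ := IsCyclic.exists_monoid_generator (α := norm.ker)
  refine ⟨(ξ : Eˣ), (hker _).1 ξ.2, fun u hu => ?_⟩
  obtain ⟨k, hk⟩ := hξ ⟨Units.mk0 u (left_ne_zero_of_mul_eq_one hu), (hker _).2 hu⟩
  exact ⟨k, congrArg (fun x : norm.ker => ((x : Eˣ) : E)) hk⟩

variable (E) in
lemma exists_units_pow_eq_of_mul_eq_one :
    ∃ g : Eˣ, ∀ u : E × E, u.1 * u.2 = 1 → ∃ k : ℕ, ((g : E), ((g⁻¹ : Eˣ) : E)) ^ k = u := by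
  obtain ⟨g, hg⟩ := IsCyclic.exists_monoid_generator (α := Eˣ)
  refine ⟨g, fun u hu => ?_⟩
  obtain ⟨k, hk : g ^ k = _⟩ := hg ⟨u.1, u.2, hu, mul_comm u.1 u.2 ▸ hu⟩
  refine ⟨k, Prod.ext ?_ ?_⟩
  · exact congrArg Units.val hk
  · exact congrArg Units.val ((inv_pow g k).trans (congrArg (·⁻¹) hk))

end Cyclic

lemma exists_pow_eq_pow_sq {M M' : Type*} [Monoid M] [Monoid M'] {x : M} {x' : M'} {N N' : ℕ}
    (hx : x ^ N = 1) (hx' : x' ^ N' = 1) (hgcd : N.gcd N' ∣ 2) (i j : ℕ) :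
    ∃ k : ℕ, x ^ k = (x ^ i) ^ 2 ∧ x' ^ k = (x' ^ j) ^ 2 := by
  have hmod : i * 2 ≡ j * 2 [MOD N.gcd N'] :=
    ((Nat.modEq_zero_iff_dvd.2 (hgcd.mul_left i)).trans
      (Nat.modEq_zero_iff_dvd.2 (hgcd.mul_left j)).symm)
  obtain ⟨k, hki, hkj⟩ := Nat.chineseRemainder' hmod
  refine ⟨k, ?_, ?_⟩
  · rw [← pow_mul, pow_eq_pow_mod k hx, hki, ← pow_eq_pow_mod _ hx]
  · rw [← pow_mul, pow_eq_pow_mod k hx', hkj, ← pow_eq_pow_mod _ hx']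

lemma gcd_pow_add_one_sub_one_dvd_two {q : ℕ} (hq : 1 ≤ q) (n : ℕ) :
    (q ^ n + 1).gcd (q - 1) ∣ 2 := by
  have hdvd : (q ^ n + 1).gcd (q - 1) ∣ q ^ n - 1 :=
    (Nat.gcd_dvd_right _ _).trans (by simpa using Nat.sub_dvd_pow_sub_pow q 1 n)
  have hpow : 1 ≤ q ^ n := Nat.one_le_pow _ _ hq
  have htwo := Nat.dvd_sub (Nat.gcd_dvd_left (q ^ n + 1) (q - 1)) hdvd
  rwa [show q ^ n + 1 - (q ^ n - 1) = 2 by omega] at htwo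

lemma card_algHom_add_card_algHom_le {F R S K : Type*} [Field F] [CommRing R] [Algebra F R]
    [CommRing S] [Algebra F S] [Field K] [Algebra F K] [Module.Finite F R] [Module.Finite F S] :
    Nat.card (R →ₐ[F] K) + Nat.card (S →ₐ[F] K) ≤ Nat.card (R × S →ₐ[F] K) := by
  rw [← Nat.card_sum]
  refine Nat.card_le_card_of_injective (Sum.elim (fun φ => φ.comp (AlgHom.fst F R S))
    (fun ψ => ψ.comp (AlgHom.snd F R S))) (.sumElim ?_ ?_ fun φ ψ h => ?_)
  · exact fun φ φ' h => AlgHom.ext fun x => AlgHom.congr_fun h (x, 0)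
  · exact fun ψ ψ' h => AlgHom.ext fun x => AlgHom.congr_fun h (0, x)
  · have h10 : φ 1 = ψ 0 := AlgHom.congr_fun h (1, 0)
    rw [map_one, map_zero] at h10
    exact one_ne_zero h10

section Tori

variable {F E : Type*} [Field F] [Field E] [Algebra F E] [Finite E]

lemma card_algHom_algebraicClosure :
    Nat.card (E →ₐ[F] AlgebraicClosure F) = Module.finrank F E := by
  have : Module.Finite F E := Module.Finite.of_finite
  rw [Nat.card_eq_fintype_card, AlgHom.card]

variable (F E) in
theorem exists_symplecticTorus_bar_eq_swap :
    ∃ T : SymplecticTorus F (E × E), ∀ r, T.bar r = r.swap := by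
  have : Module.Finite F E := Module.Finite.of_finite
  obtain ⟨T, hT⟩ := exists_symplecticInvolution_bar_eq_swap F E
  obtain ⟨g, hg⟩ := exists_units_pow_eq_of_mul_eq_one E
  refine ⟨{ T with
    finrank_le_card_algHom := ?_
    generator := (g, (g⁻¹ : Eˣ))
    generator_mul_bar := by rw [hT]; simp [Prod.ext_iff]
    exists_generator_pow_eq_sq := fun u hu => ?_ }, hT⟩
  · rw [Module.finrank_prod, ← card_algHom_algebraicClosure]
    exact card_algHom_add_card_algHom_le
  · rw [hT] at hu
    obtain ⟨i, rfl⟩ := hg u (congrArg Prod.fst hu)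
    exact ⟨i * 2, pow_mul _ i 2⟩

variable [Fintype F]

lemma exists_symplecticInvolution_bar_eq_pow_card {k : ℕ} (hk : 0 < k)
    (hd : Module.finrank F E = 2 * k) :
    ∃ T : SymplecticInvolution F E, ∀ r, T.bar r = r ^ Fintype.card F ^ k := by
  have horder := FiniteField.orderOf_frobeniusAlgHom F E
  set σ := FiniteField.frobeniusAlgHom F E ^ k
  have hσ (r : E) : σ (σ r) = r := by
    have hsq : σ * σ = 1 := by
      rw [← pow_add, ← two_mul, ← hd, ← horder, pow_orderOf_eq_one]
    exact AlgHom.congr_fun hsq r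
  have hne : σ ≠ AlgHom.id F E := fun h => by
    have := Nat.le_of_dvd hk (orderOf_dvd_of_pow_eq_one h)
    omega
  obtain ⟨T, hT⟩ := exists_symplecticInvolution_bar_eq σ hσ hne
  exact ⟨T, fun r => by rw [hT, AlgHom.coe_pow, FiniteField.coe_frobeniusAlgHom, pow_iterate]⟩

theorem exists_symplecticTorus_bar_eq_pow_card {k : ℕ} (hk : 0 < k)
    (hd : Module.finrank F E = 2 * k) :
    ∃ T : SymplecticTorus F E, ∀ r, T.bar r = r ^ Fintype.card F ^ k := by
  obtain ⟨T, hT⟩ := exists_symplecticInvolution_bar_eq_pow_card hk hd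
  obtain ⟨ξ, hξ, hgen⟩ := exists_pow_eq_of_mul_map_eq_one (T.bar : E →+* E)
  refine ⟨{ T with
    finrank_le_card_algHom := card_algHom_algebraicClosure.ge
    generator := ξ
    generator_mul_bar := hξ
    exists_generator_pow_eq_sq := fun u hu => ?_ }, hT⟩
  obtain ⟨i, rfl⟩ := hgen u hu
  exact ⟨i * 2, pow_mul ξ i 2⟩

/- The norm-one groups of the factors have orders `q ^ k + 1` and `q - 1`, whose greatest common
divisor divides `2`. -/
theorem exists_symplecticTorus_bar_eq_prod_swap {k : ℕ} (hk : 0 < k)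
    (hd : Module.finrank F E = 2 * k) :
    ∃ T : SymplecticTorus F (E × F × F), ∀ r, T.bar r = (r.1 ^ Fintype.card F ^ k, r.2.swap) := by
  have : Module.Finite F E := Module.Finite.of_finite
  obtain ⟨T, hT⟩ := exists_symplecticInvolution_bar_eq_pow_card hk hd
  obtain ⟨T', hT'⟩ := exists_symplecticInvolution_bar_eq_swap F F
  obtain ⟨ξ, hξ, hξgen⟩ := exists_pow_eq_of_mul_map_eq_one (T.bar : E →+* E)
  obtain ⟨g, hg⟩ := exists_units_pow_eq_of_mul_eq_one F
  have hbar (r : E × F × F) : (T.prod T').bar r = (r.1 ^ Fintype.card F ^ k, r.2.swap) :=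
    Prod.ext (hT r.1) (hT' r.2)
  refine ⟨{ T.prod T' with
    finrank_le_card_algHom := ?_
    generator := (ξ, g, (g⁻¹ : Fˣ))
    generator_mul_bar := Prod.ext hξ <| (congrArg (_ * ·) (hT' _)).trans (by simp [Prod.ext_iff])
    exists_generator_pow_eq_sq := fun u hu => ?_ }, hbar⟩
  · have hF : Nat.card (F →ₐ[F] AlgebraicClosure F) + Nat.card (F →ₐ[F] AlgebraicClosure F) ≤
      Nat.card (F × F →ₐ[F] AlgebraicClosure F) := card_algHom_add_card_algHom_le
    rw [Module.finrank_prod, Module.finrank_prod]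
    rw [card_algHom_algebraicClosure] at hF
    refine (Nat.add_le_add card_algHom_algebraicClosure.ge hF).trans card_algHom_add_card_algHom_le
  · obtain ⟨i, hi⟩ := hξgen u.1 (congrArg Prod.fst hu)
    rw [hbar] at hu
    obtain ⟨j, hj⟩ := hg u.2 (congrArg (·.2.1) hu)
    have hξorder : ξ ^ (Fintype.card F ^ k + 1) = 1 := by
      rwa [RingHom.coe_coe, hT, ← pow_succ'] at hξ
    have hgorder : ((g : F), ((g⁻¹ : Fˣ) : F)) ^ (Fintype.card F - 1) = 1 := by
      simp [Prod.ext_iff, FiniteField.pow_card_sub_one_eq_one]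
    obtain ⟨n, hn, hn'⟩ := exists_pow_eq_pow_sq hξorder hgorder
      (gcd_pow_add_one_sub_one_dvd_two Fintype.card_pos k) i j
    exact ⟨n, Prod.ext (hn.trans (by rw [hi]; rfl)) (hn'.trans (by rw [hj]; rfl))⟩

end Tori

/-! ### Invariant lines and planes -/

section Nondegenerate

variable {l F : Type*} [Fintype l] [DecidableEq l] [Field F]

lemma symplForm_isRefl : (symplForm l F).IsRefl :=
  LinearMap.IsAlt.isRefl symplForm_self

lemma symplForm_nondegenerate : (symplForm l F).Nondegenerate :=
  LinearMap.BilinForm.nondegenerate_toBilin'_of_det_ne_zero' _ (isUnit_det_J l F).ne_zero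

lemma orthogonal_mem_stabilizerSubalgebra {y : symplecticGroup l F}
    {U : Submodule F (l ⊕ l → F)} (hU : (y : BlockMat l F) ∈ stabilizerSubalgebra U) :
    (y : BlockMat l F) ∈ stabilizerSubalgebra ((symplForm l F).orthogonal U) := by
  have hinj : Function.Injective (y : BlockMat l F).mulVecLin :=
    mulVec_injective_of_isUnit ((isUnit_iff_isUnit_det _).2 (SymplecticGroup.symplectic_det y.2))
  have hmap : U.map (y : BlockMat l F).mulVecLin = U :=
    Submodule.eq_of_le_of_finrank_eq (Submodule.map_le_iff_le_comap.2 hU)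
      (Submodule.equivMapOfInjective _ hinj U).symm.finrank_eq
  intro v hv
  rw [LinearMap.BilinForm.mem_orthogonal_iff] at hv ⊢
  intro u hu
  obtain ⟨u', hu', rfl⟩ := hmap.ge hu
  rw [mulVecLin_apply, symplForm_mulVec_symplecticGroup]
  exact hv u' hu'

end Nondegenerate

section InvariantLine

variable {n F : Type*} [Fintype n] [DecidableEq n] [Field F]

/-- The matrix `y` leaves invariant a line of column vectors; equivalently, it has an eigenvector
over `F`. -/
def HasInvariantLine (y : Matrix n n F) : Prop :=
  ∃ U : Submodule F (n → F), Module.finrank F U = 1 ∧ y ∈ stabilizerSubalgebra U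

lemma two_le_finrank_of_not_hasInvariantLine {y : Matrix n n F} (hline : ¬HasInvariantLine y)
    {U : Submodule F (n → F)} (hU : U ≠ ⊥) (hyU : y ∈ stabilizerSubalgebra U) :
    2 ≤ Module.finrank F U := by
  have hpos : Module.finrank F U ≠ 0 := Submodule.finrank_eq_zero.not.2 hU
  have hne : Module.finrank F U ≠ 1 := fun h => hline ⟨U, h, hyU⟩
  omega

lemma eq_of_le_of_not_hasInvariantLine {y : Matrix n n F} (hline : ¬HasInvariantLine y)
    {P U : Submodule F (n → F)} (hP : Module.finrank F P = 2) (hU : U ≠ ⊥)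
    (hyU : y ∈ stabilizerSubalgebra U) (hUP : U ≤ P) : U = P :=
  Submodule.eq_of_le_of_finrank_le hUP
    (hP.trans_le (two_le_finrank_of_not_hasInvariantLine hline hU hyU))

end InvariantLine

section InvariantPlane

variable {l F : Type*} [Fintype l] [DecidableEq l] [Field F]

/-- The plane `P` is hyperbolic: the symplectic form restricts to a nondegenerate form on it. -/
def IsHyperbolicPlane (P : Submodule F (l ⊕ l → F)) : Prop :=
  Module.finrank F P = 2 ∧ Disjoint P ((symplForm l F).orthogonal P)

/-- The matrix `y` leaves invariant a hyperbolic plane. -/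
def HasInvariantHyperbolicPlane (y : BlockMat l F) : Prop :=
  ∃ P : Submodule F (l ⊕ l → F), IsHyperbolicPlane P ∧ y ∈ stabilizerSubalgebra P

lemma eq_bot_of_le_of_not_hasInvariantHyperbolicPlane {y : BlockMat l F}
    (hline : ¬HasInvariantLine y) (hplane : ¬HasInvariantHyperbolicPlane y)
    {P U : Submodule F (l ⊕ l → F)} (hP : IsHyperbolicPlane P) (hUP : U ≤ P)
    (hyU : y ∈ stabilizerSubalgebra U) : U = ⊥ := by
  by_contra hU
  obtain rfl := eq_of_le_of_not_hasInvariantLine hline hP.1 hU hyU hUP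
  exact hplane ⟨U, hP, hyU⟩

/- The projection to `P` along its orthogonal complement commutes with `y`, so it leaves
invariant every subspace that `y` does. -/
lemma not_lagrangian_of_mem_stabilizerSubalgebra {y : symplecticGroup l F}
    (hy : IsGeneric (y : BlockMat l F)) (hline : ¬HasInvariantLine (y : BlockMat l F))
    (hplane : HasInvariantHyperbolicPlane (y : BlockMat l F)) {U : Submodule F (l ⊕ l → F)}
    (hyU : (y : BlockMat l F) ∈ stabilizerSubalgebra U) : (symplForm l F).orthogonal U ≠ U := by
  intro hU
  obtain ⟨P, ⟨hP, hdisj⟩, hyP⟩ := hplane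
  have hPU : ¬P ≤ U := fun hle => by
    have hbot := hdisj.eq_bot_of_le (hle.trans (hU ▸ LinearMap.BilinForm.orthogonal_le hle))
    rw [hbot, finrank_bot] at hP
    omega
  have hPc := (LinearMap.BilinForm.isCompl_orthogonal_iff_disjoint symplForm_isRefl).2 hdisj
  let p := P.projection _ hPc
  have hcomm : Commute (LinearMap.toMatrix' p) (y : BlockMat l F) := by
    have hcomm' : Commute p (toLinAlgEquiv' (y : BlockMat l F)) := by
      refine (LinearMap.IsIdempotentElem.commute_iff (P.isIdempotentElem_projection hPc)).2 ?_
      rw [Submodule.range_projection, Submodule.ker_projection]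
      exact ⟨hyP, orthogonal_mem_stabilizerSubalgebra hyP⟩
    have hmatrix := hcomm'.map (LinearMap.toMatrixAlgEquiv' (R := F) (n := l ⊕ l))
    rwa [LinearMap.toMatrixAlgEquiv'_toLinAlgEquiv'] at hmatrix
  have hpU := hy.mem_stabilizerSubalgebra (hcomm.pow_right _) (pow_mem hyU _)
  have hinf : U ⊓ P = ⊥ := by
    by_contra hne
    have := eq_of_le_of_not_hasInvariantLine hline hP hne
      (fun u hu => ⟨hyU u hu.1, hyP u hu.2⟩) inf_le_right
    exact hPU (inf_eq_right.1 this)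
  have hUP : U ≤ (symplForm l F).orthogonal P := fun u hu => by
    refine (P.projection_apply_eq_zero_iff hPc).1 ((Submodule.mem_bot F).1 (hinf ▸ ⟨?_, ?_⟩))
    · simpa using hpU u hu
    · exact P.projection_apply_mem hPc u
  refine hPU ?_
  rw [← hU, ← LinearMap.BilinForm.orthogonal_orthogonal symplForm_nondegenerate symplForm_isRefl P]
  exact LinearMap.BilinForm.orthogonal_le hUP

end InvariantPlane

/-! ### Transversality to the three tori -/

lemma finrank_dvd_finrank_of_isField {F K V : Type*} [Field F] [CommRing K] [Algebra F K]
    (hK : IsField K) [AddCommGroup V] [Module F V] [Module K V] [IsScalarTower F K V] :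
    Module.finrank F K ∣ Module.finrank F V := by
  let := hK.toField
  exact ⟨_, (Module.finrank_mul_finrank F K V).symm⟩

section Subfield

variable {F R S n : Type*} [Field F] [CommRing R] [Algebra F R]
  {D : Subalgebra F R}

lemma finrank_dvd_finrank_of_algHom (hD : IsField D) [CommRing S] [Algebra F S]
    (φ : R →ₐ[F] S) : Module.finrank F D ∣ Module.finrank F S := by
  let := (φ.comp D.val).toRingHom.toAlgebra
  have : IsScalarTower F D S := .of_algebraMap_eq fun c => ((φ.comp D.val).commutes c).symm
  exact finrank_dvd_finrank_of_isField hD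

variable [Fintype n] [DecidableEq n] {b : Module.Basis n F R}

lemma finrank_dvd_finrank_of_leftMulMatrix_mem (hD : IsField D) {U : Submodule F (n → F)}
    (hU : ∀ r ∈ D, Algebra.leftMulMatrix b r ∈ stabilizerSubalgebra U) :
    Module.finrank F D ∣ Module.finrank F U := by
  let N : Submodule D R :=
    { U.comap (b.equivFun : R →ₗ[F] n → F) with
      smul_mem' := fun r x hx => by
        have hrx := hU r r.2 _ hx
        rw [LinearEquiv.coe_coe, leftMulMatrix_mulVec_equivFun] at hrx
        exact hrx }
  have hN : Module.finrank F N = Module.finrank F U :=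
    (b.equivFun.ofSubmodule' U).finrank_eq
  exact hN ▸ finrank_dvd_finrank_of_isField (V := N) hD

lemma eq_bot_of_finrank_dvd_one [Nontrivial R] (h : Module.finrank F D ∣ 1) : D = ⊥ :=
  Subalgebra.finrank_eq_one_iff.1 (Nat.dvd_one.1 h)

end Subfield

section FieldTorus

variable {l F E : Type*} [Fintype l] [DecidableEq l] [Field F] [Field E] [Algebra F E]
  {T : SymplecticInvolution F E} {b : Module.Basis (l ⊕ l) F E} (hb : T.IsSymplecticBasis b)
include hb

lemma mem_bot_of_bar_eq_of_isHyperbolicPlane (h2 : (2 : F) ≠ 0) {P : Submodule F (l ⊕ l → F)}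
    (hP : IsHyperbolicPlane P) {r : E} (hr : T.bar r = r)
    (hrP : Algebra.leftMulMatrix b r ∈ stabilizerSubalgebra P) :
    r ∈ (⊥ : Subalgebra F E) := by
  have hself (x : l ⊕ l → F) : symplForm l F x (Algebra.leftMulMatrix b r *ᵥ x) = 0 := by
    have hadj := hb.symplForm_leftMulMatrix_mulVec r x x
    rw [hr, symplForm_swap] at hadj
    exact (mul_eq_zero.1 (by linear_combination -hadj : 2 * _ = (0 : F))).resolve_left h2
  obtain ⟨x, hxP, hx0⟩ := (Submodule.ne_bot_iff P).1 fun h => by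
    have := hP.1
    rw [h, finrank_bot] at this
    omega
  let L := P ⊓ LinearMap.ker (symplForm l F x)
  have hxL : x ∈ L := ⟨hxP, symplForm_self x⟩
  have hL : Module.finrank F L = 1 := by
    have hne : L ≠ P := fun h => hx0 <| (Submodule.mem_bot F).1 <|
      hP.2.le_bot ⟨hxP, LinearMap.BilinForm.mem_orthogonal_iff.2 fun u hu =>
        symplForm_isRefl _ _ (inf_eq_left.1 h hu)⟩
    have hlt : Module.finrank F L < Module.finrank F P :=
      Submodule.finrank_lt_finrank_of_lt (lt_of_le_of_ne inf_le_left hne)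
    have hpos : Module.finrank F L ≠ 0 :=
      Submodule.finrank_eq_zero.not.2 ((Submodule.ne_bot_iff L).2 ⟨x, hxL, hx0⟩)
    have := hP.1
    omega
  have hxL0 : (⟨x, hxL⟩ : L) ≠ 0 := fun h => hx0 (congrArg Subtype.val h)
  obtain ⟨c, hc⟩ := (finrank_eq_one_iff_of_nonzero' _ hxL0).1 hL ⟨_, hrP x hxP, hself x⟩
  obtain ⟨u, rfl⟩ := b.equivFun.surjective x
  have hcu : c • b.equivFun u = Algebra.leftMulMatrix b r *ᵥ b.equivFun u := congrArg Subtype.val hc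
  rw [leftMulMatrix_mulVec_equivFun, ← map_smul, b.equivFun.injective.eq_iff,
    Algebra.smul_def] at hcu
  refine Algebra.mem_bot.2 ⟨c, mul_right_cancel₀ (fun hu => hx0 ?_) hcu⟩
  rw [hu, map_zero]

theorem isTransverse_of_bar_eq_pow_card [Fintype F] (h2 : (2 : F) ≠ 0)
    (hT : ∀ r, T.bar r = r ^ Fintype.card F ^ Fintype.card l) {y : BlockMat l F}
    (hy : HasInvariantLine y ∨ Even (Fintype.card l) ∧ HasInvariantHyperbolicPlane y) :
    IsTransverse b y where
  eq_bot_or_eq_top I _ := I.eq_bot_or_top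
  eq_bot D hD hstab := by
    rcases hy with ⟨U, hU, hyU⟩ | ⟨heven, P, hP, hyP⟩
    · exact eq_bot_of_finrank_dvd_one
        (hU ▸ finrank_dvd_finrank_of_leftMulMatrix_mem hD (hstab U hyU))
    refine le_bot_iff.1 fun r hr =>
      mem_bot_of_bar_eq_of_isHyperbolicPlane hb h2 hP ?_ (hstab P hyP r hr)
    have hdvd : Module.finrank F D ∣ Fintype.card l :=
      (hP.1 ▸ finrank_dvd_finrank_of_leftMulMatrix_mem hD (hstab P hyP)).trans heven.two_dvd
    obtain ⟨k, hk⟩ := hdvd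
    let := hD.toField
    have : Module.Finite F E := .of_basis b
    have : Finite D := Module.finite_of_finite F
    let := Fintype.ofFinite D
    have hpow := congrArg Subtype.val (FiniteField.pow_card_pow k (⟨r, hr⟩ : D))
    rw [Module.card_eq_pow_finrank (K := F), ← pow_mul, ← hk] at hpow
    exact (hT r).trans hpow

end FieldTorus

lemma annihilator_prod {R S : Type*} [CommRing R] [CommRing S] (I : Ideal R) (J : Ideal S) :
    Submodule.annihilator (I.prod J) =
      Ideal.prod (Submodule.annihilator I) (Submodule.annihilator J) := by
  ext r
  simp only [Submodule.mem_annihilator, Ideal.mem_prod, smul_eq_mul]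
  constructor
  · exact fun h => ⟨fun u hu => congrArg Prod.fst (h (u, 0) ⟨hu, zero_mem J⟩),
      fun v hv => congrArg Prod.snd (h (0, v) ⟨zero_mem I, hv⟩)⟩
  · exact fun h u hu => Prod.ext (h.1 _ hu.1) (h.2 _ hu.2)

lemma SymplecticInvolution.IsSymplecticBasis.orthogonal_idealColumns {l F R : Type*} [Fintype l]
    [DecidableEq l] [Field F] [CommRing R] [Algebra F R] {T : SymplecticInvolution F R}
    {b : Module.Basis (l ⊕ l) F R} (hb : T.IsSymplecticBasis b) (I : Ideal R) :
    (symplForm l F).orthogonal (idealColumns b I) =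
      idealColumns b (Ideal.comap T.bar (Submodule.annihilator I)) := by
  ext x
  obtain ⟨w, rfl⟩ := b.equivFun.surjective x
  rw [equivFun_mem_idealColumns, LinearMap.BilinForm.mem_orthogonal_iff, Ideal.mem_comap,
    Submodule.mem_annihilator]
  constructor
  · intro h u hu
    refine T.eq_zero_of_form _ fun r => ?_
    have hru := h (b.equivFun (r * u)) (equivFun_mem_idealColumns.2 (I.mul_mem_left r hu))
    rw [← hru, hb, smul_eq_mul]
    congr 1
    ring
  · rintro h _ ⟨u, hu, rfl⟩
    refine (hb u w).trans ?_
    rw [mul_comm, ← smul_eq_mul, h u hu, map_zero]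

section SwapTorus

variable {l F E : Type*} [Fintype l] [DecidableEq l] [Field F] [Field E] [Algebra F E]
  {b : Module.Basis (l ⊕ l) F (E × E)}

theorem isTransverse_of_bar_eq_swap {T : SymplecticInvolution F (E × E)}
    (hT : ∀ r, T.bar r = r.swap) (hb : T.IsSymplecticBasis b) (hodd : Odd (Module.finrank F E))
    {y : symplecticGroup l F} (hy : IsGeneric (y : BlockMat l F))
    (hline : ¬HasInvariantLine (y : BlockMat l F))
    (hplane : HasInvariantHyperbolicPlane (y : BlockMat l F)) :
    IsTransverse b (y : BlockMat l F) where
  eq_bot_or_eq_top I hI := by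
    by_contra! hne
    refine not_lagrangian_of_mem_stabilizerSubalgebra hy hline hplane hI ?_
    rw [hb.orthogonal_idealColumns]
    congr 1
    rw [Ideal.ideal_prod_eq I] at hne ⊢
    rcases Ideal.eq_bot_or_top (I.map (RingHom.fst E E)) with h₁ | h₁ <;>
    rcases Ideal.eq_bot_or_top (I.map (RingHom.snd E E)) with h₂ | h₂ <;>
    rw [h₁, h₂] at hne ⊢
    · simp at hne
    · ext w
      simp [annihilator_prod, Submodule.annihilator_bot, Submodule.annihilator_top,
        Module.annihilator_eq_bot.2 inferInstance, hT]
    · ext w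
      simp [annihilator_prod, Submodule.annihilator_bot, Submodule.annihilator_top,
        Module.annihilator_eq_bot.2 inferInstance, hT]
    · simp at hne
  eq_bot D hD hstab := by
    obtain ⟨P, hP, hyP⟩ := hplane
    have h2 : Module.finrank F D ∣ 2 :=
      hP.1 ▸ finrank_dvd_finrank_of_leftMulMatrix_mem hD (hstab P hyP)
    have hE := finrank_dvd_finrank_of_algHom hD (AlgHom.fst F E E)
    exact eq_bot_of_finrank_dvd_one (hodd.coprime_two_left ▸ Nat.dvd_gcd h2 hE)

end SwapTorus

section ProdTorus

variable {l F E : Type*} [Fintype l] [DecidableEq l] [Field F] [Field E] [Algebra F E]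
  {b : Module.Basis (l ⊕ l) F (E × F × F)} {T : SymplecticInvolution F (E × F × F)} {k : ℕ}
  (hT : ∀ r, (T.bar r).2 = r.2.swap) (hb : T.IsSymplecticBasis b)
include hT hb

lemma orthogonal_idealColumns_bot_prod_top :
    (symplForm l F).orthogonal (idealColumns b (Ideal.prod ⊥ ⊤)) =
      idealColumns b (Ideal.prod ⊤ ⊥) := by
  rw [hb.orthogonal_idealColumns]
  congr 1
  ext w
  simp [annihilator_prod, Submodule.annihilator_bot, Submodule.annihilator_top,
    Module.annihilator_eq_bot.2 inferInstance, hT, Prod.ext_iff, and_comm]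

lemma isHyperbolicPlane_idealColumns_bot_prod_top :
    IsHyperbolicPlane (idealColumns b (Ideal.prod ⊥ ⊤)) := by
  constructor
  · have hrange : (Ideal.prod ⊥ ⊤ : Ideal (E × F × F)).restrictScalars F =
        LinearMap.range (LinearMap.inr F E (F × F)) := by
      ext r
      simp [Prod.ext_iff, eq_comm]
    rw [idealColumns, LinearEquiv.finrank_map_eq, hrange,
      LinearMap.finrank_range_of_inj LinearMap.inr_injective]
    simp
  · rw [orthogonal_idealColumns_bot_prod_top hT hb, Submodule.disjoint_def]
    rintro _ ⟨w, hw, rfl⟩ hw'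
    have hw0 : w = 0 := Prod.ext hw.1 (equivFun_mem_idealColumns.1 hw').2
    rw [hw0, map_zero]

theorem isTransverse_of_bar_eq_prod_swap {y : symplecticGroup l F}
    (hline : ¬HasInvariantLine (y : BlockMat l F))
    (hplane : ¬HasInvariantHyperbolicPlane (y : BlockMat l F)) :
    IsTransverse b (y : BlockMat l F) where
  eq_bot_or_eq_top I hI := by
    have hP := isHyperbolicPlane_idealColumns_bot_prod_top hT hb
    have heq_bot {U : Submodule F (l ⊕ l → F)} :=
      eq_bot_of_le_of_not_hasInvariantHyperbolicPlane hline hplane hP (U := U)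
    rcases Ideal.eq_bot_or_top (I.map (RingHom.fst E (F × F))) with h₁ | h₁
    · have hle : I ≤ Ideal.prod ⊥ ⊤ := by
        rw [Ideal.ideal_prod_eq I, h₁]
        exact fun r hr => ⟨hr.1, trivial⟩
      left
      simpa [idealColumns] using heq_bot (Submodule.map_mono hle) hI
    · have hle : Ideal.prod ⊤ ⊥ ≤ I := by
        rw [Ideal.ideal_prod_eq I, h₁]
        rintro r ⟨-, hr⟩
        exact ⟨trivial, bot_le (a := I.map _) hr⟩
      have horth := LinearMap.BilinForm.orthogonal_orthogonal symplForm_nondegenerate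
        symplForm_isRefl (V := l ⊕ l → F)
      have hbot : (symplForm l F).orthogonal (idealColumns b I) = ⊥ := by
        refine heq_bot ?_ (orthogonal_mem_stabilizerSubalgebra hI)
        rw [← horth (idealColumns b (Ideal.prod ⊥ ⊤)), orthogonal_idealColumns_bot_prod_top hT hb]
        exact LinearMap.BilinForm.orthogonal_le (Submodule.map_mono hle)
      right
      have htop := horth (idealColumns b I)
      rw [hbot, LinearMap.BilinForm.orthogonal_bot] at htop
      simpa [idealColumns] using htop.symm
  eq_bot D hD _ := eq_bot_of_finrank_dvd_one <| Module.finrank_self F ▸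
    finrank_dvd_finrank_of_algHom hD ((AlgHom.fst F F F).comp (AlgHom.snd F E (F × F)))

end ProdTorus

section Existence

universe u

lemma natCard_ideal_of_field (K : Type*) [Field K] :
    Nat.card (Ideal K) = 2 := by
  rw [Nat.card_congr IsSimpleOrder.equivBool, Nat.card_eq_fintype_card, Fintype.card_bool]

lemma natCard_ideal_prod (R S : Type*) [CommRing R] [CommRing S] :
    Nat.card (Ideal (R × S)) = Nat.card (Ideal R) * Nat.card (Ideal S) := by
  rw [Nat.card_congr Ideal.idealProdEquiv.toEquiv, Nat.card_prod]

variable (l : Type*) [Fintype l] [DecidableEq l]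

lemma exists_field_extension_finrank_eq (F : Type u) [Field F] [Finite F] {d : ℕ} (hd : 0 < d) :
    ∃ (E : Type) (_ : Field E) (_ : Finite E) (_ : Algebra F E), Module.finrank F E = d := by
  have : NeZero d := ⟨hd.ne'⟩
  have : Fact (ringChar F).Prime := ⟨CharP.char_is_prime F _⟩
  exact ⟨FiniteField.Extension F (ringChar F) d, inferInstance, inferInstance, inferInstance,
    FiniteField.finrank_extension F (ringChar F) d⟩

theorem exists_closure_eq_top_of_hasInvariantLine_or_plane [Nonempty l] :
    ∃ q₀ : ℕ, ∀ (F : Type u) [Field F] [Fintype F], (2 : F) ≠ 0 → q₀ ≤ Fintype.card F →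
      ∃ x : symplecticGroup l F, ∀ y : symplecticGroup l F, IsGeneric (y : BlockMat l F) →
        HasInvariantLine (y : BlockMat l F) ∨
          Even (Fintype.card l) ∧ HasInvariantHyperbolicPlane (y : BlockMat l F) →
        Subgroup.closure {x, y} = ⊤ := by
  obtain ⟨q₀, hq₀⟩ := exists_closure_torusElement_eq_top.{u, 0} l
  refine ⟨q₀, fun F _ _ h2 hq => ?_⟩
  have hl : 0 < Fintype.card l := Fintype.card_pos
  obtain ⟨E, _, _, _, hE⟩ :=
    exists_field_extension_finrank_eq F (Nat.mul_pos two_pos hl)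
  obtain ⟨T, hT⟩ := exists_symplecticTorus_bar_eq_pow_card hl hE
  have : Module.Finite F E := .of_finite
  obtain ⟨b, hb⟩ := T.exists_isSymplecticBasis (l := l) h2 (by rw [hE, Fintype.card_sum, two_mul])
  have hcard := natCard_ideal_of_field E
  have : Finite (Ideal E) := Nat.finite_of_card_ne_zero (by omega)
  exact ⟨T.torusElement hb, fun y hy hinv => hq₀ F E h2 hq (by omega) T hb y hy
    (isTransverse_of_bar_eq_pow_card hb h2 hT hinv)⟩

theorem exists_closure_eq_top_of_not_hasInvariantHyperbolicPlane (hl : 2 ≤ Fintype.card l) :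
    ∃ q₀ : ℕ, ∀ (F : Type u) [Field F] [Fintype F], (2 : F) ≠ 0 → q₀ ≤ Fintype.card F →
      ∃ x : symplecticGroup l F, ∀ y : symplecticGroup l F, IsGeneric (y : BlockMat l F) →
        ¬HasInvariantLine (y : BlockMat l F) → ¬HasInvariantHyperbolicPlane (y : BlockMat l F) →
        Subgroup.closure {x, y} = ⊤ := by
  have : Nonempty l := Fintype.card_pos_iff.1 (by omega)
  obtain ⟨q₀, hq₀⟩ := exists_closure_torusElement_eq_top.{u, u} l
  refine ⟨q₀, fun F _ _ h2 hq => ?_⟩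
  obtain ⟨k, hk⟩ := Nat.exists_eq_add_of_le' hl
  obtain ⟨E, _, _, _, hE⟩ :=
    exists_field_extension_finrank_eq F (Nat.mul_pos two_pos k.succ_pos)
  obtain ⟨T, hT⟩ := exists_symplecticTorus_bar_eq_prod_swap k.succ_pos hE
  have : Module.Finite F E := .of_finite
  obtain ⟨b, hb⟩ := T.exists_isSymplecticBasis (l := l) h2 (by
    rw [Module.finrank_prod, Module.finrank_prod, Module.finrank_self, hE, Fintype.card_sum]
    omega)
  have hcard : Nat.card (Ideal (E × F × F)) = 8 := by
    simp only [natCard_ideal_prod, natCard_ideal_of_field]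
  have : Finite (Ideal (E × F × F)) := Nat.finite_of_card_ne_zero (by omega)
  exact ⟨T.torusElement hb, fun y hy hline hplane => hq₀ F _ h2 hq (by omega) T hb y hy
    (isTransverse_of_bar_eq_prod_swap (fun r => congrArg Prod.snd (hT r)) hb hline hplane)⟩

theorem exists_closure_eq_top_of_odd (hl : Odd (Fintype.card l)) :
    ∃ q₀ : ℕ, ∀ (F : Type u) [Field F] [Fintype F], (2 : F) ≠ 0 → q₀ ≤ Fintype.card F →
      ∃ x : symplecticGroup l F, ∀ y : symplecticGroup l F, IsGeneric (y : BlockMat l F) →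
        ¬HasInvariantLine (y : BlockMat l F) → HasInvariantHyperbolicPlane (y : BlockMat l F) →
        Subgroup.closure {x, y} = ⊤ := by
  have : Nonempty l := Fintype.card_pos_iff.1 hl.pos
  obtain ⟨q₀, hq₀⟩ := exists_closure_torusElement_eq_top.{u, 0} l
  refine ⟨q₀, fun F _ _ h2 hq => ?_⟩
  obtain ⟨E, _, _, _, hE⟩ := exists_field_extension_finrank_eq F hl.pos
  obtain ⟨T, hT⟩ := exists_symplecticTorus_bar_eq_swap F E
  have : Module.Finite F E := .of_finite
  obtain ⟨b, hb⟩ := T.exists_isSymplecticBasis (l := l) h2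
    (by rw [Module.finrank_prod, hE, Fintype.card_sum])
  have hcard : Nat.card (Ideal (E × E)) = 4 := by
    simp only [natCard_ideal_prod, natCard_ideal_of_field]
  have : Finite (Ideal (E × E)) := Nat.finite_of_card_ne_zero (by omega)
  exact ⟨T.torusElement hb, fun y hy hline hplane => hq₀ F _ h2 hq (by omega) T hb y hy
    (isTransverse_of_bar_eq_swap hT hb (hE ▸ hl) hy hline hplane)⟩

end Existence

/-! ### Invariable generation -/

section Conjugation

variable {l F : Type*} [Fintype l] [DecidableEq l] [Field F]

lemma symplecticGroup_mulVecLin_injective (h : symplecticGroup l F) :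
    Function.Injective (h : BlockMat l F).mulVecLin :=
  Function.LeftInverse.injective (symplecticGroup_inv_mulVec_mulVec h)

lemma conj_mem_stabilizerSubalgebra_map {y : symplecticGroup l F} {U : Submodule F (l ⊕ l → F)}
    (hyU : (y : BlockMat l F) ∈ stabilizerSubalgebra U) (h : symplecticGroup l F) :
    ((h * y * h⁻¹ : symplecticGroup l F) : BlockMat l F) ∈
      stabilizerSubalgebra (U.map (h : BlockMat l F).mulVecLin) := by
  rintro _ ⟨u, hu, rfl⟩
  refine ⟨(y : BlockMat l F) *ᵥ u, hyU u hu, ?_⟩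
  rw [mulVecLin_apply, mulVecLin_apply, symplecticGroup_mul_mulVec, symplecticGroup_mul_mulVec,
    symplecticGroup_inv_mulVec_mulVec]

lemma finrank_map_symplecticGroup (h : symplecticGroup l F) (U : Submodule F (l ⊕ l → F)) :
    Module.finrank F (U.map (h : BlockMat l F).mulVecLin) = Module.finrank F U :=
  (Submodule.equivMapOfInjective _ (symplecticGroup_mulVecLin_injective h) U).symm.finrank_eq

lemma IsHyperbolicPlane.map {P : Submodule F (l ⊕ l → F)} (hP : IsHyperbolicPlane P)
    (h : symplecticGroup l F) : IsHyperbolicPlane (P.map (h : BlockMat l F).mulVecLin) := by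
  refine ⟨(finrank_map_symplecticGroup h P).trans hP.1, Submodule.disjoint_def.2 ?_⟩
  rintro _ ⟨u, hu, rfl⟩ horth
  rw [LinearMap.BilinForm.mem_orthogonal_iff] at horth
  have hu0 : u = 0 := Submodule.disjoint_def.1 hP.2 u hu <|
    LinearMap.BilinForm.mem_orthogonal_iff.2 fun v hv =>
      (symplForm_mulVec_symplecticGroup h v u).symm.trans (horth _ ⟨v, hv, rfl⟩)
  rw [hu0, map_zero]

lemma HasInvariantLine.conj {y : symplecticGroup l F} (hy : HasInvariantLine (y : BlockMat l F))
    (h : symplecticGroup l F) :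
    HasInvariantLine ((h * y * h⁻¹ : symplecticGroup l F) : BlockMat l F) := by
  obtain ⟨U, hU, hyU⟩ := hy
  exact ⟨_, (finrank_map_symplecticGroup h U).trans hU, conj_mem_stabilizerSubalgebra_map hyU h⟩

lemma HasInvariantHyperbolicPlane.conj {y : symplecticGroup l F}
    (hy : HasInvariantHyperbolicPlane (y : BlockMat l F)) (h : symplecticGroup l F) :
    HasInvariantHyperbolicPlane ((h * y * h⁻¹ : symplecticGroup l F) : BlockMat l F) := by
  obtain ⟨P, hP, hyP⟩ := hy
  exact ⟨_, hP.map h, conj_mem_stabilizerSubalgebra_map hyP h⟩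

lemma hasInvariantLine_conj_iff {y h : symplecticGroup l F} :
    HasInvariantLine ((h * y * h⁻¹ : symplecticGroup l F) : BlockMat l F) ↔
      HasInvariantLine (y : BlockMat l F) :=
  ⟨fun hy => by simpa [mul_assoc] using hy.conj h⁻¹, fun hy => hy.conj h⟩

lemma hasInvariantHyperbolicPlane_conj_iff {y h : symplecticGroup l F} :
    HasInvariantHyperbolicPlane ((h * y * h⁻¹ : symplecticGroup l F) : BlockMat l F) ↔
      HasInvariantHyperbolicPlane (y : BlockMat l F) :=
  ⟨fun hy => by simpa [mul_assoc] using hy.conj h⁻¹, fun hy => hy.conj h⟩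

end Conjugation

lemma invGen_of_forall_closure_conj_eq_top {G : Type*} [Group G] {x y : G}
    (hxy : ∀ k : G, Subgroup.closure {x, k * y * k⁻¹} = ⊤) : InvGen x y := by
  intro g h
  have hmap := congrArg (Subgroup.map (MulAut.conj g).toMonoidHom) (hxy (g⁻¹ * h))
  rw [MonoidHom.map_closure, Subgroup.map_top_of_surjective _ (MulAut.conj g).surjective,
    Set.image_pair] at hmap
  simpa [mul_assoc] using hmap

section GenericElements

universe u

variable (l : Type*) [Fintype l] [DecidableEq l]

theorem exists_pair_forall_isGeneric_invGen (heven : Even (Fintype.card l))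
    (hl : 2 ≤ Fintype.card l) :
    ∃ q₀ : ℕ, ∀ (F : Type u) [Field F] [Fintype F], (2 : F) ≠ 0 → q₀ ≤ Fintype.card F →
      ∃ x₁ x₂ : symplecticGroup l F, ∀ y : symplecticGroup l F, IsGeneric (y : BlockMat l F) →
        InvGen x₁ y ∨ InvGen x₂ y := by
  have : Nonempty l := Fintype.card_pos_iff.1 (by omega)
  obtain ⟨q₁, h₁⟩ := exists_closure_eq_top_of_hasInvariantLine_or_plane l
  obtain ⟨q₂, h₂⟩ := exists_closure_eq_top_of_not_hasInvariantHyperbolicPlane l hl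
  refine ⟨max q₁ q₂, fun F _ _ hF hq => ?_⟩
  obtain ⟨x₁, hx₁⟩ := h₁ F hF (le_of_max_le_left hq)
  obtain ⟨x₂, hx₂⟩ := h₂ F hF (le_of_max_le_right hq)
  refine ⟨x₁, x₂, fun y hy => ?_⟩
  by_cases hinv : HasInvariantLine (y : BlockMat l F) ∨
    HasInvariantHyperbolicPlane (y : BlockMat l F)
  · refine .inl (invGen_of_forall_closure_conj_eq_top fun k => hx₁ _ (hy.conj k) ?_)
    exact hinv.imp (·.conj k) fun h => ⟨heven, h.conj k⟩
  · rw [not_or] at hinv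
    exact .inr (invGen_of_forall_closure_conj_eq_top fun k => hx₂ _ (hy.conj k)
      (hasInvariantLine_conj_iff.not.2 hinv.1)
      (hasInvariantHyperbolicPlane_conj_iff.not.2 hinv.2))

theorem exists_triple_forall_isGeneric_invGen (hodd : Odd (Fintype.card l))
    (hl : 2 ≤ Fintype.card l) :
    ∃ q₀ : ℕ, ∀ (F : Type u) [Field F] [Fintype F], (2 : F) ≠ 0 → q₀ ≤ Fintype.card F →
      ∃ x₁ x₂ x₃ : symplecticGroup l F, ∀ y : symplecticGroup l F, IsGeneric (y : BlockMat l F) →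
        InvGen x₁ y ∨ InvGen x₂ y ∨ InvGen x₃ y := by
  have : Nonempty l := Fintype.card_pos_iff.1 (by omega)
  obtain ⟨q₁, h₁⟩ := exists_closure_eq_top_of_hasInvariantLine_or_plane l
  obtain ⟨q₂, h₂⟩ := exists_closure_eq_top_of_not_hasInvariantHyperbolicPlane l hl
  obtain ⟨q₃, h₃⟩ := exists_closure_eq_top_of_odd l hodd
  refine ⟨max q₁ (max q₂ q₃), fun F _ _ hF hq => ?_⟩
  obtain ⟨x₁, hx₁⟩ := h₁ F hF (by omega)
  obtain ⟨x₂, hx₂⟩ := h₂ F hF (by omega)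
  obtain ⟨x₃, hx₃⟩ := h₃ F hF (by omega)
  refine ⟨x₁, x₂, x₃, fun y hy => ?_⟩
  by_cases hline : HasInvariantLine (y : BlockMat l F)
  · exact .inl (invGen_of_forall_closure_conj_eq_top fun k =>
      hx₁ _ (hy.conj k) (.inl (hline.conj k)))
  by_cases hplane : HasInvariantHyperbolicPlane (y : BlockMat l F)
  · exact .inr <| .inr (invGen_of_forall_closure_conj_eq_top fun k =>
      hx₃ _ (hy.conj k) (hasInvariantLine_conj_iff.not.2 hline) (hplane.conj k))
  · exact .inr <| .inl (invGen_of_forall_closure_conj_eq_top fun k =>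
      hx₂ _ (hy.conj k) (hasInvariantLine_conj_iff.not.2 hline)
        (hasInvariantHyperbolicPlane_conj_iff.not.2 hplane))

theorem exists_finset_forall_isGeneric_invGen (hl : 2 ≤ Fintype.card l) :
    ∃ q₀ : ℕ, ∀ (F : Type u) [Field F] [Fintype F], (2 : F) ≠ 0 → q₀ ≤ Fintype.card F →
      ∃ A : Finset (symplecticGroup l F),
        (Even (Fintype.card l) → A.card ≤ 2) ∧ (Odd (Fintype.card l) → A.card ≤ 3) ∧
        ∀ y : symplecticGroup l F, IsGeneric (y : BlockMat l F) → ∃ x ∈ A, InvGen x y := by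
  classical
  rcases Nat.even_or_odd (Fintype.card l) with heven | hodd
  · obtain ⟨q₀, h⟩ := exists_pair_forall_isGeneric_invGen l heven hl
    refine ⟨q₀, fun F _ _ hF hq => ?_⟩
    obtain ⟨x₁, x₂, hx⟩ := h F hF hq
    exact ⟨{x₁, x₂}, fun _ => Finset.card_le_two,
      fun hodd => absurd heven (Nat.not_even_iff_odd.2 hodd), fun y hy => by simpa using hx y hy⟩
  · obtain ⟨q₀, h⟩ := exists_triple_forall_isGeneric_invGen l hodd hl
    refine ⟨q₀, fun F _ _ hF hq => ?_⟩
    obtain ⟨x₁, x₂, x₃, hx⟩ := h F hF hq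
    exact ⟨{x₁, x₂, x₃}, fun heven => absurd heven (Nat.not_even_iff_odd.2 hodd),
      fun _ => Finset.card_le_three, fun y hy => by simpa using hx y hy⟩

end GenericElements

lemma two_ne_zero_of_odd_card (F : Type*) [Field F] [Fintype F] (hF : Odd (Fintype.card F)) :
    (2 : F) ≠ 0 :=
  Ring.two_ne_zero fun h => Nat.not_even_iff_odd.2 hF
    (Nat.even_iff.2 (FiniteField.even_card_iff_char_two.1 h))

lemma one_sub_div_mul_natCard_le {α : Type*} [Finite α] {p r : α → Prop} (hpr : ∀ a, p a → r a)
    {q D C : ℕ} (hq : 0 < q) (hDC : D ≤ C)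
    (hp : q * Nat.card {a // ¬p a} ≤ D * Nat.card α) :
    (1 - (C : ℝ) / q) * Nat.card α ≤ Nat.card {a // r a} := by
  classical
  have hcard : Nat.card α ≤ Nat.card {a // r a} + Nat.card {a // ¬p a} := by
    rw [← Nat.card_congr (Equiv.sumCompl p), Nat.card_sum]
    exact Nat.add_le_add_right (Nat.card_le_card_of_injective _
      (Subtype.map_injective hpr Function.injective_id)) _
  have hmul : q * Nat.card α ≤ q * Nat.card {a // r a} + C * Nat.card α := by nlinarith
  have hq' : (0 : ℝ) < q := by exact_mod_cast hq
  have hmul' : (q : ℝ) * Nat.card α ≤ q * Nat.card {a // r a} + C * Nat.card α := by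
    exact_mod_cast hmul
  refine le_of_mul_le_mul_left ?_ hq'
  field_simp
  linarith

theorem stmt_6 :
    ∀ m : ℕ, 2 ≤ m →
      ∃ C : ℝ, 0 < C ∧
        ∀ (F : Type) [Field F] [Fintype F], Odd (Fintype.card F) →
          ∃ A : Finset (Matrix.symplecticGroup (Fin m) F),
            (Even m → A.card ≤ 2) ∧ (Odd m → A.card ≤ 3) ∧
            (Nat.card {y : Matrix.symplecticGroup (Fin m) F //
                ∃ x ∈ A, InvGen x y} : ℝ) ≥
              (1 - C / Fintype.card F) *
                Nat.card (Matrix.symplecticGroup (Fin m) F) := by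
  intro m hm
  obtain ⟨q₁, hA⟩ := exists_finset_forall_isGeneric_invGen.{0} (Fin m) (by simpa using hm)
  obtain ⟨D, q₂, hD⟩ := exists_card_mul_card_not_isGeneric_le.{0} (Fin m)
  refine ⟨(D + q₁ + q₂ + 1 : ℕ), by positivity, fun F _ _ hF => ?_⟩
  by_cases hq : q₁ ≤ Fintype.card F ∧ q₂ ≤ Fintype.card F
  · obtain ⟨A, heven, hodd, hgen⟩ := hA F (two_ne_zero_of_odd_card F hF) hq.1
    rw [Fintype.card_fin] at heven hodd
    exact ⟨A, heven, hodd, one_sub_div_mul_natCard_le hgen Fintype.card_pos (by omega) (hD F hq.2)⟩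
  · have hsmall : (1 : ℝ) - (D + q₁ + q₂ + 1 : ℕ) / Fintype.card F ≤ 0 := by
      rw [sub_nonpos, one_le_div (by exact_mod_cast Fintype.card_pos)]
      exact_mod_cast (by omega : Fintype.card F ≤ D + q₁ + q₂ + 1)
    exact ⟨∅, by simp, by simp,
      (mul_nonpos_of_nonpos_of_nonneg hsmall (Nat.cast_nonneg _)).trans (Nat.cast_nonneg _)⟩
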